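/- arXiv:2602.12001 — 3 statements merged into one kernel-verified Lean document; each statement's English description precedes it below -/
import Mathlib

section
/- Let n ≥ 2 and α > 0. There exists a nonlinearity f ∈ C¹(ℝ) and a one-dimensional stable solution u of the mean curvature equation div(∇u/√(1+|∇u|²)) = −f(u) in B₁ ⊂ ℝⁿ (i.e., u depends only on the variable x₁) such that ∇u does not belong to the Morrey space M^{n+α}(B₁). -/
open MeasureTheory Metric Real Filter Asymptotics Bornology
open scoped RealInnerProductSpace Topology

noncomputable section

/-- Euclidean space `ℝⁿ`. -/
abbrev Euc (n : ℕ) := EuclideanSpace ℝ (Fin n)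

/-- `φ` is an admissible test function on `Ω`: smooth with compact support contained in `Ω`
(i.e. `φ ∈ C_c^∞(Ω)`). -/
def IsTestFun {n : ℕ} (Ω : Set (Euc n)) (φ : Euc n → ℝ) : Prop :=
  ContDiff ℝ (⊤ : ℕ∞) φ ∧ HasCompactSupport φ ∧ tsupport φ ⊆ Ω

/-- `u` is a weak solution of the mean curvature equation
`div(∇u/√(1+|∇u|²)) = -f(u)` in `Ω`:  `u ∈ W^{1,1}_loc(Ω)`, `f(u) ∈ L¹_loc(Ω)` and
`∫_Ω ∇u·∇φ/√(1+|∇u|²) = ∫_Ω f(u) φ` for every `φ ∈ C_c^∞(Ω)`. -/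
def IsWeakSolution {n : ℕ} (Ω : Set (Euc n)) (f : ℝ → ℝ) (u : Euc n → ℝ) : Prop :=
  LocallyIntegrableOn u Ω ∧
  LocallyIntegrableOn (fun x => ‖gradient u x‖) Ω ∧
  LocallyIntegrableOn (fun x => f (u x)) Ω ∧
  ∀ φ : Euc n → ℝ, IsTestFun Ω φ →
    ∫ x in Ω, ⟪gradient u x, gradient φ x⟫ / Real.sqrt (1 + ‖gradient u x‖ ^ 2)
      = ∫ x in Ω, f (u x) * φ x

/-- `u` is a stable solution of `div(∇u/√(1+|∇u|²)) = -f(u)` in `Ω`: it is a weak solution,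
`f'(u) ∈ L¹_loc(Ω)` and the second variation of the energy at `u` is nonnegative:
`∫_Ω f'(u) ξ² ≤ ∫_Ω (|∇ξ|²/√(1+|∇u|²) - (∇u·∇ξ)²/(1+|∇u|²)^{3/2})` for all `ξ ∈ C_c^∞(Ω)`. -/
def IsStableSolution {n : ℕ} (Ω : Set (Euc n)) (f : ℝ → ℝ) (u : Euc n → ℝ) : Prop :=
  IsWeakSolution Ω f u ∧
  LocallyIntegrableOn (fun x => deriv f (u x)) Ω ∧
  ∀ ξ : Euc n → ℝ, IsTestFun Ω ξ →
    ∫ x in Ω, deriv f (u x) * ξ x ^ 2 ≤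
      ∫ x in Ω, (‖gradient ξ x‖ ^ 2 / Real.sqrt (1 + ‖gradient u x‖ ^ 2)
        - ⟪gradient u x, gradient ξ x⟫ ^ 2 / (1 + ‖gradient u x‖ ^ 2) ^ ((3:ℝ)/2))

/-- A vector field `g` belongs to the Morrey space `M^p(Ω)`: there is `K > 0` with
`∫_{B_ρ(x₀) ∩ Ω} |g| ≤ K ρ^{n(1-1/p)}` for all `x₀ ∈ Ω` and `0 < ρ ≤ diam Ω`. -/
def MemMorrey {n : ℕ} (Ω : Set (Euc n)) (p : ℝ) (g : Euc n → Euc n) : Prop :=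
  ∃ K > (0:ℝ), ∀ x₀ ∈ Ω, ∀ ρ : ℝ, 0 < ρ → ρ ≤ Metric.diam Ω →
    ∫ x in Metric.ball x₀ ρ ∩ Ω, ‖g x‖ ≤ K * ρ ^ ((n : ℝ) * (1 - 1 / p))

/-!
Take `u = v⁻¹` in the variable `xᵢ`, with `v s = s ^ m` and `m` odd. The equation for `u` says that
`f` is the curvature of the graph of `v`, a smooth function of the value of `u`, although `∇u`
blows up on `{xᵢ = 0}`.

Stability comes from the Jacobi field `u' > 0`: with `w = √(1 + u'²)`, the function
`H = -(u'' / w³) / u'` solves the Riccati equation `f'(u) + H² w³ = H'`, so that completing the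
square absorbs `f'(u) ξ²` up to the divergence `∂ᵢ(H ξ²)`. In terms of `v` one has `H = f v'`
evaluated at `u`, which stays smooth where `u'` is infinite.

Averaging `|∇u|` over small cubes at the origin, a bound in `M^p` forces
`u(δ) - u(-δ) = O(δ^{1 - n/p})`. When `p > n` the `m`-th root violates this for large `m`.
-/

section AreaIntegrand

variable {E : Type*} [NormedAddCommGroup E] [InnerProductSpace ℝ E]

/-- The Hessian of the area integrand `p ↦ √(1 + |p|²)` at `p`, as a quadratic form in `w`. It is
the integrand of the second variation in `IsStableSolution`, with `p = ∇u` and `w = ∇ξ`. -/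
def areaHessian (p w : E) : ℝ :=
  ‖w‖ ^ 2 / √(1 + ‖p‖ ^ 2) - ⟪p, w⟫ ^ 2 / (1 + ‖p‖ ^ 2) ^ ((3 : ℝ) / 2)

lemma rpow_three_halves {a : ℝ} (ha : 0 ≤ a) : a ^ ((3 : ℝ) / 2) = √a ^ 3 := by
  rw [Real.sqrt_eq_rpow, ← Real.rpow_mul_natCast ha]
  norm_num

lemma areaHessian_le_norm_sq (p w : E) : areaHessian p w ≤ ‖w‖ ^ 2 := by
  have hsqrt : 1 ≤ √(1 + ‖p‖ ^ 2) := Real.one_le_sqrt.2 (by simp)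
  calc areaHessian p w ≤ ‖w‖ ^ 2 / √(1 + ‖p‖ ^ 2) := sub_le_self _ (by positivity)
    _ ≤ ‖w‖ ^ 2 := div_le_self (by positivity) hsqrt

lemma norm_sq_div_le_areaHessian (p w : E) : ‖w‖ ^ 2 / √(1 + ‖p‖ ^ 2) ^ 3 ≤ areaHessian p w := by
  have hW2 : √(1 + ‖p‖ ^ 2) ^ 2 = 1 + ‖p‖ ^ 2 := Real.sq_sqrt (by positivity)
  have cauchy_schwarz : ⟪p, w⟫ ^ 2 ≤ ‖p‖ ^ 2 * ‖w‖ ^ 2 := by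
    rw [← mul_pow]
    exact sq_le_sq' (neg_le_of_abs_le (abs_real_inner_le_norm p w)) (real_inner_le_norm p w)
  calc ‖w‖ ^ 2 / √(1 + ‖p‖ ^ 2) ^ 3
      = ‖w‖ ^ 2 / √(1 + ‖p‖ ^ 2) - ‖p‖ ^ 2 * ‖w‖ ^ 2 / √(1 + ‖p‖ ^ 2) ^ 3 := by
        field_simp
        linear_combination -‖w‖ ^ 2 * hW2
    _ ≤ areaHessian p w := by
        rw [areaHessian, rpow_three_halves (by positivity)]
        gcongr

lemma areaHessian_nonneg (p w : E) : 0 ≤ areaHessian p w :=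
  le_trans (by positivity) (norm_sq_div_le_areaHessian p w)

end AreaIntegrand

section Gradient

lemma hasCompactSupport_sq {X : Type*} [TopologicalSpace X] {f : X → ℝ}
    (hf : HasCompactSupport f) : HasCompactSupport fun x => f x ^ 2 :=
  hf.comp_left (zero_pow two_ne_zero)

variable {E : Type*} [NormedAddCommGroup E] [InnerProductSpace ℝ E] [CompleteSpace E] {φ : E → ℝ}

lemma gradient_of_notMem_tsupport {x : E} (hx : x ∉ tsupport φ) : gradient φ x = 0 := by
  rw [gradient, fderiv_of_notMem_tsupport ℝ hx, map_zero]

lemma continuous_gradient (hφ : ContDiff ℝ 1 φ) : Continuous (gradient φ) :=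
  (InnerProductSpace.toDual ℝ E).symm.continuous.comp (hφ.continuous_fderiv one_ne_zero)

lemma hasCompactSupport_gradient (hφ : HasCompactSupport φ) : HasCompactSupport (gradient φ) :=
  (hφ.fderiv ℝ).comp_left (map_zero (InnerProductSpace.toDual ℝ E).symm)

end Gradient

section Coordinates

variable {n : ℕ} (i : Fin n)

lemma gradient_apply_eq_fderiv_single (φ : Euc n → ℝ) (x : Euc n) :
    gradient φ x i = fderiv ℝ φ x (EuclideanSpace.single i 1) := by
  rw [← inner_gradient_left, EuclideanSpace.inner_single_right]
  simp

lemma hasFDerivAt_comp_apply {g : ℝ → ℝ} {g' : ℝ} {x : Euc n} (hg : HasDerivAt g g' (x i)) :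
    HasFDerivAt (fun y : Euc n => g (y i)) (g' • (EuclideanSpace.proj i : Euc n →L[ℝ] ℝ)) x :=
  hg.comp_hasFDerivAt x (EuclideanSpace.proj i : Euc n →L[ℝ] ℝ).hasFDerivAt

lemma differentiableAt_comp_apply_iff {g : ℝ → ℝ} {x : Euc n} :
    DifferentiableAt ℝ (fun y : Euc n => g (y i)) x ↔ DifferentiableAt ℝ g (x i) := by
  refine ⟨fun h => ?_, fun h => (hasFDerivAt_comp_apply i h.hasDerivAt).differentiableAt⟩
  let line (t : ℝ) : Euc n := x + (t - x i) • EuclideanSpace.single i 1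
  have hline : DifferentiableAt ℝ line (x i) := by fun_prop
  have hx : line (x i) = x := by simp [line]
  have hg : (fun y : Euc n => g (y i)) ∘ line = g := by ext t; simp [line]
  rw [← hg]
  exact (hx ▸ h).comp (x i) hline

lemma gradient_comp_apply (g : ℝ → ℝ) (x : Euc n) :
    gradient (fun y : Euc n => g (y i)) x = deriv g (x i) • EuclideanSpace.single i 1 := by
  by_cases hg : DifferentiableAt ℝ g (x i)
  · refine HasGradientAt.gradient (hasGradientAt_iff_hasFDerivAt.2 ?_)
    refine (hasFDerivAt_comp_apply i hg.hasDerivAt).congr_fderiv ?_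
    ext y
    simp [EuclideanSpace.inner_single_left]
  · rw [gradient_eq_zero_of_not_differentiableAt (mt (differentiableAt_comp_apply_iff i).1 hg),
      deriv_zero_of_not_differentiableAt hg, zero_smul]

lemma norm_gradient_comp_apply (g : ℝ → ℝ) (x : Euc n) :
    ‖gradient (fun y : Euc n => g (y i)) x‖ = |deriv g (x i)| := by
  simp [gradient_comp_apply, norm_smul]

lemma inner_gradient_comp_apply (g : ℝ → ℝ) (x w : Euc n) :
    ⟪gradient (fun y : Euc n => g (y i)) x, w⟫ = deriv g (x i) * w i := by
  simp [gradient_comp_apply, inner_smul_left, EuclideanSpace.inner_single_left]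

lemma gradient_sq_apply {φ : Euc n → ℝ} (hφ : Differentiable ℝ φ) (x : Euc n) :
    gradient (fun y => φ y ^ 2) x i = 2 * φ x * gradient φ x i := by
  simp only [gradient_apply_eq_fderiv_single]
  rw [((hφ x).hasFDerivAt.pow 2).fderiv]
  simp

lemma continuous_gradient_apply {φ : Euc n → ℝ} (hφ : ContDiff ℝ 1 φ) :
    Continuous fun x => gradient φ x i :=
  (EuclideanSpace.proj i : Euc n →L[ℝ] ℝ).continuous.comp (continuous_gradient hφ)

lemma hasCompactSupport_gradient_apply {φ : Euc n → ℝ} (hc : HasCompactSupport φ) :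
    HasCompactSupport fun x => gradient φ x i := by
  simpa only [gradient_apply_eq_fderiv_single] using hc.fderiv_apply ℝ _

lemma integrable_comp_apply_mul {h : ℝ → ℝ} (hh : Continuous h) {φ : Euc n → ℝ}
    (hφ : Continuous φ) (hc : HasCompactSupport φ) : Integrable fun x => h (x i) * φ x :=
  ((hh.comp (by fun_prop)).mul hφ).integrable_of_hasCompactSupport hc.mul_left

lemma integral_comp_apply_mul_gradient_apply {g g' : ℝ → ℝ} (hg : ∀ t, HasDerivAt g (g' t) t)
    (hg' : Continuous g') {φ : Euc n → ℝ} (hφ : ContDiff ℝ 1 φ) (hc : HasCompactSupport φ) :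
    ∫ x, g (x i) * gradient φ x i = -∫ x, g' (x i) * φ x := by
  have hgc : Continuous g := continuous_iff_continuousAt.2 fun t => (hg t).continuousAt
  have hgu (x : Euc n) :
      fderiv ℝ (fun y : Euc n => g (y i)) x (EuclideanSpace.single i 1) = g' (x i) := by
    simp [(hasFDerivAt_comp_apply i (hg (x i))).fderiv]
  have hint := integrable_comp_apply_mul i hgc (continuous_gradient_apply i hφ)
    (hasCompactSupport_gradient_apply i hc)
  simp only [gradient_apply_eq_fderiv_single] at hint ⊢
  simp only [← hgu]
  refine integral_mul_fderiv_eq_neg_fderiv_mul_of_integrable ?_ hint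
    (integrable_comp_apply_mul i hgc hφ.continuous hc)
    (fun x _ => (hasFDerivAt_comp_apply i (hg (x i))).differentiableAt)
    (fun x _ => hφ.differentiable one_ne_zero x)
  simpa only [hgu] using integrable_comp_apply_mul i hg' hφ.continuous hc

lemma quasiMeasurePreserving_apply :
    Measure.QuasiMeasurePreserving (fun x : Euc n => x i) :=
  (Measure.quasiMeasurePreserving_eval (fun _ => volume) i).comp
    (PiLp.volume_preserving_ofLp (Fin n)).quasiMeasurePreserving

end Coordinates

section Cube

variable {n : ℕ} {δ : ℝ}

/-- The open cube `(-δ, δ)ⁿ`, encoded as a ball of the sup norm. -/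
def cube (n : ℕ) (δ : ℝ) : Set (Euc n) := WithLp.ofLp ⁻¹' ball (0 : Fin n → ℝ) δ

lemma map_apply_restrict_cube (i : Fin n) (hδ : 0 < δ) :
    (volume.restrict (cube n δ)).map (fun x => x i) =
      ENNReal.ofReal (2 * δ) ^ (n - 1) • volume.restrict (ball 0 δ) := by
  have hcube : MeasurePreserving WithLp.ofLp (volume.restrict (cube n δ))
      (volume.restrict (ball (0 : Fin n → ℝ) δ)) :=
    (PiLp.volume_preserving_ofLp (Fin n)).restrict_preimage measurableSet_ball
  have hcomp : (fun x : Euc n => x i) = Function.eval i ∘ WithLp.ofLp := rfl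
  rw [hcomp, ← Measure.map_map (measurable_pi_apply i) hcube.measurable, hcube.map_eq,
    ball_pi _ hδ, volume_pi, Measure.restrict_pi_pi, Measure.pi_map_eval]
  simp [Real.volume_ball]

lemma setIntegral_cube_comp_apply (i : Fin n) (hδ : 0 < δ) {h : ℝ → ℝ}
    (hh : AEStronglyMeasurable h) :
    ∫ x in cube n δ, h (x i) = (2 * δ) ^ (n - 1) * ∫ t in ball 0 δ, h t := by
  have hmap := map_apply_restrict_cube i hδ
  rw [← integral_map (φ := fun x : Euc n => x i) (by fun_prop)
    (by rw [hmap]; exact hh.restrict.smul_measure _), hmap, integral_smul_measure]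
  simp [hδ.le]

lemma locallyIntegrable_comp_apply (i : Fin n) {h : ℝ → ℝ} (hh : LocallyIntegrable h) :
    LocallyIntegrable fun x : Euc n => h (x i) := by
  refine locallyIntegrable_iff.2 fun s hs => ?_
  have hofLp : Continuous (WithLp.ofLp : Euc n → Fin n → ℝ) := PiLp.continuous_ofLp 2 _
  obtain ⟨δ, hδ, hsub⟩ := (hs.image hofLp).isBounded.subset_ball_lt 0 0
  have hmap : Integrable h ((volume.restrict (cube n δ)).map fun x => x i) := by
    rw [map_apply_restrict_cube i hδ]
    exact ((hh.integrableOn_isCompact (isCompact_closedBall 0 δ)).mono_set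
      ball_subset_closedBall).smul_measure (by finiteness)
  have hcube : IntegrableOn (fun x : Euc n => h (x i)) (cube n δ) :=
    hmap.comp_measurable (by fun_prop)
  exact hcube.mono_set (Set.image_subset_iff.1 hsub)

lemma cube_subset_ball (hn : 0 < n) (hδ : 0 < δ) : cube n δ ⊆ ball 0 (√n * δ) := by
  intro x hx
  rw [mem_ball_zero_iff, EuclideanSpace.norm_eq, ← Real.sqrt_sq hδ.le,
    ← Real.sqrt_mul n.cast_nonneg]
  rw [cube, Set.mem_preimage, mem_ball_zero_iff, pi_norm_lt_iff hδ] at hx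
  have : Nonempty (Fin n) := ⟨⟨0, hn⟩⟩
  refine Real.sqrt_lt_sqrt (by positivity) ?_
  calc ∑ j, ‖x j‖ ^ 2 < ∑ _j : Fin n, δ ^ 2 :=
        Finset.sum_lt_sum_of_nonempty Finset.univ_nonempty fun j _ => by gcongr; exact hx j
    _ = n * δ ^ 2 := by simp

end Cube

section OneDimensional

variable {n : ℕ} {Ω : Set (Euc n)}

lemma IsTestFun.contDiff_one {φ : Euc n → ℝ} (hφ : IsTestFun Ω φ) : ContDiff ℝ 1 φ :=
  hφ.1.of_le (by exact_mod_cast le_top)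

lemma IsTestFun.setIntegral_eq_integral {φ : Euc n → ℝ} (hφ : IsTestFun Ω φ) {F : Euc n → ℝ}
    (hF : ∀ x ∉ tsupport φ, F x = 0) : ∫ x in Ω, F x = ∫ x, F x :=
  setIntegral_eq_integral_of_forall_compl_eq_zero fun x hx => hF x fun h => hx (hφ.2.2 h)

theorem isWeakSolution_comp_apply (i : Fin n) {f g Γ : ℝ → ℝ} (hf : Continuous f)
    (hg : Continuous g) (hg' : LocallyIntegrable (deriv g))
    (hΓ : ∀ t, HasDerivAt Γ (-f (g t)) t)
    (hflux : ∀ᵐ t, deriv g t / √(1 + deriv g t ^ 2) = Γ t) :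
    IsWeakSolution Ω f (fun x => g (x i)) := by
  refine ⟨Continuous.locallyIntegrable (by fun_prop) |>.locallyIntegrableOn _, ?_,
    Continuous.locallyIntegrable (by fun_prop) |>.locallyIntegrableOn _, fun φ hφ => ?_⟩
  · simp only [norm_gradient_comp_apply]
    exact ((locallyIntegrable_comp_apply i hg').locallyIntegrableOn Ω).norm
  have hflux_apply : ∀ᵐ x : Euc n, deriv g (x i) / √(1 + deriv g (x i) ^ 2) = Γ (x i) :=
    (quasiMeasurePreserving_apply i).ae hflux
  calc ∫ x in Ω, ⟪gradient (fun x => g (x i)) x, gradient φ x⟫ /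
        √(1 + ‖gradient (fun x => g (x i)) x‖ ^ 2)
      = ∫ x in Ω, Γ (x i) * gradient φ x i := by
        refine integral_congr_ae (ae_restrict_of_ae (hflux_apply.mono fun x hx => ?_))
        simp only [inner_gradient_comp_apply, norm_gradient_comp_apply, sq_abs]
        rw [← hx, div_mul_eq_mul_div]
    _ = ∫ x, Γ (x i) * gradient φ x i :=
        hφ.setIntegral_eq_integral fun x hx => by simp [gradient_of_notMem_tsupport hx]
    _ = ∫ x, f (g (x i)) * φ x := by
        rw [integral_comp_apply_mul_gradient_apply i hΓ (by fun_prop) hφ.contDiff_one hφ.2.1,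
          ← integral_neg]
        simp only [neg_mul, neg_neg]
    _ = ∫ x in Ω, f (g (x i)) * φ x :=
        (hφ.setIntegral_eq_integral fun x hx => by simp [image_eq_zero_of_notMem_tsupport hx]).symm

lemma mul_sq_le_of_riccati {a b c h : ℝ} (ha : 0 < a) (hric : c + h ^ 2 * a ≤ b) (x d : ℝ) :
    c * x ^ 2 ≤ d ^ 2 / a + (b * x ^ 2 + h * (2 * x * d)) := by
  have hsquare : d ^ 2 / a + (h ^ 2 * a * x ^ 2 + h * (2 * x * d)) = (d + h * a * x) ^ 2 / a := by
    field_simp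
    ring
  have hnonneg : 0 ≤ (d + h * a * x) ^ 2 / a := by positivity
  nlinarith [mul_le_mul_of_nonneg_right hric (sq_nonneg x)]

lemma mul_sq_le_areaHessian_add (i : Fin n) {g : ℝ → ℝ} {ξ : Euc n → ℝ} (hξ : Differentiable ℝ ξ)
    {x : Euc n} {b c h : ℝ} (hric : c + h ^ 2 * √(1 + deriv g (x i) ^ 2) ^ 3 ≤ b) :
    c * ξ x ^ 2 ≤ areaHessian (gradient (fun y : Euc n => g (y i)) x) (gradient ξ x) +
      (b * ξ x ^ 2 + h * gradient (fun y => ξ y ^ 2) x i) := by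
  rw [gradient_sq_apply i hξ]
  refine (mul_sq_le_of_riccati (by positivity) hric (ξ x) (gradient ξ x i)).trans ?_
  refine add_le_add_left (le_trans ?_ (norm_sq_div_le_areaHessian _ _)) _
  rw [norm_gradient_comp_apply, sq_abs, ← sq_abs (gradient ξ x i)]
  gcongr
  exact PiLp.norm_apply_le (gradient ξ x) i

lemma IsTestFun.integrable_areaHessian {ξ : Euc n → ℝ} (hξ : IsTestFun Ω ξ) (i : Fin n)
    (g : ℝ → ℝ) :
    Integrable fun x => areaHessian (gradient (fun y : Euc n => g (y i)) x) (gradient ξ x) := by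
  have hξ' : Continuous (gradient ξ) := continuous_gradient hξ.contDiff_one
  have hdom : Integrable fun x => ‖gradient ξ x‖ ^ 2 :=
    (hξ'.norm.pow 2).integrable_of_hasCompactSupport
      (hasCompactSupport_sq (hasCompactSupport_gradient hξ.2.1).norm)
  refine hdom.mono' ?_ (.of_forall fun x => ?_)
  · have hmeas : Measurable (gradient ξ) := hξ'.measurable
    have := measurable_deriv g
    simp only [areaHessian, norm_gradient_comp_apply, inner_gradient_comp_apply]
    exact Measurable.aestronglyMeasurable (by fun_prop)
  · rw [Real.norm_of_nonneg (areaHessian_nonneg _ _)]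
    exact areaHessian_le_norm_sq _ _

theorem isStableSolution_comp_apply (i : Fin n) {f g H H' : ℝ → ℝ}
    (hu : IsWeakSolution Ω f (fun x => g (x i))) (hf : ContDiff ℝ 1 f) (hg : Continuous g)
    (hH : ∀ t, HasDerivAt H (H' t) t) (hH' : Continuous H')
    (hric : ∀ᵐ t, deriv f (g t) + H t ^ 2 * √(1 + deriv g t ^ 2) ^ 3 ≤ H' t) :
    IsStableSolution Ω f (fun x => g (x i)) := by
  have hHc : Continuous H := continuous_iff_continuousAt.2 fun t => (hH t).continuousAt
  have hf' : Continuous fun t => deriv f (g t) := (hf.continuous_deriv le_rfl).comp hg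
  refine ⟨hu, Continuous.locallyIntegrable (by fun_prop) |>.locallyIntegrableOn _,
    fun ξ hξ => ?_⟩
  have hξ_sq : ContDiff ℝ 1 fun x => ξ x ^ 2 := hξ.contDiff_one.pow 2
  have hξ_sq_supp : HasCompactSupport fun x => ξ x ^ 2 := hasCompactSupport_sq hξ.2.1
  have hpotential : Integrable fun x => deriv f (g (x i)) * ξ x ^ 2 :=
    integrable_comp_apply_mul i hf' hξ_sq.continuous hξ_sq_supp
  have hhessian := hξ.integrable_areaHessian i g
  have hdiv₁ := integrable_comp_apply_mul i hH' hξ_sq.continuous hξ_sq_supp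
  have hdiv₂ := integrable_comp_apply_mul i hHc (continuous_gradient_apply i hξ_sq)
    (hasCompactSupport_gradient_apply i hξ_sq_supp)
  have hdiv : Integrable fun x =>
      H' (x i) * ξ x ^ 2 + H (x i) * gradient (fun y => ξ y ^ 2) x i := hdiv₁.add hdiv₂
  have hdiv_zero : ∫ x, (H' (x i) * ξ x ^ 2 + H (x i) * gradient (fun y => ξ y ^ 2) x i) = 0 := by
    rw [integral_add hdiv₁ hdiv₂,
      integral_comp_apply_mul_gradient_apply i hH hH' hξ_sq hξ_sq_supp, add_neg_cancel]
  have hpointwise : ∀ᵐ x : Euc n, deriv f (g (x i)) * ξ x ^ 2 ≤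
      areaHessian (gradient (fun y : Euc n => g (y i)) x) (gradient ξ x) +
        (H' (x i) * ξ x ^ 2 + H (x i) * gradient (fun y => ξ y ^ 2) x i) := by
    filter_upwards [(quasiMeasurePreserving_apply i).ae hric] with x hx
    exact mul_sq_le_areaHessian_add i (hξ.contDiff_one.differentiable one_ne_zero) hx
  calc ∫ x in Ω, deriv f (g (x i)) * ξ x ^ 2
      = ∫ x, deriv f (g (x i)) * ξ x ^ 2 :=
        hξ.setIntegral_eq_integral fun x hx => by simp [image_eq_zero_of_notMem_tsupport hx]
    _ ≤ ∫ x, areaHessian (gradient (fun y : Euc n => g (y i)) x) (gradient ξ x) := by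
        refine (integral_mono_ae hpotential (hhessian.add hdiv) hpointwise).trans_eq ?_
        rw [integral_add' hhessian hdiv, hdiv_zero, add_zero]
    _ = ∫ x in Ω, areaHessian (gradient (fun y : Euc n => g (y i)) x) (gradient ξ x) :=
        (hξ.setIntegral_eq_integral fun x hx => by
          simp [areaHessian, gradient_of_notMem_tsupport hx]).symm

end OneDimensional

section GraphCurvature

/-- The signed curvature `v'' / (1 + v'²)^{3/2}` of the graph of `v`. Seen from the other axis, it
is the nonlinearity `f` for which `u = v⁻¹` solves `(u' / √(1 + u'²))' = -f(u)`. -/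
def graphCurvature (v : ℝ → ℝ) (s : ℝ) : ℝ :=
  deriv (deriv v) s / √(1 + deriv v s ^ 2) ^ 3

variable {v : ℝ → ℝ}

lemma contDiff_graphCurvature {k : ℕ} (hv : ContDiff ℝ (k + 2 : ℕ) v) :
    ContDiff ℝ k (graphCurvature v) := by
  have hv' : ContDiff ℝ (k + 1 : ℕ) (deriv v) := hv.iterate_deriv' (k + 1) 1
  have hv'' : ContDiff ℝ k (deriv (deriv v)) := hv.iterate_deriv' k 2
  have hW : ContDiff ℝ (k + 1 : ℕ) fun s => √(1 + deriv v s ^ 2) :=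
    (contDiff_const.add (hv'.pow 2)).sqrt fun s => by positivity
  exact hv''.div ((hW.of_le (by exact_mod_cast k.le_succ)).pow 3) fun s => by positivity

lemma hasDerivAt_inv_sqrt_one_add_deriv_sq {s : ℝ} (hv : DifferentiableAt ℝ (deriv v) s) :
    HasDerivAt (fun s => (√(1 + deriv v s ^ 2))⁻¹) (-graphCurvature v s * deriv v s) s := by
  have hW : √(1 + deriv v s ^ 2) ≠ 0 := by positivity
  refine ((((hv.hasDerivAt.fun_pow 2).const_add 1).sqrt (by positivity)).fun_inv hW).congr_deriv ?_
  rw [graphCurvature]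
  field_simp
  push_cast
  ring

lemma hasDerivAt_graphCurvature_mul_deriv {s q : ℝ}
    (hv : DifferentiableAt ℝ (deriv v) s) (hκ : DifferentiableAt ℝ (graphCurvature v) s)
    (hq : deriv v s * q = deriv (deriv v) s ^ 2) :
    HasDerivAt (fun s => graphCurvature v s * deriv v s)
      ((deriv (graphCurvature v) s + q / √(1 + deriv v s ^ 2) ^ 3) * deriv v s) s := by
  refine (hκ.hasDerivAt.mul hv.hasDerivAt).congr_deriv ?_
  rw [graphCurvature, add_mul, div_mul_eq_mul_div, div_mul_eq_mul_div, ← pow_two, ← hq,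
    mul_comm q]

lemma sqrt_one_add_sq_of_mul_eq_one {a b : ℝ} (ha : 0 ≤ a) (hab : a * b = 1) :
    √(1 + a ^ 2) = a * √(1 + b ^ 2) := by
  rw [← Real.sqrt_sq ha, ← Real.sqrt_mul (sq_nonneg a), Real.sqrt_sq ha]
  congr 1
  linear_combination (-a * b - 1) * hab

end GraphCurvature

section InverseGraph

variable {v : ℝ ≃o ℝ}

/-- Substituting `τ = v s` in `F' = P v'` needs no division by `v'`, which may vanish. -/
lemma hasDerivAt_comp_symm (hv : ContDiff ℝ 1 v) {F P : ℝ → ℝ}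
    (hF : ∀ s, HasDerivAt F (P s * deriv v s) s) (hP : Continuous P) (t : ℝ) :
    HasDerivAt (fun t => F (v.symm t)) (P (v.symm t)) t := by
  have hPu : Continuous (P ∘ v.symm) := hP.comp v.symm.continuous
  have hv' : Continuous (deriv v) := hv.continuous_deriv le_rfl
  have change_of_variables (t : ℝ) : F (v.symm t) = F (v.symm 0) + ∫ τ in 0..t, P (v.symm τ) := by
    have hsubst := intervalIntegral.integral_comp_mul_deriv (a := v.symm 0) (b := v.symm t)
      (g := P ∘ v.symm) (fun s _ => (hv.differentiable one_ne_zero s).hasDerivAt)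
      hv'.continuousOn hPu
    have hftc := intervalIntegral.integral_eq_sub_of_hasDerivAt (fun s _ => hF s)
      ((hP.mul hv').intervalIntegrable (v.symm 0) (v.symm t))
    simp only [Function.comp_apply, OrderIso.symm_apply_apply, OrderIso.apply_symm_apply]
      at hsubst
    linarith
  rw [funext change_of_variables]
  exact (hPu.integral_hasStrictDerivAt 0 t).hasDerivAt.const_add _

lemma ae_deriv_symm_mul_deriv (hv : Differentiable ℝ v) :
    ∀ᵐ t, deriv v.symm t * deriv v (v.symm t) = 1 := by
  filter_upwards [v.symm.monotone.ae_differentiableAt] with t ht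
  have hcomp : HasDerivAt (fun t => v (v.symm t)) (deriv v (v.symm t) * deriv v.symm t) t :=
    (hv _).hasDerivAt.comp t ht.hasDerivAt
  rw [mul_comm]
  simp only [OrderIso.apply_symm_apply] at hcomp
  exact hcomp.unique (hasDerivAt_id' t)

lemma locallyIntegrable_deriv_of_monotone {g : ℝ → ℝ} (hg : Monotone g) :
    LocallyIntegrable (deriv g) := fun t =>
  ⟨Set.Icc (t - 1) (t + 1), Icc_mem_nhds (by simp) (by simp),
    (intervalIntegrable_iff_integrableOn_Icc_of_le (by linarith)).1
      (hg.monotoneOn _).intervalIntegrable_deriv⟩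

theorem isWeakSolution_symm_comp_apply (hv : ContDiff ℝ 2 v) {n : ℕ} (i : Fin n)
    (Ω : Set (Euc n)) : IsWeakSolution Ω (graphCurvature v) (fun x => v.symm (x i)) := by
  have hκ : Continuous (graphCurvature v) := (contDiff_graphCurvature (k := 0) hv).continuous
  have hv' : Differentiable ℝ (deriv v) := (hv.iterate_deriv' 1 1).differentiable one_ne_zero
  refine isWeakSolution_comp_apply i hκ v.symm.continuous
    (locallyIntegrable_deriv_of_monotone v.symm.monotone)
    (hasDerivAt_comp_symm (hv.of_le one_le_two)
      (fun s => hasDerivAt_inv_sqrt_one_add_deriv_sq (hv' s)) hκ.neg) ?_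
  filter_upwards [ae_deriv_symm_mul_deriv (hv.differentiable two_ne_zero)] with t ht
  have hu : deriv v.symm t ≠ 0 := left_ne_zero_of_mul_eq_one ht
  rw [sqrt_one_add_sq_of_mul_eq_one v.symm.monotone.deriv_nonneg ht]
  field_simp

/-- `q` is the continuous extension of `v''² / v'` across the critical points of `v`. -/
theorem isStableSolution_symm_comp_apply (hv : ContDiff ℝ 3 v) {q : ℝ → ℝ} (hq : Continuous q)
    (hvq : ∀ s, deriv v s * q s = deriv (deriv v) s ^ 2) {n : ℕ} (i : Fin n)
    (Ω : Set (Euc n)) : IsStableSolution Ω (graphCurvature v) (fun x => v.symm (x i)) := by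
  have hκ : ContDiff ℝ 1 (graphCurvature v) := contDiff_graphCurvature (k := 1) hv
  have hv' : ContDiff ℝ 1 (deriv v) := (hv.iterate_deriv' 2 1).of_le one_le_two
  have hH' : Continuous fun s => deriv (graphCurvature v) s + q s / √(1 + deriv v s ^ 2) ^ 3 :=
    (hκ.continuous_deriv le_rfl).add (hq.div (by fun_prop) fun s => by positivity)
  have hH := hasDerivAt_comp_symm (hv.of_le (by norm_num))
    (fun s => hasDerivAt_graphCurvature_mul_deriv (hv'.differentiable one_ne_zero s)
      (hκ.differentiable one_ne_zero s) (hvq s)) hH'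
  refine isStableSolution_comp_apply i
    (isWeakSolution_symm_comp_apply (hv.of_le (by norm_num)) i Ω) hκ v.symm.continuous hH
    (hH'.comp v.symm.continuous) ?_
  filter_upwards [ae_deriv_symm_mul_deriv (hv.differentiable three_ne_zero)] with t ht
  refine add_le_add_right (le_of_eq ?_) _
  rw [sqrt_one_add_sq_of_mul_eq_one v.symm.monotone.deriv_nonneg ht, graphCurvature]
  set u' := deriv v.symm t
  set v' := deriv v (v.symm t)
  have hcube : (u' * v') ^ 3 = 1 := by rw [ht, one_pow]
  field_simp
  linear_combination q (v.symm t) * hcube - v' ^ 2 * u' ^ 3 * hvq (v.symm t)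

end InverseGraph

section Morrey

variable {n : ℕ} {Ω : Set (Euc n)}

lemma integral_ball_deriv {g : ℝ → ℝ} (hg : Continuous g) (hg' : LocallyIntegrable (deriv g))
    {s : Set ℝ} (hs : s.Countable) (hgs : ∀ t ∉ s, DifferentiableAt ℝ g t) {δ : ℝ} (hδ : 0 < δ) :
    ∫ t in ball 0 δ, deriv g t = g δ - g (-δ) := by
  have hftc := integral_eq_of_hasDerivAt_off_countable_of_le g (deriv g)
    (neg_le_self hδ.le) hs hg.continuousOn (fun t ht => (hgs t ht.2).hasDerivAt)
    (hg'.integrableOn_isCompact isCompact_uIcc).intervalIntegrable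
  rw [← hftc, intervalIntegral.integral_of_le (neg_le_self hδ.le), integral_Ioc_eq_integral_Ioo,
    Real.ball_eq_Ioo, zero_sub, zero_add]

lemma mul_abs_sub_le_setIntegral_cube (i : Fin n) {g : ℝ → ℝ} (hg : Continuous g)
    (hg' : LocallyIntegrable (deriv g)) {s : Set ℝ} (hs : s.Countable)
    (hgs : ∀ t ∉ s, DifferentiableAt ℝ g t) {δ : ℝ} (hδ : 0 < δ) :
    (2 * δ) ^ (n - 1) * |g δ - g (-δ)| ≤
      ∫ x in cube n δ, ‖gradient (fun y : Euc n => g (y i)) x‖ := by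
  simp only [norm_gradient_comp_apply]
  rw [setIntegral_cube_comp_apply i hδ (h := fun t => |deriv g t|)
    (measurable_deriv g).abs.aestronglyMeasurable, ← integral_ball_deriv hg hg' hs hgs hδ]
  gcongr
  exact abs_integral_le_integral_abs

lemma MemMorrey.isBigO_setIntegral_cube (hn : 0 < n) (hΩ : IsBounded Ω) (h0 : Ω ∈ 𝓝 0) {p : ℝ}
    {G : Euc n → Euc n} (hM : MemMorrey Ω p G) (hG : LocallyIntegrable G) :
    (fun δ => ∫ x in cube n δ, ‖G x‖) =O[𝓝[>] 0] fun δ : ℝ => δ ^ ((n : ℝ) * (1 - 1 / p)) := by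
  obtain ⟨K, -, hK⟩ := hM
  obtain ⟨r, hr, hrΩ⟩ := Metric.mem_nhds_iff.1 h0
  have : Nonempty (Fin n) := ⟨⟨0, hn⟩⟩
  have hdiam : 2 * r ≤ diam Ω := diam_ball_eq (0 : Euc n) hr.le ▸ diam_mono hrΩ hΩ
  refine IsBigO.of_bound (K * √n ^ ((n : ℝ) * (1 - 1 / p))) ?_
  filter_upwards [Ioo_mem_nhdsGT (show 0 < r / √n by positivity)] with δ ⟨hδ, hδr⟩
  have hρr : √n * δ < r := (lt_div_iff₀' (by positivity)).1 hδr
  have hcube : cube n δ ⊆ ball 0 (√n * δ) ∩ Ω :=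
    Set.subset_inter (cube_subset_ball hn hδ)
      ((cube_subset_ball hn hδ).trans ((ball_subset_ball hρr.le).trans hrΩ))
  have hint : IntegrableOn (fun x => ‖G x‖) (ball 0 (√n * δ) ∩ Ω) :=
    ((hG.integrableOn_isCompact (isCompact_closedBall 0 (√n * δ))).mono_set
      (Set.inter_subset_left.trans ball_subset_closedBall)).norm
  rw [Real.norm_of_nonneg (integral_nonneg fun _ => norm_nonneg _),
    Real.norm_of_nonneg (by positivity), mul_assoc, ← Real.mul_rpow (by positivity) hδ.le]
  calc ∫ x in cube n δ, ‖G x‖ ≤ ∫ x in ball 0 (√n * δ) ∩ Ω, ‖G x‖ :=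
        setIntegral_mono_set hint (.of_forall fun _ => norm_nonneg _) hcube.eventuallyLE
    _ ≤ K * (√n * δ) ^ ((n : ℝ) * (1 - 1 / p)) :=
        hK 0 (mem_of_mem_nhds h0) _ (by positivity) (by linarith)

theorem MemMorrey.isBigO_sub (hΩ : IsBounded Ω) (h0 : Ω ∈ 𝓝 0) (i : Fin n) {p : ℝ} {g : ℝ → ℝ}
    (hM : MemMorrey Ω p (fun x => gradient (fun y => g (y i)) x)) (hg : Continuous g)
    (hg' : LocallyIntegrable (deriv g)) {s : Set ℝ} (hs : s.Countable)
    (hgs : ∀ t ∉ s, DifferentiableAt ℝ g t) :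
    (fun δ => g δ - g (-δ)) =O[𝓝[>] 0] fun δ : ℝ => δ ^ (1 - n / p) := by
  have hgrad : LocallyIntegrable fun x : Euc n => gradient (fun y => g (y i)) x := by
    simp only [gradient_comp_apply]
    exact fun x => (locallyIntegrable_comp_apply i hg' x).imp fun _ h => ⟨h.1, h.2.smul_const _⟩
  have hlower : (fun δ => (2 * δ) ^ (n - 1) * (g δ - g (-δ))) =O[𝓝[>] 0]
      fun δ => ∫ x in cube n δ, ‖gradient (fun y : Euc n => g (y i)) x‖ := by
    refine IsBigO.of_norm_eventuallyLE ?_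
    filter_upwards [self_mem_nhdsWithin] with δ (hδ : 0 < δ)
    rw [norm_mul, Real.norm_of_nonneg (by positivity : 0 ≤ (2 * δ) ^ (n - 1))]
    exact mul_abs_sub_le_setIntegral_cube i hg hg' hs hgs hδ
  have hcube := hlower.trans (hM.isBigO_setIntegral_cube i.pos hΩ h0 hgrad)
  have hexp : (n : ℝ) * (1 - 1 / p) = 1 - n / p + (n - 1 : ℕ) := by
    rw [Nat.cast_pred i.pos]
    ring
  calc (fun δ => g δ - g (-δ))
      =ᶠ[𝓝[>] 0] fun δ => ((2 * δ) ^ (n - 1))⁻¹ * ((2 * δ) ^ (n - 1) * (g δ - g (-δ))) := by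
        filter_upwards [self_mem_nhdsWithin] with δ (hδ : 0 < δ)
        rw [inv_mul_cancel_left₀ (by positivity)]
    _ =O[𝓝[>] 0] fun δ => ((2 * δ) ^ (n - 1))⁻¹ * δ ^ ((n : ℝ) * (1 - 1 / p)) :=
        (isBigO_refl _ _).mul hcube
    _ =ᶠ[𝓝[>] 0] fun δ => (2 ^ (n - 1))⁻¹ * δ ^ (1 - n / p) := by
        filter_upwards [self_mem_nhdsWithin] with δ (hδ : 0 < δ)
        rw [hexp, Real.rpow_add_natCast hδ.ne', mul_pow]
        field_simp
    _ =O[𝓝[>] 0] fun δ => δ ^ (1 - n / p) := isBigO_const_mul_self _ _ _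

end Morrey

section OddPower

lemma surjective_pow_of_odd {m : ℕ} (hm : Odd m) : Function.Surjective fun s : ℝ => s ^ m := by
  have htop : Tendsto (fun s : ℝ => s ^ m) atTop atTop := tendsto_pow_atTop hm.pos.ne'
  refine (continuous_pow m).surjective htop ?_
  refine (tendsto_neg_atTop_atBot.comp (htop.comp tendsto_neg_atBot_atTop)).congr fun s => ?_
  simp [hm.neg_pow]

/-- The order automorphism `s ↦ s ^ m` of `ℝ`, for `m` odd. Its inverse is the odd `m`-th root, the
profile `u` of the counterexample. -/
def oddPow {m : ℕ} (hm : Odd m) : ℝ ≃o ℝ :=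
  StrictMono.orderIsoOfSurjective (fun s : ℝ => s ^ m) hm.strictMono_pow (surjective_pow_of_odd hm)

variable {m : ℕ} (hm : Odd m)

lemma coe_oddPow : ⇑(oddPow hm) = fun s => s ^ m := rfl

lemma contDiff_oddPow {k : WithTop ℕ∞} : ContDiff ℝ k (oddPow hm) :=
  contDiff_id.pow m

lemma deriv_oddPow : deriv (oddPow hm) = fun s : ℝ => m * s ^ (m - 1) := by
  ext s
  simp [coe_oddPow]

lemma oddPow_symm_pow (s : ℝ) : (oddPow hm).symm (s ^ m) = s :=
  (oddPow hm).symm_apply_apply s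

lemma differentiableAt_oddPow_symm {t : ℝ} (ht : t ≠ 0) :
    DifferentiableAt ℝ (oddPow hm).symm t := by
  have hroot : (oddPow hm).symm t ≠ 0 := by
    intro h
    rw [OrderIso.symm_apply_eq, coe_oddPow] at h
    exact ht (h.trans (zero_pow hm.pos.ne'))
  refine (HasDerivAt.of_local_left_inverse (oddPow hm).symm.continuous.continuousAt
    (hasDerivAt_pow m _) ?_ (.of_forall (oddPow hm).apply_symm_apply)).differentiableAt
  have := hm.pos.ne'
  positivity

theorem isStableSolution_oddPow_symm_comp_apply (h3 : 3 ≤ m) {n : ℕ} (i : Fin n)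
    (Ω : Set (Euc n)) :
    IsStableSolution Ω (graphCurvature (oddPow hm)) (fun x => (oddPow hm).symm (x i)) := by
  refine isStableSolution_symm_comp_apply (v := oddPow hm) (contDiff_oddPow hm)
    (q := fun s => m * (m - 1) ^ 2 * s ^ (m - 3)) (by fun_prop) (fun s => ?_) i Ω
  obtain ⟨k, rfl⟩ := Nat.exists_eq_add_of_le' h3
  simp only [deriv_oddPow, deriv_const_mul_field, deriv_pow_field]
  push_cast
  ring

lemma not_isBigO_oddPow_symm_sub {r : ℝ} (hr : 1 < m * r) :
    ¬ (fun δ => (oddPow hm).symm δ - (oddPow hm).symm (-δ)) =O[𝓝[>] 0] fun δ : ℝ => δ ^ r := by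
  intro h
  have hpow : Tendsto (fun s : ℝ => s ^ m) (𝓝[>] 0) (𝓝[>] 0) :=
    tendsto_nhdsWithin_iff.2 ⟨((continuous_pow m).tendsto' 0 0 (zero_pow hm.pos.ne')).mono_left
      nhdsWithin_le_nhds, eventually_mem_nhdsWithin.mono fun s hs => Set.mem_Ioi.2 (pow_pos hs m)⟩
  have hrescaled : (fun _ => 2 : ℝ → ℝ) =O[𝓝[>] 0] fun s => s ^ (m * r - 1) := by
    refine ((isBigO_refl (fun s : ℝ => s⁻¹) _).mul (h.comp_tendsto hpow)).congr' ?_ ?_ <;>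
      filter_upwards [self_mem_nhdsWithin] with s (hs : 0 < s)
    · simp only [Function.comp_apply, ← hm.neg_pow, oddPow_symm_pow]
      field_simp
      norm_num
    · simp only [Function.comp_apply, ← Real.rpow_natCast_mul hs.le]
      rw [Real.rpow_sub_one hs.ne', inv_mul_eq_div]
  have hlim : Tendsto (fun s : ℝ => s ^ (m * r - 1)) (𝓝[>] 0) (𝓝 0) :=
    ((Real.continuous_rpow_const (by linarith)).tendsto' 0 0
      (Real.zero_rpow (by linarith))).mono_left nhdsWithin_le_nhds
  exact two_ne_zero (tendsto_nhds_unique tendsto_const_nhds (hrescaled.trans_tendsto hlim))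

end OddPower

theorem stmt_1_general {n : ℕ} (i : Fin n) {Ω : Set (Euc n)} (hΩ : IsBounded Ω) (h0 : Ω ∈ 𝓝 0)
    {p : ℝ} (hp : n < p) :
    ∃ f g : ℝ → ℝ, ContDiff ℝ 1 f ∧ IsStableSolution Ω f (fun x => g (x i)) ∧
      ¬ MemMorrey Ω p (fun x => gradient (fun y => g (y i)) x) := by
  have hexp : 0 < 1 - n / p := by
    rw [sub_pos, div_lt_one (n.cast_nonneg.trans_lt hp)]
    exact hp
  obtain ⟨k, hk⟩ := exists_nat_gt (1 / (1 - n / p))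
  have hm : Odd (2 * k + 3) := ⟨k + 1, by ring⟩
  refine ⟨graphCurvature (oddPow hm), (oddPow hm).symm,
    contDiff_graphCurvature (k := 1) (contDiff_oddPow hm),
    isStableSolution_oddPow_symm_comp_apply hm (by omega) i Ω, fun hM => ?_⟩
  refine not_isBigO_oddPow_symm_sub hm (r := 1 - n / p) ?_ <|
    hM.isBigO_sub hΩ h0 i (oddPow hm).symm.continuous
      (locallyIntegrable_deriv_of_monotone (oddPow hm).symm.monotone) (Set.countable_singleton 0)
      fun t ht => differentiableAt_oddPow_symm hm ht
  calc 1 < k * (1 - n / p) := (div_lt_iff₀ hexp).1 hk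
    _ ≤ (2 * k + 3 : ℕ) * (1 - n / p) := by gcongr; omega

/-- **Theorem (Optimality of the Morrey exponent in low dimensions).**
For `n ≥ 2` and `α > 0` there exist a nonlinearity `f ∈ C¹(ℝ)` and a one-dimensional
stable solution `u` of `div(∇u/√(1+|∇u|²)) = -f(u)` in `B₁ ⊂ ℝⁿ` (i.e. `u` depends only
on the variable `x₁`) such that `∇u ∉ M^{n+α}(B₁)`. -/
theorem stmt_1 (n : ℕ) (hn : 2 ≤ n) (α : ℝ) (hα : 0 < α) :
    ∃ (f : ℝ → ℝ) (u : Euc n → ℝ),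
      ContDiff ℝ 1 f ∧
      (∃ g : ℝ → ℝ, ∀ x : Euc n, u x = g (x ⟨0, by omega⟩)) ∧
      IsStableSolution (ball (0 : Euc n) 1) f u ∧
      ¬ MemMorrey (ball (0 : Euc n) 1) ((n : ℝ) + α) (fun x => gradient u x) := by
  obtain ⟨f, g, hf, hstable, hMorrey⟩ := stmt_1_general ⟨0, by omega⟩ (Ω := ball (0 : Euc n) 1)
    isBounded_ball (ball_mem_nhds 0 one_pos) (p := n + α) (by linarith)
  exact ⟨f, fun x => g (x ⟨0, by omega⟩), hf, ⟨g, fun _ => rfl⟩, hstable, hMorrey⟩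
end
end

section
/- Let n ≥ 2, f ∈ C¹(ℝ), and let u ∈ W^{3,1}_loc(B₂) be a stable solution of div(∇u/√(1+|∇u|²)) = −f(u) in B₂ ⊂ ℝⁿ. Assume that u is radially symmetric with respect to the origin. Then for every α ∈ (0,1) there exists a constant K = K(n,α) such that ∫_{B_ρ(0)} |∇u| dx ≤ K ρ^{n−1+α} for all 0 < ρ < 1. -/
open MeasureTheory Metric Real Filter Asymptotics Bornology
open scoped RealInnerProductSpace Topology

noncomputable section

/-!
Write `u(x) = g(|x|)`, `w(t) = t / √(1 + t²)` and `d = n - 1`. In polar coordinates the equation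
reads `(w(g'))' = -(d w(g') / r + f(g))`. Testing stability with `g' η`, where `η` is a radial
cutoff function vanishing near the origin, and differentiating the equation removes `f` and leaves
the Hardy-type inequality
`∫ d r^(d-2) g' w(g') η² ≤ ∫ r^d w'(g') g'² η'²`.
The operator degenerates at large slopes: `w'(t) t² ≤ 1`, so the right-hand side is at most
`∫ r^d η'²`, whatever `u` is. On the left, `|t| ≤ t w(t) + 1`. With `η = 1` on `[ρ/2, ρ)` and
`|η'| ≤ D / ρ`, the annulus `ρ/2 ≤ |x| < ρ` therefore carries at most `C ρ^n` of `∫ |∇u|`, and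
summing over dyadic annuli bounds the integral over the whole ball by
`2 C ρ^n ≤ 2 C ρ^(n-1+α)`.
-/

section CompactlySupported

variable {E : Type*} [NormedAddCommGroup E] [NormedSpace ℝ E]
  {k l : WithTop ℕ∞} {U V : Set E} {A h : E → ℝ}

/-- The space `C_c^k(U)`. It is kept unbundled because its elements get multiplied by coefficients
that are regular only inside `U`. -/
structure MemCc (k : WithTop ℕ∞) (U : Set E) (h : E → ℝ) : Prop where
  contDiff : ContDiff ℝ k h
  hasCompactSupport : HasCompactSupport h
  tsupport_subset : tsupport h ⊆ U

namespace MemCc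

lemma of_le (hh : MemCc k U h) (hlk : l ≤ k) : MemCc l U h :=
  ⟨hh.contDiff.of_le hlk, hh.hasCompactSupport, hh.tsupport_subset⟩

lemma mono (hh : MemCc k U h) (hUV : U ⊆ V) : MemCc k V h :=
  ⟨hh.contDiff, hh.hasCompactSupport, hh.tsupport_subset.trans hUV⟩

lemma of_contDiffAt {K : Set E} (hK : IsCompact K) (hKU : K ⊆ U) (hs : Function.support h ⊆ K)
    (hh : ∀ x ∈ K, ContDiffAt ℝ k h x) : MemCc k U h := by
  have hsupp : tsupport h ⊆ K := closure_minimal hs hK.isClosed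
  refine ⟨?_, .of_support_subset_isCompact hK hs, hsupp.trans hKU⟩
  exact contMDiff_iff_contDiff.1
    (contMDiff_of_tsupport fun x hx => (hh x (hsupp hx)).contMDiffAt)

lemma eq_zero_of_notMem (hh : MemCc k U h) {x : E} (hx : x ∉ U) : h x = 0 :=
  image_eq_zero_of_notMem_tsupport fun hxh => hx (hh.tsupport_subset hxh)

lemma mul_left (hU : IsOpen U) (hA : ContDiffOn ℝ k A U) (hh : MemCc k U h) :
    MemCc k U (fun x => A x * h x) :=
  of_contDiffAt hh.hasCompactSupport.isCompact hh.tsupport_subset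
    ((Function.support_mul_subset_right _ _).trans subset_closure) fun _ hx =>
      (hA.contDiffAt (hU.mem_nhds (hh.tsupport_subset hx))).mul hh.contDiff.contDiffAt

lemma sq (hh : MemCc k U h) : MemCc k U (fun x => h x ^ 2) :=
  of_contDiffAt hh.hasCompactSupport.isCompact hh.tsupport_subset
    ((Function.support_pow h two_ne_zero).subset.trans subset_closure) fun _ _ =>
      (hh.contDiff.pow 2).contDiffAt

lemma integrable [MeasurableSpace E] [OpensMeasurableSpace E] {μ : Measure E}
    [IsFiniteMeasureOnCompacts μ] (hh : MemCc k U h) : Integrable h μ :=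
  hh.contDiff.continuous.integrable_of_hasCompactSupport hh.hasCompactSupport

lemma integrable_mul_left [MeasurableSpace E] [OpensMeasurableSpace E] {μ : Measure E}
    [IsFiniteMeasureOnCompacts μ] (hU : IsOpen U) (hA : ContinuousOn A U) (hh : MemCc k U h) :
    Integrable (fun x => A x * h x) μ :=
  ((hh.of_le zero_le).mul_left hU (contDiffOn_zero.2 hA)).integrable

end MemCc

end CompactlySupported

section RealLine

open scoped ContDiff Convolution

variable {k l : WithTop ℕ∞} {U : Set ℝ} {h : ℝ → ℝ}

namespace MemCc

lemma deriv (hh : MemCc k U h) (hlk : l + 1 ≤ k) : MemCc l U (deriv h) :=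
  ⟨(contDiff_succ_iff_deriv.1 (hh.contDiff.of_le hlk)).2.2, hh.hasCompactSupport.deriv,
    (tsupport_deriv_subset).trans hh.tsupport_subset⟩

lemma hasDerivAt (hh : MemCc k U h) (hk : k ≠ 0) (r : ℝ) : HasDerivAt h (_root_.deriv h r) r :=
  (hh.contDiff.differentiable hk r).hasDerivAt

lemma setIntegral_deriv_eq_zero (hh : MemCc 1 U h) : ∫ r in U, _root_.deriv h r = 0 := by
  have hh' : MemCc 0 U (_root_.deriv h) := hh.deriv (zero_add 1).le
  rw [setIntegral_eq_integral_of_forall_compl_eq_zero fun r hr => hh'.eq_zero_of_notMem hr]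
  exact integral_eq_zero_of_hasDerivAt_of_integrable (hh.hasDerivAt one_ne_zero)
    hh'.integrable hh.integrable

end MemCc

lemma abs_normed_convolution_le (φ : ContDiffBump (0 : ℝ)) {g : ℝ → ℝ} (hg : Continuous g) {C : ℝ}
    (hC : ∀ r, |g r| ≤ C) (r : ℝ) : |(φ.normed volume ⋆ g) r| ≤ C := by
  simpa using dist_convolution_le (z₀ := (0 : ℝ)) ((abs_nonneg _).trans (hC 0))
    φ.support_normed_eq.subset φ.nonneg_normed φ.integral_normed hg.aestronglyMeasurable
    (fun x _ => by simpa using hC x)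

lemma MemCc.exists_smooth_approx (hU : IsOpen U) (hh : MemCc 1 U h) :
    ∃ (H : ℕ → ℝ → ℝ) (K : Set ℝ) (C : ℝ), IsCompact K ∧ K ⊆ U ∧
      (∀ j, MemCc ∞ K (H j)) ∧ (∀ j r, |H j r| ≤ C ∧ |_root_.deriv (H j) r| ≤ C) ∧
      ∀ r, Tendsto (H · r) atTop (𝓝 (h r)) ∧
        Tendsto (fun j => _root_.deriv (H j) r) atTop (𝓝 (_root_.deriv h r)) := by
  obtain ⟨δ, hδ, hδU⟩ := hh.hasCompactSupport.isCompact.exists_cthickening_subset_open hU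
    hh.tsupport_subset
  have hh' : MemCc 0 U (_root_.deriv h) := hh.deriv (zero_add 1).le
  have hc := hh.contDiff.continuous
  have hc' := hh'.contDiff.continuous
  obtain ⟨C, hC⟩ := hh.hasCompactSupport.exists_bound_of_continuous hc
  obtain ⟨C', hC'⟩ := hh'.hasCompactSupport.exists_bound_of_continuous hc'
  let φ (j : ℕ) : ContDiffBump (0 : ℝ) :=
    ⟨δ / (j + 1) / 2, δ / (j + 1), by positivity, half_lt_self (by positivity)⟩
  have hφ : Tendsto (fun j => (φ j).rOut) atTop (𝓝 0) := by
    simpa [φ, div_eq_mul_inv] using tendsto_one_div_add_atTop_nhds_zero_nat.const_mul δ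
  let H (j : ℕ) : ℝ → ℝ := (φ j).normed volume ⋆ h
  have hH' (j : ℕ) : _root_.deriv (H j) = (φ j).normed volume ⋆ _root_.deriv h := funext fun r =>
    (hh.hasCompactSupport.hasDerivAt_convolution_right _
      (φ j).continuous_normed.locallyIntegrable hh.contDiff r).deriv
  have hsupp (j : ℕ) : tsupport (H j) ⊆ cthickening δ (tsupport h) := by
    refine closure_minimal ((support_convolution_subset _).trans ?_) isClosed_cthickening
    rw [(φ j).support_normed_eq, ball_add_zero]
    refine (thickening_subset_of_subset _ subset_closure).trans
      (thickening_subset_cthickening_of_le ?_ _)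
    exact div_le_self hδ.le (by simp)
  have hK : IsCompact (cthickening δ (tsupport h)) := hh.hasCompactSupport.isCompact.cthickening
  refine ⟨H, cthickening δ (tsupport h), max C C', hK, hδU, fun j => ⟨?_, ?_, hsupp j⟩,
    fun j r => ⟨?_, ?_⟩, fun r => ⟨?_, ?_⟩⟩
  · exact (φ j).hasCompactSupport_normed.contDiff_convolution_left _ (φ j).contDiff_normed
      hc.locallyIntegrable
  · exact hK.of_isClosed_subset (isClosed_tsupport _) (hsupp j)
  · exact abs_normed_convolution_le _ hc (fun x => (hC x).trans (le_max_left _ _)) r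
  · rw [hH']
    exact abs_normed_convolution_le _ hc' (fun x => (hC' x).trans (le_max_right _ _)) r
  · exact ContDiffBump.convolution_tendsto_right_of_continuous hφ hc r
  · simp only [hH']
    exact ContDiffBump.convolution_tendsto_right_of_continuous hφ hc' r

variable {K : Set ℝ} {A B g : ℝ → ℝ}

lemma tendsto_setIntegral_mul_sq {G : ℕ → ℝ → ℝ} {C : ℝ} (hU : IsOpen U) (hK : IsCompact K)
    (hKU : K ⊆ U) (hA : ContinuousOn A U) (hG : ∀ j, MemCc 0 K (G j)) (hC : ∀ j r, |G j r| ≤ C)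
    (hlim : ∀ r, Tendsto (G · r) atTop (𝓝 (g r))) :
    Tendsto (fun j => ∫ r in U, A r * G j r ^ 2) atTop (𝓝 (∫ r in U, A r * g r ^ 2)) := by
  refine tendsto_integral_of_dominated_convergence (K.indicator fun r => |A r| * C ^ 2)
    (fun j => ?_) ?_ (fun j => .of_forall fun r => ?_)
    (.of_forall fun r => ((hlim r).pow 2).const_mul (A r))
  · exact (hA.mul ((hG j).contDiff.continuous.pow 2).continuousOn).aestronglyMeasurable
      hU.measurableSet
  · exact ((((hA.mono hKU).abs.mul continuousOn_const).integrableOn_compact hK).integrable_indicator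
      hK.measurableSet).restrict
  · by_cases hr : r ∈ K
    · rw [Set.indicator_of_mem hr, norm_mul, norm_pow, Real.norm_eq_abs, Real.norm_eq_abs]
      gcongr
      exact hC j r
    · simp [Set.indicator_of_notMem hr, (hG j).eq_zero_of_notMem hr]

lemma setIntegral_mul_sq_le_of_forall_smooth (hU : IsOpen U) (hA : ContinuousOn A U)
    (hB : ContinuousOn B U)
    (hAB : ∀ h, MemCc ∞ U h → ∫ r in U, A r * h r ^ 2 ≤ ∫ r in U, B r * deriv h r ^ 2)
    (hh : MemCc 1 U h) : ∫ r in U, A r * h r ^ 2 ≤ ∫ r in U, B r * deriv h r ^ 2 := by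
  obtain ⟨H, K, C, hK, hKU, hH, hC, hlim⟩ := hh.exists_smooth_approx hU
  refine le_of_tendsto_of_tendsto'
    (tendsto_setIntegral_mul_sq hU hK hKU hA (fun j => (hH j).of_le zero_le) (fun j r => (hC j r).1)
      fun r => (hlim r).1)
    (tendsto_setIntegral_mul_sq hU hK hKU hB (fun j => (hH j).deriv (by simp))
      (fun j r => (hC j r).2) fun r => (hlim r).2)
    fun j => hAB _ ((hH j).mono hKU)

lemma MemCc.setIntegral_deriv_mul_eq_neg (hU : IsOpen U) (hA : ContDiffOn ℝ 1 A U)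
    (hh : MemCc 1 U h) : ∫ r in U, _root_.deriv A r * h r = -∫ r in U, A r * _root_.deriv h r := by
  have hdA_h := hh.integrable_mul_left (μ := volume.restrict U) hU
    (hA.continuousOn_deriv_of_isOpen hU le_rfl)
  have hAh' := (hh.deriv (l := 0) (by simp)).integrable_mul_left (μ := volume.restrict U) hU
    hA.continuousOn
  rw [eq_neg_iff_add_eq_zero, ← integral_add hdA_h hAh',
    ← (hh.mul_left hU hA).setIntegral_deriv_eq_zero]
  refine setIntegral_congr_fun hU.measurableSet fun r hr => ?_
  exact (((hA.differentiableOn one_ne_zero).differentiableAt (hU.mem_nhds hr)).hasDerivAt.mul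
    (hh.hasDerivAt one_ne_zero r)).deriv.symm

lemma deriv_eq_neg_of_forall_setIntegral_mul_deriv_eq (hU : IsOpen U) (hA : ContDiffOn ℝ 1 A U)
    (hB : ContinuousOn B U)
    (hAB : ∀ h, MemCc ∞ U h → ∫ r in U, A r * deriv h r = ∫ r in U, B r * h r) :
    Set.EqOn (deriv A) (-B) U := by
  have hA' : ContinuousOn (deriv A) U := hA.continuousOn_deriv_of_isOpen hU le_rfl
  have hsum : ContinuousOn (deriv A + B) U := hA'.add hB
  suffices hae : ∀ᵐ r, r ∈ U → (deriv A + B) r = 0 by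
    have hzero : Set.EqOn (deriv A + B) 0 U :=
      Measure.eqOn_open_of_ae_eq (μ := volume) ((ae_restrict_iff' hU.measurableSet).2 hae) hU hsum
        continuousOn_const
    exact fun r hr => eq_neg_of_add_eq_zero_left (hzero hr)
  refine hU.ae_eq_zero_of_integral_contDiff_smul_eq_zero
    (hsum.locallyIntegrableOn hU.measurableSet) fun h hh hc hs => ?_
  have hmem : MemCc ∞ U h := ⟨hh, hc, hs⟩
  have hdA_h := hmem.integrable_mul_left (μ := volume.restrict U) hU hA'
  have hBh := hmem.integrable_mul_left (μ := volume.restrict U) hU hB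
  calc ∫ r, h r • (deriv A + B) r
      = ∫ r in U, h r • (deriv A + B) r :=
        (setIntegral_eq_integral_of_forall_compl_eq_zero fun r hr => by
          rw [hmem.eq_zero_of_notMem hr, zero_smul]).symm
    _ = ∫ r in U, (deriv A r * h r + B r * h r) := by
        simp only [smul_eq_mul, Pi.add_apply, mul_comm (h _), add_mul]
    _ = 0 := by
        rw [integral_add hdA_h hBh, MemCc.setIntegral_deriv_mul_eq_neg hU hA (hmem.of_le (by simp)),
          hAB h hmem, neg_add_cancel]

end RealLine

section MeanCurvature

/-- The map `t ↦ t / √(1 + t²)`, which sends the slope of a radial profile to its flux in the mean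
curvature operator. -/
def mcFlux (t : ℝ) : ℝ := t / √(1 + t ^ 2)

/-- The derivative `(1 + t²)^(-3/2)` of `mcFlux`, which is the radial coefficient of the second
variation of the area. -/
def mcWeight (t : ℝ) : ℝ := 1 / √(1 + t ^ 2) ^ 3

lemma sqrt_one_add_sq_pos (t : ℝ) : 0 < √(1 + t ^ 2) := by positivity

lemma sq_sqrt_one_add_sq (t : ℝ) : √(1 + t ^ 2) ^ 2 = 1 + t ^ 2 := Real.sq_sqrt (by positivity)

lemma hasDerivAt_mcFlux (t : ℝ) : HasDerivAt mcFlux (mcWeight t) t := by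
  have hpos := sqrt_one_add_sq_pos t
  have hsq := sq_sqrt_one_add_sq t
  have hinner : HasDerivAt (fun s : ℝ => 1 + s ^ 2) (2 * t) t := by
    simpa using (hasDerivAt_pow 2 t).const_add 1
  refine ((hasDerivAt_id t).div (hinner.sqrt (by positivity)) hpos.ne').congr_deriv ?_
  rw [mcWeight, id]
  field_simp
  linear_combination hsq

lemma contDiff_mcFlux {k : WithTop ℕ∞} : ContDiff ℝ k mcFlux :=
  contDiff_id.div ((contDiff_const.add (contDiff_id.pow 2)).sqrt fun t => by positivity)
    fun t => (sqrt_one_add_sq_pos t).ne'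

lemma continuous_mcWeight : Continuous mcWeight :=
  continuous_const.div (by fun_prop) fun t => (pow_pos (sqrt_one_add_sq_pos t) 3).ne'

lemma mul_mcFlux_nonneg (t : ℝ) : 0 ≤ t * mcFlux t := by
  rw [mcFlux, ← mul_div_assoc, ← pow_two]
  positivity

lemma abs_le_mul_mcFlux_add_one (t : ℝ) : |t| ≤ t * mcFlux t + 1 := by
  have hpos := sqrt_one_add_sq_pos t
  have hflux : t * mcFlux t + 1 = √(1 + t ^ 2) + (1 - 1 / √(1 + t ^ 2)) := by
    rw [mcFlux]
    field_simp
    linear_combination - sq_sqrt_one_add_sq t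
  have hone : 1 ≤ √(1 + t ^ 2) := Real.one_le_sqrt.2 (by linarith [sq_nonneg t])
  have habs : |t| ≤ √(1 + t ^ 2) := Real.abs_le_sqrt (by linarith)
  linarith [(div_le_one hpos).2 hone]

lemma mcWeight_mul_sq_le_one (t : ℝ) : mcWeight t * t ^ 2 ≤ 1 := by
  have := sqrt_one_add_sq_pos t
  have hone : 1 ≤ √(1 + t ^ 2) := Real.one_le_sqrt.2 (by linarith [sq_nonneg t])
  rw [mcWeight, one_div_mul_eq_div, div_le_one (by positivity)]
  calc t ^ 2 ≤ √(1 + t ^ 2) ^ 2 := by linarith [sq_sqrt_one_add_sq t]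
    _ ≤ √(1 + t ^ 2) ^ 3 := pow_le_pow_right₀ hone (by norm_num)

lemma pow_mul_abs_le {d : ℕ} (hd : 1 ≤ d) {r ρ : ℝ} (hr : 0 < r) (hrρ : r ≤ ρ) (t : ℝ) :
    r ^ d * |t| ≤ ρ ^ 2 * (d * r ^ d / r ^ 2 * (t * mcFlux t)) + ρ ^ d := by
  have hflux := mul_mcFlux_nonneg t
  have hscale : 1 ≤ d * (ρ / r) ^ 2 :=
    one_le_mul_of_one_le_of_one_le (by exact_mod_cast hd) (one_le_pow₀ ((one_le_div hr).2 hrρ))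
  calc r ^ d * |t| ≤ r ^ d * (1 * (t * mcFlux t) + 1) := by
        rw [one_mul]
        gcongr
        exact abs_le_mul_mcFlux_add_one t
    _ ≤ r ^ d * (d * (ρ / r) ^ 2 * (t * mcFlux t)) + ρ ^ d := by
        rw [mul_add, mul_one]
        gcongr
    _ = _ := by field_simp

end MeanCurvature

section RadialFunctions

variable {E : Type*} [NormedAddCommGroup E] {R : ℝ}

lemma contDiffOn_of_comp_norm [NormedSpace ℝ E] [Nontrivial E] {k : WithTop ℕ∞} {u : E → ℝ}
    {g : ℝ → ℝ} (hu : ContDiffOn ℝ k u (ball 0 R \ {0})) (hg : ∀ x ∈ ball (0 : E) R, u x = g ‖x‖) :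
    ContDiffOn ℝ k g (Set.Ioo 0 R) := by
  obtain ⟨e, he⟩ := exists_norm_eq E zero_le_one
  have hnorm : ∀ r ∈ Set.Ioo 0 R, ‖r • e‖ = r := fun r hr => by
    rw [norm_smul, he, mul_one, Real.norm_of_nonneg hr.1.le]
  have hmem : ∀ r ∈ Set.Ioo 0 R, r • e ∈ ball (0 : E) R := fun r hr => by
    rw [mem_ball_zero_iff, hnorm r hr]
    exact hr.2
  have hne : ∀ r ∈ Set.Ioo 0 R, r • e ≠ 0 := fun r hr => by
    rw [← norm_ne_zero_iff, hnorm r hr]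
    exact hr.1.ne'
  have hray : ContDiffOn ℝ k (fun r => u (r • e)) (Set.Ioo 0 R) :=
    hu.comp (by fun_prop) fun r hr => ⟨hmem r hr, hne r hr⟩
  exact hray.congr fun r hr => by rw [hg _ (hmem r hr), hnorm r hr]

lemma setIntegral_norm_preimage [NormedSpace ℝ E] [Nontrivial E] [FiniteDimensional ℝ E]
    [MeasurableSpace E] [BorelSpace E] (μ : Measure E) [μ.IsAddHaarMeasure] {T : Set ℝ}
    (hT : MeasurableSet T) {F : E → ℝ} {φ : ℝ → ℝ} (hF : ∀ x, x ≠ 0 → ‖x‖ ∈ T → F x = φ ‖x‖) :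
    ∫ x in norm ⁻¹' T, F x ∂μ = Module.finrank ℝ E * μ.real (ball 0 1) *
      ∫ r in Set.Ioi 0 ∩ T, r ^ (Module.finrank ℝ E - 1) * φ r := by
  have hT' : MeasurableSet (norm ⁻¹' T : Set E) := measurable_norm hT
  have hne : ∀ᵐ x ∂μ, x ≠ 0 := by simp [ae_iff]
  calc ∫ x in norm ⁻¹' T, F x ∂μ = ∫ x in norm ⁻¹' T, φ ‖x‖ ∂μ :=
        setIntegral_congr_ae hT' (hne.mono hF)
    _ = ∫ x, T.indicator φ ‖x‖ ∂μ := (integral_indicator hT').symm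
    _ = _ := by
        rw [integral_fun_norm_addHaar μ, ← setIntegral_indicator hT, nsmul_eq_mul, smul_eq_mul,
          mul_assoc]
        simp only [Set.indicator_mul_right, smul_eq_mul]

variable [InnerProductSpace ℝ E] {k : WithTop ℕ∞} {h g : ℝ → ℝ} {x : E}

lemma MemCc.comp_norm [FiniteDimensional ℝ E] (hh : MemCc k (Set.Ioo 0 R) h) :
    MemCc k (ball (0 : E) R) (fun x => h ‖x‖) := by
  have hK : norm ⁻¹' tsupport h ⊆ ball (0 : E) R := fun x hx =>
    mem_ball_zero_iff.2 (hh.tsupport_subset hx).2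
  have := FiniteDimensional.proper_real E
  refine MemCc.of_contDiffAt (isCompact_of_isClosed_isBounded
    ((isClosed_tsupport h).preimage continuous_norm) (isBounded_ball.subset hK)) hK
    (fun x hx => subset_tsupport h hx) fun x hx => ?_
  exact hh.contDiff.contDiffAt.comp x
    (contDiffAt_norm ℝ (norm_pos_iff.1 (hh.tsupport_subset hx).1))

lemma hasGradientAt_comp_norm [CompleteSpace E] {h' : ℝ} (hx : x ≠ 0) (hh : HasDerivAt h h' ‖x‖) :
    HasGradientAt (fun y => h ‖y‖) ((h' / ‖x‖) • x) x := by
  have hx₀ : 0 < ‖x‖ := norm_pos_iff.2 hx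
  have hsq : HasFDerivAt (fun y : E => ‖y‖ ^ 2) (2 • innerSL ℝ x) x :=
    (hasStrictFDerivAt_norm_sq x).hasFDerivAt
  have hnorm : HasFDerivAt (norm : E → ℝ) ((1 / (2 * √(‖x‖ ^ 2))) • 2 • innerSL ℝ x) x := by
    simpa only [Real.sqrt_sq (norm_nonneg _)] using hsq.sqrt (by positivity)
  refine (hh.comp_hasFDerivAt x hnorm).congr_fderiv ?_
  ext y
  simp [Real.sqrt_sq hx₀.le]
  field_simp

lemma norm_div_norm_smul (a : ℝ) (hx : x ≠ 0) : ‖(a / ‖x‖) • x‖ = |a| := by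
  rw [norm_smul, norm_div, norm_norm, div_mul_cancel₀ _ (norm_ne_zero_iff.2 hx), Real.norm_eq_abs]

lemma inner_div_norm_smul (a b : ℝ) (hx : x ≠ 0) : ⟪(a / ‖x‖) • x, (b / ‖x‖) • x⟫ = a * b := by
  have := norm_ne_zero_iff.2 hx
  rw [real_inner_smul_left, real_inner_smul_right, real_inner_self_eq_norm_sq]
  field_simp

lemma inner_div_sqrt_eq_mcFlux_mul (a b : ℝ) (hx : x ≠ 0) :
    ⟪(a / ‖x‖) • x, (b / ‖x‖) • x⟫ / √(1 + ‖(a / ‖x‖) • x‖ ^ 2) = mcFlux a * b := by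
  rw [inner_div_norm_smul a b hx, norm_div_norm_smul a hx, sq_abs, mcFlux, mul_div_right_comm]

lemma secondVariation_eq_mcWeight_mul (a b : ℝ) (hx : x ≠ 0) :
    ‖(b / ‖x‖) • x‖ ^ 2 / √(1 + ‖(a / ‖x‖) • x‖ ^ 2)
      - ⟪(a / ‖x‖) • x, (b / ‖x‖) • x⟫ ^ 2 / (1 + ‖(a / ‖x‖) • x‖ ^ 2) ^ ((3 : ℝ) / 2) =
      mcWeight a * b ^ 2 := by
  have hpow : (1 + a ^ 2) ^ ((3 : ℝ) / 2) = √(1 + a ^ 2) ^ 3 := by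
    rw [Real.sqrt_eq_rpow, ← Real.rpow_mul_natCast (by positivity)]
    norm_num
  have := sqrt_one_add_sq_pos a
  rw [inner_div_norm_smul a b hx, norm_div_norm_smul a hx, norm_div_norm_smul b hx, sq_abs, sq_abs,
    hpow, mcWeight]
  field_simp
  linear_combination b ^ 2 * sq_sqrt_one_add_sq a

end RadialFunctions

section RadialStability

open scoped ContDiff

variable {d : ℕ} {R : ℝ} {f g η : ℝ → ℝ}

/-- `x ↦ g ‖x‖` is a stable solution of `div(∇u/√(1+|∇u|²)) = -f(u)` in the punctured ball of radius
`R` in dimension `d + 1`, tested against radial functions only and written in polar coordinates. -/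
structure IsRadialStable (d : ℕ) (R : ℝ) (f g : ℝ → ℝ) : Prop where
  contDiff : ContDiff ℝ 1 f
  contDiffOn : ContDiffOn ℝ 2 g (Set.Ioo 0 R)
  weak : ∀ h, MemCc ∞ (Set.Ioo 0 R) h →
    ∫ r in Set.Ioo 0 R, r ^ d * mcFlux (deriv g r) * deriv h r =
      ∫ r in Set.Ioo 0 R, r ^ d * f (g r) * h r
  stable : ∀ h, MemCc ∞ (Set.Ioo 0 R) h →
    ∫ r in Set.Ioo 0 R, r ^ d * deriv f (g r) * h r ^ 2 ≤
      ∫ r in Set.Ioo 0 R, r ^ d * mcWeight (deriv g r) * deriv h r ^ 2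

lemma hasDerivAt_pow_div (d : ℕ) {r : ℝ} (hr : r ≠ 0) :
    HasDerivAt (fun s : ℝ => s ^ d) (d * r ^ d / r) r := by
  refine (hasDerivAt_pow d r).congr_deriv ?_
  cases d with
  | zero => simp
  | succ d => field_simp; simp [pow_succ]

namespace IsRadialStable

lemma contDiffOn_deriv (H : IsRadialStable d R f g) : ContDiffOn ℝ 1 (deriv g) (Set.Ioo 0 R) :=
  H.contDiffOn.deriv_of_isOpen isOpen_Ioo (by norm_num)

lemma hasDerivAt (H : IsRadialStable d R f g) {r : ℝ} (hr : r ∈ Set.Ioo 0 R) :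
    HasDerivAt g (deriv g r) r :=
  ((H.contDiffOn.differentiableOn two_ne_zero).differentiableAt
    (isOpen_Ioo.mem_nhds hr)).hasDerivAt

lemma hasDerivAt_deriv (H : IsRadialStable d R f g) {r : ℝ} (hr : r ∈ Set.Ioo 0 R) :
    HasDerivAt (deriv g) (deriv (deriv g) r) r :=
  ((H.contDiffOn_deriv.differentiableOn one_ne_zero).differentiableAt
    (isOpen_Ioo.mem_nhds hr)).hasDerivAt

lemma contDiffOn_comp (H : IsRadialStable d R f g) :
    ContDiffOn ℝ 1 (fun r => f (g r)) (Set.Ioo 0 R) :=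
  H.contDiff.comp_contDiffOn (H.contDiffOn.of_le one_le_two)

lemma contDiffOn_mcFlux (H : IsRadialStable d R f g) :
    ContDiffOn ℝ 1 (fun r => mcFlux (deriv g r)) (Set.Ioo 0 R) :=
  contDiff_mcFlux.comp_contDiffOn H.contDiffOn_deriv

lemma continuousOn_mcWeight (H : IsRadialStable d R f g) :
    ContinuousOn (fun r => r ^ d * mcWeight (deriv g r)) (Set.Ioo 0 R) :=
  (continuousOn_pow d).mul (continuous_mcWeight.comp_continuousOn H.contDiffOn_deriv.continuousOn)

lemma continuousOn_deriv_comp (H : IsRadialStable d R f g) :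
    ContinuousOn (fun r => r ^ d * deriv f (g r)) (Set.Ioo 0 R) :=
  (continuousOn_pow d).mul
    ((H.contDiff.continuous_deriv le_rfl).comp_continuousOn H.contDiffOn.continuousOn)

lemma continuousOn_mul_mcFlux (H : IsRadialStable d R f g) :
    ContinuousOn (fun r => d * r ^ d / r ^ 2 * (deriv g r * mcFlux (deriv g r)))
      (Set.Ioo 0 R) :=
  ((continuousOn_const.mul (continuousOn_pow d)).div (continuousOn_pow 2)
    fun _ hr => pow_ne_zero 2 hr.1.ne').mul
      (H.contDiffOn_deriv.continuousOn.mul H.contDiffOn_mcFlux.continuousOn)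

lemma mcWeight_mul_deriv_deriv (H : IsRadialStable d R f g) {r : ℝ} (hr : r ∈ Set.Ioo 0 R) :
    mcWeight (deriv g r) * deriv (deriv g) r = -(d * (mcFlux (deriv g r) / r) + f (g r)) := by
  have hr₀ : r ≠ 0 := hr.1.ne'
  have hode := deriv_eq_neg_of_forall_setIntegral_mul_deriv_eq isOpen_Ioo
    ((contDiff_fun_id.pow d).contDiffOn.mul H.contDiffOn_mcFlux)
    ((continuousOn_pow d).fun_mul H.contDiffOn_comp.continuousOn) H.weak hr
  have hflux : HasDerivAt (fun s => s ^ d * mcFlux (deriv g s))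
      (d * r ^ d / r * mcFlux (deriv g r) +
        r ^ d * (mcWeight (deriv g r) * deriv (deriv g) r)) r :=
    (hasDerivAt_pow_div d hr₀).mul
      ((hasDerivAt_mcFlux (deriv g r)).comp r (H.hasDerivAt_deriv hr))
  rw [hflux.deriv, Pi.neg_apply] at hode
  refine mul_left_cancel₀ (pow_ne_zero d hr₀) ?_
  linear_combination hode

lemma stable_of_memCc_one (H : IsRadialStable d R f g) {h : ℝ → ℝ} (hh : MemCc 1 (Set.Ioo 0 R) h) :
    ∫ r in Set.Ioo 0 R, r ^ d * deriv f (g r) * h r ^ 2 ≤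
      ∫ r in Set.Ioo 0 R, r ^ d * mcWeight (deriv g r) * deriv h r ^ 2 :=
  setIntegral_mul_sq_le_of_forall_smooth isOpen_Ioo H.continuousOn_deriv_comp
    H.continuousOn_mcWeight H.stable hh

lemma hasDerivAt_energy (H : IsRadialStable d R f g) (hη : MemCc 1 (Set.Ioo 0 R) η) {r : ℝ}
    (hr : r ∈ Set.Ioo 0 R) :
    HasDerivAt (fun s => s ^ d * -(d * (mcFlux (deriv g s) / s) + f (g s)) * deriv g s * η s ^ 2)
      (d * r ^ d / r ^ 2 * (deriv g r * mcFlux (deriv g r)) * η r ^ 2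
        - r ^ d * deriv f (g r) * (deriv g r * η r) ^ 2
        + (r ^ d * mcWeight (deriv g r) * (deriv (fun s => deriv g s * η s) r) ^ 2
        - r ^ d * (mcWeight (deriv g r) * deriv g r ^ 2) * deriv η r ^ 2)) r := by
  have hr₀ : r ≠ 0 := hr.1.ne'
  have hp := H.hasDerivAt_deriv hr
  have hη' := hη.hasDerivAt one_ne_zero r
  have hflux : HasDerivAt (fun s => mcFlux (deriv g s) / s)
      (mcWeight (deriv g r) * deriv (deriv g) r / r - mcFlux (deriv g r) / r ^ 2) r := by
    refine (((hasDerivAt_mcFlux _).comp r hp).fun_div (hasDerivAt_id r) hr₀).congr_deriv ?_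
    simp only [id, Function.comp_apply]
    field_simp
  have hf : HasDerivAt (fun s => f (g s)) (deriv f (g r) * deriv g r) r :=
    (H.contDiff.differentiable one_ne_zero _).hasDerivAt.comp r (H.hasDerivAt hr)
  refine ((((hasDerivAt_pow_div d hr₀).fun_mul
    (((hflux.const_mul (d : ℝ)).fun_add hf).fun_neg)).fun_mul hp).fun_mul
    (hη'.fun_pow 2)).congr_deriv ?_
  rw [(hp.fun_mul hη').deriv]
  push_cast
  linear_combination (-(r ^ d) * (d * deriv g r * η r ^ 2 / r + deriv (deriv g) r * η r ^ 2
    + 2 * deriv g r * η r * deriv η r)) * H.mcWeight_mul_deriv_deriv hr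

/-- Stability is applied to the test function `g' η`. -/
lemma setIntegral_hardy_le (H : IsRadialStable d R f g) (hη : MemCc 1 (Set.Ioo 0 R) η) :
    ∫ r in Set.Ioo 0 R, d * r ^ d / r ^ 2 * (deriv g r * mcFlux (deriv g r)) * η r ^ 2 ≤
      ∫ r in Set.Ioo 0 R, r ^ d * (mcWeight (deriv g r) * deriv g r ^ 2) * deriv η r ^ 2 := by
  set U := Set.Ioo 0 R
  have hp := H.contDiffOn_deriv
  have hr₀ : ∀ r ∈ U, r ≠ 0 := fun r hr => hr.1.ne'
  have hpη : MemCc 1 U (fun r => deriv g r * η r) := hη.mul_left isOpen_Ioo hp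
  have henergy : MemCc 1 U (fun r =>
      r ^ d * -(d * (mcFlux (deriv g r) / r) + f (g r)) * deriv g r * η r ^ 2) :=
    hη.sq.mul_left isOpen_Ioo (((contDiffOn_id.pow d).mul
      ((contDiffOn_const.mul (H.contDiffOn_mcFlux.div contDiffOn_id hr₀)).add
        H.contDiffOn_comp).neg).mul hp)
  have hη' : MemCc 0 U (deriv η) := hη.deriv (by simp)
  have hpη' : MemCc 0 U (deriv fun r => deriv g r * η r) := hpη.deriv (by simp)
  have hc : ContinuousOn (fun r => r ^ d * (mcWeight (deriv g r) * deriv g r ^ 2)) U :=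
    (H.continuousOn_mcWeight.mul (hp.continuousOn.pow 2)).congr fun r _ => (mul_assoc _ _ _).symm
  have hi₁ := hη.sq.integrable_mul_left (μ := volume.restrict U) isOpen_Ioo
    H.continuousOn_mul_mcFlux
  have hi₂ := hη'.sq.integrable_mul_left (μ := volume.restrict U) isOpen_Ioo hc
  have hi₃ := hpη.sq.integrable_mul_left (μ := volume.restrict U) isOpen_Ioo
    H.continuousOn_deriv_comp
  have hi₄ := hpη'.sq.integrable_mul_left (μ := volume.restrict U) isOpen_Ioo
    H.continuousOn_mcWeight
  have hzero := henergy.setIntegral_deriv_eq_zero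
  rw [setIntegral_congr_fun measurableSet_Ioo fun r hr => (H.hasDerivAt_energy hη hr).deriv,
    integral_add (hi₁.sub' hi₃) (hi₄.sub' hi₂), integral_sub hi₁ hi₃, integral_sub hi₄ hi₂] at hzero
  linarith [H.stable_of_memCc_one hpη]

end IsRadialStable

lemma exists_memCc_cutoff : ∃ D : ℝ, ∀ ρ > 0, ∃ η : ℝ → ℝ, MemCc ∞ (Set.Ioo 0 (2 * ρ)) η ∧
    (∀ r ∈ Set.Icc (ρ / 2) ρ, η r = 1) ∧ ∀ r, |deriv η r| ≤ D / ρ := by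
  let ψ : ContDiffBump (3 / 4 : ℝ) := ⟨1 / 4, 1 / 2, by norm_num, by norm_num⟩
  have hψ : ContDiff ℝ ∞ ψ := ψ.contDiff
  obtain ⟨D, hD⟩ := ψ.hasCompactSupport.deriv.exists_bound_of_continuous
    (hψ.continuous_deriv (by simp))
  refine ⟨D, fun ρ hρ => ⟨fun r => ψ (ρ⁻¹ * r), ?_, fun r hr => ψ.one_of_mem_closedBall ?_,
    fun r => ?_⟩⟩
  · refine MemCc.of_contDiffAt (K := Set.Icc (ρ / 4) (5 * ρ / 4)) isCompact_Icc
      (fun r hr => ⟨by linarith [hr.1], by linarith [hr.2]⟩) (fun r hr => ?_)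
      fun _ _ => by fun_prop
    have hmem : ρ⁻¹ * r ∈ ball (3 / 4 : ℝ) (1 / 2) := ψ.support_eq ▸ hr
    rw [Real.ball_eq_Ioo, inv_mul_eq_div, Set.mem_Ioo, lt_div_iff₀ hρ, div_lt_iff₀ hρ] at hmem
    constructor <;> linarith [hmem.1, hmem.2]
  · rw [Real.closedBall_eq_Icc, inv_mul_eq_div, Set.mem_Icc, le_div_iff₀ hρ, div_le_iff₀ hρ]
    constructor <;> linarith [hr.1, hr.2]
  · rw [deriv_comp_mul_left, smul_eq_mul, abs_mul, abs_of_pos (inv_pos.2 hρ), inv_mul_eq_div]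
    gcongr
    exact hD _

namespace IsRadialStable

lemma sq_mul_setIntegral_cutoff_le (H : IsRadialStable d R f g) {ρ D : ℝ} (hρ : 0 < ρ)
    (hR : 2 * ρ ≤ R) (hη : MemCc 1 (Set.Ioo 0 (2 * ρ)) η) (hD : ∀ r, |deriv η r| ≤ D / ρ) :
    ρ ^ 2 * ∫ r in Set.Ioo 0 R, d * r ^ d / r ^ 2 * (deriv g r * mcFlux (deriv g r)) * η r ^ 2 ≤
      2 ^ (d + 1) * D ^ 2 * ρ ^ (d + 1) := by
  have hsub : Set.Ioo 0 (2 * ρ) ⊆ Set.Ioo 0 R := Set.Ioo_subset_Ioo_right hR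
  have hη' : MemCc 0 (Set.Ioo 0 (2 * ρ)) (deriv η) := hη.deriv (by simp)
  have hbound : ∀ r ∈ Set.Ioo 0 (2 * ρ),
      ‖r ^ d * (mcWeight (deriv g r) * deriv g r ^ 2) * deriv η r ^ 2‖ ≤
        (2 * ρ) ^ d * 1 * (D / ρ) ^ 2 := by
    intro r hr
    have hW : 0 ≤ mcWeight (deriv g r) * deriv g r ^ 2 := by
      rw [mcWeight]
      positivity
    rw [norm_mul, norm_mul, norm_pow, norm_pow, Real.norm_of_nonneg hr.1.le,
      Real.norm_of_nonneg hW, Real.norm_eq_abs]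
    gcongr
    exacts [hr.1.le, hr.2.le, mcWeight_mul_sq_le_one _, hD r]
  have hint : ∫ r in Set.Ioo 0 R, r ^ d * (mcWeight (deriv g r) * deriv g r ^ 2) * deriv η r ^ 2 ≤
      (2 * ρ) ^ d * 1 * (D / ρ) ^ 2 * (2 * ρ) := by
    rw [setIntegral_eq_of_subset_of_forall_sdiff_eq_zero measurableSet_Ioo hsub
      fun r hr => by rw [hη'.eq_zero_of_notMem hr.2, zero_pow two_ne_zero, mul_zero]]
    refine (Real.le_norm_self _).trans
      ((norm_setIntegral_le_of_norm_le_const measure_Ioo_lt_top hbound).trans_eq ?_)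
    rw [Real.volume_real_Ioo_of_le (by positivity), sub_zero]
  calc _ ≤ ρ ^ 2 * ((2 * ρ) ^ d * 1 * (D / ρ) ^ 2 * (2 * ρ)) := by
        gcongr
        exact (H.setIntegral_hardy_le (hη.mono hsub)).trans hint
    _ = 2 ^ (d + 1) * D ^ 2 * ρ ^ (d + 1) := by field_simp; ring

lemma setIntegral_annulus_le_add (H : IsRadialStable d R f g) (hd : 1 ≤ d) {ρ : ℝ} (hρ : 0 < ρ)
    (hR : 2 * ρ ≤ R) (hη : MemCc 1 (Set.Ioo 0 (2 * ρ)) η)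
    (hη_one : ∀ r ∈ Set.Icc (ρ / 2) ρ, η r = 1) :
    ∫ r in Set.Ico (ρ / 2) ρ, r ^ d * |deriv g r| ≤
      ρ ^ 2 * (∫ r in Set.Ioo 0 R, d * r ^ d / r ^ 2 * (deriv g r * mcFlux (deriv g r)) * η r ^ 2)
        + ρ ^ (d + 1) := by
  set J := fun r => d * r ^ d / r ^ 2 * (deriv g r * mcFlux (deriv g r)) * η r ^ 2
  have hsubI : Set.Icc (ρ / 2) ρ ⊆ Set.Ioo 0 R := fun r hr =>
    ⟨(half_pos hρ).trans_le hr.1, by linarith [hr.2]⟩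
  have hsub : Set.Ico (ρ / 2) ρ ⊆ Set.Ioo 0 R := Set.Ico_subset_Icc_self.trans hsubI
  have hp : IntegrableOn (fun r => r ^ d * |deriv g r|) (Set.Ico (ρ / 2) ρ) :=
    (((continuousOn_pow d).mul
      (H.contDiffOn_deriv.continuousOn.mono hsubI).abs).integrableOn_compact
        isCompact_Icc).mono_set Set.Ico_subset_Icc_self
  have hJ : IntegrableOn J (Set.Ioo 0 R) :=
    ((hη.mono (Set.Ioo_subset_Ioo_right hR)).sq).integrable_mul_left isOpen_Ioo
      H.continuousOn_mul_mcFlux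
  have hJ_nonneg : ∀ r ∈ Set.Ioo 0 R, 0 ≤ J r := fun r hr => by
    have := mul_mcFlux_nonneg (deriv g r)
    have := hr.1
    positivity
  have hconst : IntegrableOn (fun _ => ρ ^ d) (Set.Ico (ρ / 2) ρ) :=
    integrableOn_const measure_Ico_lt_top.ne
  have hJ_int : IntegrableOn (fun r => ρ ^ 2 * J r) (Set.Ico (ρ / 2) ρ) :=
    (hJ.mono_set hsub).const_mul _
  calc ∫ r in Set.Ico (ρ / 2) ρ, r ^ d * |deriv g r|
      ≤ ∫ r in Set.Ico (ρ / 2) ρ, (ρ ^ 2 * J r + ρ ^ d) := by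
        refine setIntegral_mono_on hp (hJ_int.add hconst) measurableSet_Ico fun r hr => ?_
        simp only [J, hη_one r (Set.Ico_subset_Icc_self hr), one_pow, mul_one]
        exact pow_mul_abs_le hd (hsub hr).1 hr.2.le _
    _ = ρ ^ 2 * (∫ r in Set.Ico (ρ / 2) ρ, J r) + ρ / 2 * ρ ^ d := by
        rw [integral_add hJ_int hconst, integral_const_mul, setIntegral_const,
          Real.volume_real_Ico_of_le (half_le_self hρ.le), smul_eq_mul, sub_half]
    _ ≤ ρ ^ 2 * (∫ r in Set.Ioo 0 R, J r) + ρ ^ (d + 1) := by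
        rw [pow_succ' ρ d]
        gcongr
        · exact (ae_restrict_iff' measurableSet_Ioo).2 (.of_forall hJ_nonneg)
        · exact half_le_self hρ.le

end IsRadialStable

lemma exists_setIntegral_annulus_le {d : ℕ} (hd : 1 ≤ d) : ∃ C > 0, ∀ {R : ℝ} {f g : ℝ → ℝ},
    IsRadialStable d R f g → ∀ ρ > 0, 2 * ρ ≤ R →
      ∫ r in Set.Ico (ρ / 2) ρ, r ^ d * |deriv g r| ≤ C * ρ ^ (d + 1) := by
  obtain ⟨D, hD⟩ := exists_memCc_cutoff
  refine ⟨2 ^ (d + 1) * D ^ 2 + 1, by positivity, fun {R f g} H ρ hρ hR => ?_⟩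
  obtain ⟨η, hη, hη_one, hη'⟩ := hD ρ hρ
  have hη₁ : MemCc 1 (Set.Ioo 0 (2 * ρ)) η := hη.of_le (by simp)
  linarith [H.setIntegral_annulus_le_add hd hρ hR hη₁ hη_one,
    H.sq_mul_setIntegral_cutoff_le hρ hR hη₁ hη']

end RadialStability

section StableSolutions

variable {n : ℕ} {R : ℝ} {f g : ℝ → ℝ} {u : Euc n → ℝ}

lemma gradient_eq_of_comp_norm (hg' : ContDiffOn ℝ 1 g (Set.Ioo 0 R))
    (hg : ∀ x ∈ ball (0 : Euc n) R, u x = g ‖x‖) {x : Euc n} (hx : x ∈ ball 0 R) (hx₀ : x ≠ 0) :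
    gradient u x = (deriv g ‖x‖ / ‖x‖) • x := by
  have hr : ‖x‖ ∈ Set.Ioo 0 R := ⟨norm_pos_iff.2 hx₀, mem_ball_zero_iff.1 hx⟩
  have hderiv : HasDerivAt g (deriv g ‖x‖) ‖x‖ :=
    ((hg'.differentiableOn one_ne_zero).differentiableAt (isOpen_Ioo.mem_nhds hr)).hasDerivAt
  refine ((hasGradientAt_comp_norm hx₀ hderiv).congr_of_eventuallyEq ?_).gradient
  filter_upwards [isOpen_ball.mem_nhds hx] with y hy using hg y hy

lemma setIntegral_ball_eq [NeZero n] {F : Euc n → ℝ} {φ : ℝ → ℝ}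
    (hF : ∀ x ∈ ball 0 R, x ≠ 0 → F x = φ ‖x‖) :
    ∫ x in ball 0 R, F x = n * volume.real (ball (0 : Euc n) 1) *
      ∫ r in Set.Ioo 0 R, r ^ (n - 1) * φ r := by
  have hball : ball (0 : Euc n) R = norm ⁻¹' Set.Iio R := by
    ext
    simp
  rw [hball, setIntegral_norm_preimage volume measurableSet_Iio fun x hx₀ hx =>
    hF x (mem_ball_zero_iff.2 hx) hx₀, finrank_euclideanSpace_fin, Set.Ioi_inter_Iio]

lemma natCast_mul_volume_ball_pos (n : ℕ) [NeZero n] :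
    0 < n * volume.real (ball (0 : Euc n) 1) :=
  mul_pos (Nat.cast_pos.2 (NeZero.pos n))
    (ENNReal.toReal_pos (measure_ball_pos _ _ one_pos).ne' measure_ball_lt_top.ne)

lemma IsStableSolution.isRadialStable [NeZero n] (hf : ContDiff ℝ 1 f)
    (hu : ContDiffOn ℝ 2 u (ball 0 R \ {0})) (hst : IsStableSolution (ball 0 R) f u)
    (hg : ∀ x ∈ ball (0 : Euc n) R, u x = g ‖x‖) : IsRadialStable (n - 1) R f g := by
  have hg' : ContDiffOn ℝ 2 g (Set.Ioo 0 R) := contDiffOn_of_comp_norm hu hg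
  have hgrad_u : ∀ x ∈ ball (0 : Euc n) R, x ≠ 0 → gradient u x = (deriv g ‖x‖ / ‖x‖) • x :=
    fun x hx hx₀ => gradient_eq_of_comp_norm (hg'.of_le one_le_two) hg hx hx₀
  have hgrad : ∀ {h : ℝ → ℝ}, MemCc (⊤ : ℕ∞) (Set.Ioo 0 R) h → ∀ x : Euc n, x ≠ 0 →
      gradient (fun y : Euc n => h ‖y‖) x = (deriv h ‖x‖ / ‖x‖) • x := fun hh x hx₀ =>
    (hasGradientAt_comp_norm hx₀ (hh.hasDerivAt (by simp) _)).gradient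
  have htest : ∀ {h : ℝ → ℝ}, MemCc (⊤ : ℕ∞) (Set.Ioo 0 R) h →
      IsTestFun (ball (0 : Euc n) R) fun x => h ‖x‖ := fun hh =>
    ⟨hh.comp_norm.contDiff, hh.comp_norm.hasCompactSupport, hh.comp_norm.tsupport_subset⟩
  have hc : 0 < n * volume.real (ball (0 : Euc n) 1) := natCast_mul_volume_ball_pos n
  refine ⟨hf, hg', fun h hh => ?_, fun h hh => ?_⟩
  · have hweak := hst.1.2.2.2 _ (htest hh)
    rw [setIntegral_ball_eq (φ := fun r => mcFlux (deriv g r) * deriv h r) fun x hx hx₀ => by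
        rw [hgrad_u x hx hx₀, hgrad hh x hx₀, inner_div_sqrt_eq_mcFlux_mul _ _ hx₀],
      setIntegral_ball_eq (φ := fun r => f (g r) * h r) fun x hx _ => by rw [hg x hx]] at hweak
    simpa only [mul_assoc] using mul_left_cancel₀ hc.ne' hweak
  · have hstable := hst.2.2 _ (htest hh)
    rw [setIntegral_ball_eq (φ := fun r => deriv f (g r) * h r ^ 2) fun x hx _ => by rw [hg x hx],
      setIntegral_ball_eq (φ := fun r => mcWeight (deriv g r) * deriv h r ^ 2) fun x hx hx₀ => by
        rw [hgrad_u x hx hx₀, hgrad hh x hx₀, secondVariation_eq_mcWeight_mul _ _ hx₀]]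
      at hstable
    simpa only [mul_assoc] using le_of_mul_le_mul_left hstable hc

end StableSolutions

section Dyadic

lemma nonpos_of_le_half {Φ : ℝ → ℝ} {ρ : ℝ} (hρ : 0 < ρ) (hΦ : ∀ s ∈ Set.Ioc 0 ρ, Φ s ≤ Φ (s / 2))
    (hlim : Tendsto Φ (𝓝[>] 0) (𝓝 0)) : Φ ρ ≤ 0 := by
  have hpos (k : ℕ) : 0 < ρ / 2 ^ k := by positivity
  have hscale : Tendsto (fun k : ℕ => ρ / 2 ^ k) atTop (𝓝[>] 0) :=
    tendsto_nhdsWithin_iff.2 ⟨tendsto_const_nhds.div_atTop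
      (tendsto_pow_atTop_atTop_of_one_lt one_lt_two), .of_forall hpos⟩
  have hmono : Monotone fun k : ℕ => Φ (ρ / 2 ^ k) := monotone_nat_of_le_succ fun k => by
    rw [pow_succ, ← div_div]
    exact hΦ _ ⟨hpos k, div_le_self hρ.le (one_le_pow₀ one_le_two)⟩
  simpa using hmono.ge_of_tendsto (hlim.comp hscale) 0

lemma le_two_mul_pow_of_sub_half_le {F : ℝ → ℝ} {C ρ : ℝ} {n : ℕ} (hn : n ≠ 0) (hC : 0 ≤ C)
    (hρ : 0 < ρ) (hF : ∀ s ∈ Set.Ioc 0 ρ, F s - F (s / 2) ≤ C * s ^ n)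
    (hlim : Tendsto F (𝓝[>] 0) (𝓝 0)) : F ρ ≤ 2 * C * ρ ^ n := by
  have hpow : Tendsto (fun s : ℝ => 2 * C * s ^ n) (𝓝[>] 0) (𝓝 0) :=
    (Continuous.tendsto' (by fun_prop) 0 0 (by simp [hn])).mono_left nhdsWithin_le_nhds
  suffices h : ∀ s ∈ Set.Ioc 0 ρ, F s - 2 * C * s ^ n ≤ F (s / 2) - 2 * C * (s / 2) ^ n from
    sub_nonpos.1 (nonpos_of_le_half (Φ := fun s => F s - 2 * C * s ^ n) hρ h
      (by simpa only [sub_zero] using hlim.sub hpow))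
  intro s hs
  have hhalf : (s / 2) ^ n ≤ s ^ n / 2 := by
    rw [div_pow]
    have := hs.1
    gcongr
    exact le_self_pow₀ one_le_two hn
  linarith [hF s hs, mul_le_mul_of_nonneg_left hhalf hC]

lemma tendsto_setIntegral_ball_zero {E : Type*} [NormedAddCommGroup E] [NormedSpace ℝ E]
    [FiniteDimensional ℝ E] [Nontrivial E] [MeasurableSpace E] [BorelSpace E] {μ : Measure E}
    [μ.IsAddHaarMeasure] {F : E → ℝ} {R : ℝ} (hR : 0 < R) (hF : IntegrableOn F (ball 0 R) μ) :
    Tendsto (fun s => ∫ x in ball 0 s, F x ∂μ) (𝓝[>] 0) (𝓝 0) := by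
  have hvol : Tendsto (fun s : ℝ => ENNReal.ofReal (s ^ Module.finrank ℝ E) * μ (ball 0 1))
      (𝓝[>] 0) (𝓝 0) := by
    have hpow : Tendsto (fun s : ℝ => s ^ Module.finrank ℝ E) (𝓝[>] 0) (𝓝 0) :=
      ((continuous_pow _).tendsto' 0 0 (zero_pow Module.finrank_pos.ne')).mono_left
        nhdsWithin_le_nhds
    simpa using ENNReal.Tendsto.mul_const (ENNReal.tendsto_ofReal hpow)
      (.inr (measure_ball_lt_top (μ := μ) (x := (0 : E)) (r := 1)).ne)
  have hball : Tendsto (μ.restrict (ball 0 R) ∘ ball (0 : E)) (𝓝[>] 0) (𝓝 0) := by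
    refine tendsto_of_tendsto_of_tendsto_of_le_of_le' tendsto_const_nhds hvol
      (.of_forall fun _ => zero_le) ?_
    filter_upwards [self_mem_nhdsWithin] with s hs
    exact (Measure.restrict_apply_le _ _).trans_eq (μ.addHaar_ball 0 (le_of_lt hs))
  refine (hF.tendsto_setIntegral_nhds_zero hball).congr' ?_
  filter_upwards [Ioo_mem_nhdsGT hR] with s hs
  rw [Measure.restrict_restrict_of_subset (ball_subset_ball hs.2.le)]

end Dyadic

section GradientDecay

lemma exists_setIntegral_ball_sub_le {n : ℕ} (hn : 2 ≤ n) : ∃ C > 0, ∀ {R : ℝ} {f g : ℝ → ℝ}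
    {u : Euc n → ℝ}, ContDiff ℝ 1 f → ContDiffOn ℝ 2 u (ball 0 R \ {0}) →
    IsStableSolution (ball 0 R) f u → (∀ x ∈ ball (0 : Euc n) R, u x = g ‖x‖) →
    ∀ s > 0, 2 * s ≤ R → IntegrableOn (fun x => ‖gradient u x‖) (ball 0 s) →
      (∫ x in ball (0 : Euc n) s, ‖gradient u x‖) - ∫ x in ball (0 : Euc n) (s / 2), ‖gradient u x‖
        ≤ C * s ^ n := by
  have : NeZero n := ⟨by lia⟩
  obtain ⟨C, hC, hannulus⟩ := exists_setIntegral_annulus_le (d := n - 1) (by lia)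
  have hc := natCast_mul_volume_ball_pos n
  refine ⟨_, mul_pos hc hC, fun {R f g u} hf hu hst hg s hs hsR hint => ?_⟩
  have H := hst.isRadialStable hf hu hg
  have hdiff : ball (0 : Euc n) s \ ball 0 (s / 2) = norm ⁻¹' Set.Ico (s / 2) s := by
    ext
    simp [and_comm]
  have hgrad : ∀ x : Euc n, x ≠ 0 → ‖x‖ ∈ Set.Ico (s / 2) s → ‖gradient u x‖ = |deriv g ‖x‖| :=
    fun x hx₀ hx => by
      rw [gradient_eq_of_comp_norm (H.contDiffOn.of_le one_le_two) hg
        (mem_ball_zero_iff.2 (by linarith [hx.2])) hx₀, norm_div_norm_smul _ hx₀]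
  have hIco : Set.Ioi 0 ∩ Set.Ico (s / 2) s = Set.Ico (s / 2) s :=
    Set.inter_eq_right.2 fun r hr => (half_pos hs).trans_le hr.1
  rw [← setIntegral_sdiff measurableSet_ball hint (ball_subset_ball (half_le_self hs.le)), hdiff,
    setIntegral_norm_preimage volume (φ := fun r => |deriv g r|) measurableSet_Ico hgrad,
    finrank_euclideanSpace_fin, hIco, mul_assoc _ C]
  gcongr
  simpa only [Nat.sub_add_cancel (one_le_two.trans hn)] using hannulus H s hs hsR

theorem stmt_2_general (n : ℕ) (hn : 2 ≤ n) :
    ∃ K > (0 : ℝ), ∀ (f : ℝ → ℝ) (u : Euc n → ℝ) (g : ℝ → ℝ) (R : ℝ),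
      ContDiff ℝ 1 f →
      ContDiffOn ℝ 2 u (ball 0 R \ {0}) →
      IsStableSolution (ball 0 R) f u →
      (∀ x ∈ ball (0 : Euc n) R, u x = g ‖x‖) →
      ∀ ρ : ℝ, 0 < ρ → 2 * ρ ≤ R →
        ∫ x in ball (0 : Euc n) ρ, ‖gradient u x‖ ≤ K * ρ ^ n := by
  have : NeZero n := ⟨by lia⟩
  obtain ⟨C, hC, hsub⟩ := exists_setIntegral_ball_sub_le hn
  refine ⟨2 * C, by positivity, fun f u g R hf hu hst hg ρ hρ hR => ?_⟩
  have hint : IntegrableOn (fun x => ‖gradient u x‖) (ball (0 : Euc n) ρ) :=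
    (hst.1.2.1.integrableOn_compact_subset (closedBall_subset_ball (by linarith))
      (isCompact_closedBall 0 ρ)).mono_set ball_subset_closedBall
  exact le_two_mul_pow_of_sub_half_le (NeZero.ne n) hC.le hρ
    (fun s hs => hsub hf hu hst hg s hs.1 (by linarith [hs.2])
      (hint.mono_set (ball_subset_ball hs.2)))
    (tendsto_setIntegral_ball_zero hρ hint)

end GradientDecay

/-- **Proposition (Decay estimate for radial stable solutions).**
Let `n ≥ 2`, `f ∈ C¹(ℝ)`, and let `u ∈ W^{3,1}_loc(B₂)` be a stable solution of
`div(∇u/√(1+|∇u|²)) = -f(u)` in `B₂ ⊂ ℝⁿ`, radially symmetric with respect to the origin.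
Then for every `α ∈ (0,1)` there is `K = K(n,α) > 0` with
`∫_{B_ρ(0)} |∇u| ≤ K ρ^{n-1+α}` for all `0 < ρ < 1`. -/
theorem stmt_2 (n : ℕ) (hn : 2 ≤ n) (α : ℝ) (hα : α ∈ Set.Ioo (0:ℝ) 1) :
    ∃ K > (0:ℝ), ∀ (f : ℝ → ℝ) (u : Euc n → ℝ) (g : ℝ → ℝ),
      ContDiff ℝ 1 f →
      ContDiffOn ℝ 3 u (ball (0 : Euc n) 2) →
      IsStableSolution (ball (0 : Euc n) 2) f u →
      (∀ x : Euc n, u x = g ‖x‖) →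
      ∀ ρ : ℝ, 0 < ρ → ρ < 1 →
        ∫ x in ball (0 : Euc n) ρ, ‖gradient u x‖ ≤ K * ρ ^ ((n : ℝ) - 1 + α) := by
  obtain ⟨K, hK, hbound⟩ := stmt_2_general n hn
  refine ⟨K, hK, fun f u g hf hu hst hg ρ h0 h1 => ?_⟩
  have hu' : ContDiffOn ℝ 2 u (ball 0 2 \ {0}) := (hu.of_le (by norm_num)).mono Set.sdiff_subset
  calc ∫ x in ball (0 : Euc n) ρ, ‖gradient u x‖ ≤ K * ρ ^ n :=
        hbound f u g 2 hf hu' hst (fun x _ => hg x) ρ h0 (by linarith)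
    _ ≤ K * ρ ^ ((n : ℝ) - 1 + α) := by
        rw [← Real.rpow_natCast]
        gcongr _ * ?_
        exact Real.rpow_le_rpow_of_exponent_ge h0 h1.le (by linarith [hα.2])
end
end

section
/- Let n ≥ 2, f ∈ C¹(ℝ), and let u be a W^{3,1}_loc(ℝⁿ) stable solution of div(∇u/√(1+|∇u|²)) = −f(u) in ℝⁿ. Define q_n := −1 if 2 ≤ n ≤ 10, and q_n := −n/2 + √(n−1) + 1 if n ≥ 11. If u is nonconstant, then there exist c > 0 and R₀ > 2 such that the average ⨍_{B_{2R}∖B_R} |∇u|² dx ≥ c R^{2q_n} for all R ≥ R₀. -/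
open MeasureTheory Metric Real Filter Asymptotics Bornology
open scoped RealInnerProductSpace Topology

noncomputable section

/-!
Testing the stability inequality with `ξ = ⟨x - x₀, ∇u⟩ η`, where `⟨x - x₀, ∇u⟩` is the rate of
change of `u` under dilations about `x₀`, and subtracting the dilated equation tested with
`⟨x - x₀, ∇u⟩ η²`, leaves an integrand whose second derivatives of `u` form a radial derivative.
One more integration by parts removes them, so a quadratic form in `(η, ∇η)` with coefficients
depending only on `x - x₀` and `∇u` has nonnegative integral.

For the weight `η = (1 + |x - x₀|²)^(-a/4)` with `0 ≤ a ≤ n - 2` and `(a/2 - 1)² ≤ n - 1` this form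
is nonpositive pointwise, and it is negative at a point `x` with `∇u(x) = x - x₀ ≠ 0`. Cutting `η`
off in the annulus `B_{2R} ∖ B_R` costs at most `C R^(-a) ∫ |∇u|²` over that annulus, so this cost
is bounded below by a positive constant. The largest admissible exponent gives `a - n = 2 q_n`.
-/

section Mollification

open scoped Convolution

variable {E F G : Type*} [NormedAddCommGroup E] [NormedSpace ℝ E] [FiniteDimensional ℝ E]
  [MeasurableSpace E] [BorelSpace E]
  [NormedAddCommGroup F] [NormedSpace ℝ F] [NormedAddCommGroup G] [NormedSpace ℝ G]

variable (E) in
/-- A standard sequence of bump functions at the origin of `E`, the `k`-th one being supported in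
the ball of radius `1 / (k + 1)`. -/
def shrinkingBump (k : ℕ) : ContDiffBump (0 : E) where
  rIn := 1 / (2 * ((k : ℝ) + 1))
  rOut := 1 / ((k : ℝ) + 1)
  rIn_pos := by positivity
  rIn_lt_rOut := one_div_lt_one_div_of_lt (by positivity) (by linarith [k.cast_nonneg (α := ℝ)])

/-- The mollification of `g` at scale `1 / (k + 1)`: its convolution with the normalized
`k`-th shrinking bump function. -/
def mollify (μ : Measure E) (k : ℕ) (g : E → F) : E → F :=
  (shrinkingBump E k).normed μ ⋆[ContinuousLinearMap.lsmul ℝ ℝ, μ] g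

variable (μ : Measure E) [μ.IsAddHaarMeasure]

lemma contDiff_mollify (k : ℕ) {g : E → F} (hg : Continuous g) :
    ContDiff ℝ (⊤ : ℕ∞) (mollify μ k g) :=
  (shrinkingBump E k).hasCompactSupport_normed.contDiff_convolution_left _
    (shrinkingBump E k).contDiff_normed hg.locallyIntegrable

lemma hasCompactSupport_mollify (k : ℕ) {g : E → F} (hg : HasCompactSupport g) :
    HasCompactSupport (mollify μ k g) :=
  (shrinkingBump E k).hasCompactSupport_normed.convolution _ hg

lemma fderiv_mollify (k : ℕ) {g : E → F} (hg : ContDiff ℝ 1 g) (hgc : HasCompactSupport g)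
    (x : E) : fderiv ℝ (mollify μ k g) x = mollify μ k (fderiv ℝ g) x :=
  (hgc.hasFDerivAt_convolution_right (ContinuousLinearMap.lsmul ℝ ℝ)
    (shrinkingBump E k).continuous_normed.locallyIntegrable hg x).fderiv

variable [CompleteSpace F]

lemma norm_mollify_le (k : ℕ) {g : E → F} (hg : Continuous g) {x : E} {C : ℝ} (hC : 0 ≤ C)
    (h : ∀ y ∈ ball x 1, ‖g y‖ ≤ C) : ‖mollify μ k g x‖ ≤ C := by
  have hrOut : (shrinkingBump E k).rOut ≤ 1 :=
    div_le_one_of_le₀ (by linarith [k.cast_nonneg (α := ℝ)]) (by positivity)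
  rw [← dist_zero_right]
  refine dist_convolution_le hC (shrinkingBump E k).support_normed_eq.subset
    (shrinkingBump E k).nonneg_normed (shrinkingBump E k).integral_normed
    hg.aestronglyMeasurable fun y hy => ?_
  rw [dist_zero_right]
  exact h y (ball_subset_ball hrOut hy)

lemma mollify_eq_zero (k : ℕ) {g : E → F} (hg : Continuous g) {x : E}
    (hx : x ∉ cthickening 1 (tsupport g)) : mollify μ k g x = 0 := by
  refine norm_le_zero_iff.1 (norm_mollify_le μ k hg le_rfl fun y hy => ?_)
  have hy' : y ∉ tsupport g := fun hmem =>
    hx (mem_cthickening_of_dist_le x y 1 _ hmem (by rw [dist_comm]; exact (mem_ball.1 hy).le))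
  rw [image_eq_zero_of_notMem_tsupport hy', norm_zero]

lemma tendsto_mollify {g : E → F} (hg : Continuous g) (x : E) :
    Tendsto (fun k => mollify μ k g x) atTop (𝓝 (g x)) :=
  ContDiffBump.convolution_tendsto_right_of_continuous
    tendsto_one_div_add_atTop_nhds_zero_nat hg x

theorem tendsto_integral_mollify [FiniteDimensional ℝ F] {ψ : E → F} (hψ : ContDiff ℝ 1 ψ)
    (hψc : HasCompactSupport ψ) {B : E → F → (E →L[ℝ] F) → G}
    (hB : Continuous fun z : E × F × (E →L[ℝ] F) => B z.1 z.2.1 z.2.2) (hB₀ : ∀ x, B x 0 0 = 0) :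
    Tendsto (fun k => ∫ x, B x (mollify μ k ψ x) (fderiv ℝ (mollify μ k ψ) x) ∂μ) atTop
      (𝓝 (∫ x, B x (ψ x) (fderiv ℝ ψ x) ∂μ)) := by
  simp only [fderiv_mollify μ _ hψ hψc]
  have hDψ : Continuous (fderiv ℝ ψ) := hψ.continuous_fderiv one_ne_zero
  obtain ⟨C₀, hC₀⟩ := hψ.continuous.bounded_above_of_compact_support hψc
  obtain ⟨C₁, hC₁⟩ := hDψ.bounded_above_of_compact_support (hψc.fderiv ℝ)
  set K := cthickening 1 (tsupport ψ)
  have hK : IsCompact K := IsCompact.cthickening hψc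
  obtain ⟨M, hM⟩ := (hK.prod ((isCompact_closedBall (0 : F) C₀).prod
    (isCompact_closedBall (0 : E →L[ℝ] F) C₁))).exists_bound_of_continuousOn hB.continuousOn
  refine tendsto_integral_of_dominated_convergence (K.indicator fun _ => M) (fun k => ?_) ?_
    (fun k => .of_forall fun x => ?_) (.of_forall fun x => ?_)
  · have hcont := hB.comp (continuous_id.prodMk
      ((contDiff_mollify μ k hψ.continuous).continuous.prodMk
        (contDiff_mollify μ k hDψ).continuous))
    exact hcont.aestronglyMeasurable
  · exact (integrable_indicator_iff hK.measurableSet).2 (integrableOn_const hK.measure_lt_top.ne)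
  · by_cases hx : x ∈ K
    · rw [Set.indicator_of_mem hx]
      refine hM (x, mollify μ k ψ x, mollify μ k (fderiv ℝ ψ) x) ⟨hx, ?_, ?_⟩
      · exact mem_closedBall_zero_iff.2
          (norm_mollify_le μ k hψ.continuous ((norm_nonneg _).trans (hC₀ 0)) fun y _ => hC₀ y)
      · exact mem_closedBall_zero_iff.2
          (norm_mollify_le μ k hDψ ((norm_nonneg _).trans (hC₁ 0)) fun y _ => hC₁ y)
    · have hx' : x ∉ cthickening 1 (tsupport (fderiv ℝ ψ)) :=
        fun h => hx (cthickening_subset_of_subset 1 (tsupport_fderiv_subset ℝ) h)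
      rw [Set.indicator_of_notMem hx, mollify_eq_zero μ k hψ.continuous hx,
        mollify_eq_zero μ k hDψ hx', hB₀, norm_zero]
  · exact (hB.tendsto (x, ψ x, fderiv ℝ ψ x)).comp (tendsto_const_nhds.prodMk_nhds
      ((tendsto_mollify μ hψ.continuous x).prodMk_nhds (tendsto_mollify μ hDψ x)))

end Mollification

section Dilation

lemma integrable_of_eq_zero_off_tsupport {X F G : Type*} [TopologicalSpace X] [T2Space X]
    [MeasurableSpace X] [OpensMeasurableSpace X] [NormedAddCommGroup F] [NormedAddCommGroup G]
    (μ : Measure X) [IsFiniteMeasureOnCompacts μ] {g : X → F} (hgc : HasCompactSupport g)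
    {H : X → G} (hH : Continuous H) (h : ∀ x ∉ tsupport g, H x = 0) : Integrable H μ :=
  hH.integrable_of_hasCompactSupport (.intro hgc h)

variable {E F G H : Type*} [NormedAddCommGroup E] [NormedSpace ℝ E]
  [NormedAddCommGroup F] [NormedSpace ℝ F]
  [NormedAddCommGroup G] [NormedSpace ℝ G] [NormedAddCommGroup H] [NormedSpace ℝ H]

lemma fderiv_fderiv_sub_add_mul {ψ : E → ℝ} (hψ : ContDiff ℝ 2 ψ) (x₀ x v : E) (c : ℝ) :
    fderiv ℝ (fun y => fderiv ℝ ψ y (y - x₀) + c * ψ y) x v =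
      fderiv ℝ (fderiv ℝ ψ) x (x - x₀) v + (1 + c) * fderiv ℝ ψ x v := by
  have hsymm : IsSymmSndFDerivAt ℝ ψ x := hψ.contDiffAt.isSymmSndFDerivAt (by simp)
  have hDψ : ContDiff ℝ 1 (fderiv ℝ ψ) := hψ.fderiv_right (by norm_num)
  have hderiv : HasFDerivAt (fun y => fderiv ℝ ψ y (y - x₀) + c * ψ y) _ x :=
    ((hDψ.differentiable one_ne_zero x).hasFDerivAt.clm_apply
      ((hasFDerivAt_id x).sub_const x₀)).add
        ((hψ.differentiable two_ne_zero x).hasFDerivAt.const_mul c)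
  rw [hderiv.fderiv, ← hsymm.eq v (x - x₀)]
  simp
  ring

variable [FiniteDimensional ℝ E] [MeasurableSpace E] [BorelSpace E] (μ : Measure E)
  [μ.IsAddHaarMeasure]

theorem integral_fderiv_sub_eq_neg_finrank_smul_integral (x₀ : E) {g : E → F}
    (hg : ContDiff ℝ 1 g) (hgc : HasCompactSupport g) :
    ∫ x, fderiv ℝ g x (x - x₀) ∂μ = -(Module.finrank ℝ E : ℝ) • ∫ x, g x ∂μ := by
  let b := Module.finBasis ℝ E
  let coord (i : Fin (Module.finrank ℝ E)) : E →L[ℝ] ℝ := (b.coord i).toContinuousLinearMap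
  have fderiv_coord (i x) : fderiv ℝ (fun y => coord i (y - x₀)) x = coord i :=
    ((coord i).hasFDerivAt.comp x ((hasFDerivAt_id x).sub_const x₀)).fderiv
  have integrable_coord (i) : Integrable (fun x => coord i (x - x₀) • fderiv ℝ g x (b i)) μ :=
    integrable_of_eq_zero_off_tsupport μ hgc (by fun_prop)
      fun x hx => by simp [fderiv_of_notMem_tsupport ℝ hx]
  have integral_coord (i) :
      ∫ x, coord i (x - x₀) • fderiv ℝ g x (b i) ∂μ = -∫ x, g x ∂μ := by
    have coord_self : coord i (b i) = 1 := by simp [coord]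
    rw [integral_smul_fderiv_eq_neg_fderiv_smul_of_integrable _ (integrable_coord i)]
    · simp only [fderiv_coord, coord_self, one_smul]
    · exact integrable_of_eq_zero_off_tsupport μ hgc (by fun_prop)
        fun x hx => by simp [image_eq_zero_of_notMem_tsupport hx]
    · exact fun x _ => by fun_prop
    · exact fun x _ => hg.differentiable one_ne_zero x
    · simpa only [fderiv_coord, coord_self, one_smul] using
        hg.continuous.integrable_of_hasCompactSupport hgc
  have fderiv_eq_sum (x) :
      fderiv ℝ g x (x - x₀) = ∑ i, coord i (x - x₀) • fderiv ℝ g x (b i) := by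
    conv_lhs => rw [← b.sum_repr (x - x₀)]
    simp [coord]
  simp only [fderiv_eq_sum]
  rw [integral_finsetSum _ fun i _ => integrable_coord i]
  simp only [integral_coord]
  simp [Nat.cast_smul_eq_nsmul]

theorem integral_bilin_fderiv_sub_left (x₀ : E) (L : F →L[ℝ] G →L[ℝ] H) {a : E → F} {b : E → G}
    (ha : ContDiff ℝ 1 a) (hac : HasCompactSupport a) (hb : ContDiff ℝ 1 b) :
    ∫ x, L (fderiv ℝ a x (x - x₀)) (b x) ∂μ =
      -(Module.finrank ℝ E : ℝ) • (∫ x, L (a x) (b x) ∂μ)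
        - ∫ x, L (a x) (fderiv ℝ b x (x - x₀)) ∂μ := by
  have fderiv_bilin (x) : fderiv ℝ (fun y => L (a y) (b y)) x (x - x₀) =
      L (a x) (fderiv ℝ b x (x - x₀)) + L (fderiv ℝ a x (x - x₀)) (b x) := by
    rw [L.fderiv_of_bilinear (ha.differentiable one_ne_zero x) (hb.differentiable one_ne_zero x)]
    rfl
  have integral_radial := integral_fderiv_sub_eq_neg_finrank_smul_integral μ x₀
    (g := fun x => L (a x) (b x)) (L.isBoundedBilinearMap.contDiff.comp (ha.prodMk hb))
    (.intro hac fun x hx => by simp [image_eq_zero_of_notMem_tsupport hx])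
  simp only [fderiv_bilin] at integral_radial
  rw [← integral_radial]
  rw [integral_add, add_sub_cancel_left]
  · exact integrable_of_eq_zero_off_tsupport μ hac (by fun_prop)
      fun x hx => by simp [image_eq_zero_of_notMem_tsupport hx]
  · exact integrable_of_eq_zero_off_tsupport μ hac (by fun_prop)
      fun x hx => by simp [fderiv_of_notMem_tsupport ℝ hx]

/-- The equation `-div V = g` in the weak sense with respect to the measure `μ`, tested against
smooth compactly supported functions. -/
def IsWeakNegDivergence (μ : Measure E) (V : E → E) (g : E → ℝ) : Prop :=
  ∀ ψ : E → ℝ, ContDiff ℝ (⊤ : ℕ∞) ψ → HasCompactSupport ψ →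
    ∫ x, fderiv ℝ ψ x (V x) ∂μ = ∫ x, g x * ψ x ∂μ

variable {μ} {V : E → E} {g : E → ℝ} {ψ : E → ℝ}

lemma IsWeakNegDivergence.dilation_smooth (h : IsWeakNegDivergence μ V g) (hV : ContDiff ℝ 1 V)
    (hg : ContDiff ℝ 1 g) (x₀ : E) (hψ : ContDiff ℝ (⊤ : ℕ∞) ψ) (hψc : HasCompactSupport ψ) :
    ∫ x, fderiv ℝ ψ x (fderiv ℝ V x (x - x₀) - V x) ∂μ = ∫ x, fderiv ℝ g x (x - x₀) * ψ x ∂μ := by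
  have hDψ : ContDiff ℝ (⊤ : ℕ∞) (fderiv ℝ ψ) := hψ.fderiv_right (by simp)
  have hψ₂ : ContDiff ℝ 2 ψ := contDiff_infty.1 hψ 2
  have hψ₁ : ContDiff ℝ 1 ψ := hψ.of_le (by simp)
  have hDψ₁ : ContDiff ℝ 1 (fderiv ℝ ψ) := hDψ.of_le (by simp)
  let n : ℝ := Module.finrank ℝ E
  have integrable {k : E → ℝ} (hk : Continuous k) (h₀ : ∀ x ∉ tsupport ψ, k x = 0) :
      Integrable k μ := integrable_of_eq_zero_off_tsupport μ hψc hk h₀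
  -- The test function is minus the adjoint of the dilation derivative, applied to `ψ`.
  have htested := h (fun y => fderiv ℝ ψ y (y - x₀) + n * ψ y)
    ((hDψ.clm_apply (contDiff_id.sub contDiff_const)).add (contDiff_const.mul hψ))
    (.intro hψc fun x hx => by
      simp [image_eq_zero_of_notMem_tsupport hx, fderiv_of_notMem_tsupport ℝ hx])
  have hV_parts := integral_bilin_fderiv_sub_left μ x₀ (.id ℝ (E →L[ℝ] ℝ)) hDψ₁
    (hψc.fderiv ℝ) hV
  have hg_parts := integral_bilin_fderiv_sub_left μ x₀ (.mul ℝ ℝ) hψ₁ hψc hg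
  simp only [fderiv_fderiv_sub_add_mul hψ₂, mul_add (g _),
    mul_left_comm (g _), map_sub (fderiv ℝ ψ _) (fderiv ℝ V _ _)] at htested ⊢
  simp only [ContinuousLinearMap.id_apply, ContinuousLinearMap.mul_apply', smul_eq_mul,
    mul_comm (ψ _), mul_comm _ (g _)] at hV_parts hg_parts
  rw [integral_add, integral_add, integral_const_mul, integral_const_mul, hV_parts, hg_parts]
    at htested
  · rw [integral_sub]
    · linear_combination -htested
    all_goals
      refine integrable (by fun_prop) fun x hx => ?_
      simp [fderiv_of_notMem_tsupport ℝ hx]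
  all_goals
    refine integrable (by fun_prop) fun x hx => ?_
    have hDDψ₀ : fderiv ℝ (fderiv ℝ ψ) x = 0 :=
      fderiv_of_notMem_tsupport ℝ fun h => hx (tsupport_fderiv_subset ℝ h)
    simp [image_eq_zero_of_notMem_tsupport hx, fderiv_of_notMem_tsupport ℝ hx, hDDψ₀]

theorem IsWeakNegDivergence.dilation (h : IsWeakNegDivergence μ V g) (hV : ContDiff ℝ 1 V)
    (hg : ContDiff ℝ 1 g) (x₀ : E) (hψ : ContDiff ℝ 1 ψ) (hψc : HasCompactSupport ψ) :
    ∫ x, fderiv ℝ ψ x (fderiv ℝ V x (x - x₀) - V x) ∂μ = ∫ x, fderiv ℝ g x (x - x₀) * ψ x ∂μ := by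
  have hleft := tendsto_integral_mollify μ hψ hψc
    (B := fun x _ T => T (fderiv ℝ V x (x - x₀) - V x)) (by fun_prop) (by simp)
  have hright := tendsto_integral_mollify μ hψ hψc
    (B := fun x r _ => fderiv ℝ g x (x - x₀) * r) (by fun_prop) (by simp)
  refine tendsto_nhds_unique hleft (hright.congr fun k => ?_)
  exact (h.dilation_smooth hV hg x₀ (contDiff_mollify μ k hψ.continuous)
    (hasCompactSupport_mollify μ k hψc)).symm

end Dilation

section Gradient

variable {E : Type*} [NormedAddCommGroup E] [InnerProductSpace ℝ E] [CompleteSpace E]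
  {u v : E → ℝ} {x : E}

lemma contDiff_gradient {m k : WithTop ℕ∞} (hu : ContDiff ℝ k u) (hmk : m + 1 ≤ k) :
    ContDiff ℝ m (gradient u) :=
  (InnerProductSpace.toDual ℝ E).symm.contDiff.comp (hu.fderiv_right hmk)

lemma continuous_gradient_s4 (hu : ContDiff ℝ 1 u) : Continuous (gradient u) :=
  (contDiff_gradient (m := 0) hu (by simp)).continuous

lemma gradient_eq_zero_of_notMem_tsupport (hx : x ∉ tsupport u) : gradient u x = 0 := by
  rw [gradient, fderiv_of_notMem_tsupport ℝ hx, map_zero]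

lemma gradient_mul (hu : DifferentiableAt ℝ u x) (hv : DifferentiableAt ℝ v x) :
    gradient (fun y => u y * v y) x = u x • gradient v x + v x • gradient u x := by
  rw [gradient, fderiv_fun_mul hu hv, map_add, map_smulₛₗ, map_smulₛₗ]
  rfl

lemma isSymmetric_fderiv_gradient (hu : ContDiff ℝ 2 u) (x : E) :
    (fderiv ℝ (gradient u) x : E →ₗ[ℝ] E).IsSymmetric := by
  have hsymm : IsSymmSndFDerivAt ℝ u x := hu.contDiffAt.isSymmSndFDerivAt (by simp)
  have hD : DifferentiableAt ℝ (fderiv ℝ u) x :=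
    (hu.fderiv_right (m := 1) (by norm_num)).differentiable one_ne_zero x
  have hgrad : DifferentiableAt ℝ (gradient u) x :=
    (contDiff_gradient (m := 1) hu (by norm_num)).differentiable one_ne_zero x
  have inner_fderiv_gradient (v w : E) :
      ⟪fderiv ℝ (gradient u) x v, w⟫ = fderiv ℝ (fderiv ℝ u) x v w := by
    have hinner := fderiv_inner_apply ℝ hgrad (differentiableAt_const w) v
    simp only [inner_gradient_left, fderiv_clm_apply hD (differentiableAt_const w)] at hinner
    simpa using hinner.symm
  intro v w
  change ⟪fderiv ℝ (gradient u) x v, w⟫ = ⟪v, fderiv ℝ (gradient u) x w⟫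
  rw [real_inner_comm _ v, inner_fderiv_gradient, inner_fderiv_gradient, hsymm.eq]

/-- The derivative of `u` in the direction `x - x₀`, that is, the rate of change of `u` under
dilations about `x₀`. -/
def radialDeriv (u : E → ℝ) (x₀ x : E) : ℝ := ⟪x - x₀, gradient u x⟫

lemma contDiff_radialDeriv {m k : WithTop ℕ∞} (hu : ContDiff ℝ k u) (hmk : m + 1 ≤ k) (x₀ : E) :
    ContDiff ℝ m (radialDeriv u x₀) :=
  (contDiff_id.sub contDiff_const).inner ℝ (contDiff_gradient hu hmk)

lemma gradient_radialDeriv (hu : ContDiff ℝ 2 u) (x₀ x : E) :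
    gradient (radialDeriv u x₀) x = gradient u x + fderiv ℝ (gradient u) x (x - x₀) := by
  have hgrad : ContDiff ℝ 1 (gradient u) := contDiff_gradient hu (by norm_num)
  have hderiv : HasFDerivAt (radialDeriv u x₀) _ x := ((hasFDerivAt_id x).sub_const x₀).inner ℝ
    (hgrad.differentiable one_ne_zero x).hasFDerivAt
  refine ext_inner_right ℝ fun w => ?_
  have hsymm := isSymmetric_fderiv_gradient hu x (x - x₀) w
  rw [inner_gradient_left, hderiv.fderiv, inner_add_left]
  simpa [real_inner_comm, add_comm] using hsymm.symm

end Gradient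

section DilationForm

variable {E : Type*} [NormedAddCommGroup E] [InnerProductSpace ℝ E]

/-- The integrand obtained by testing the second variation of an energy with flux `P` at `u` with
`ξ = ⟨x - x₀, ∇u⟩ η` and eliminating the second derivatives of `u`; here `p`, `X`, `e`, `h` stand
for `∇u`, `x - x₀`, `η`, `∇η`. -/
def dilationForm (P : E → E) (p X : E) (e : ℝ) (h : E) : ℝ :=
  ⟪X, p⟫ ^ 2 * ⟪fderiv ℝ P p h, h⟫ + 2 * ⟪X, p⟫ * e * ⟪fderiv ℝ P p p + P p, h⟫
    + e ^ 2 * (⟪fderiv ℝ P p p + P p, p⟫ - Module.finrank ℝ E * ⟪P p, p⟫)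
    - 2 * e * ⟪P p, p⟫ * ⟪X, h⟫

lemma dilationForm_eq_sub (P : E → E) {p : E}
    (hP : (fderiv ℝ P p : E →ₗ[ℝ] E).IsSymmetric) (X q : E) (e : ℝ) (h : E) :
    dilationForm P p X e h =
      ⟪fderiv ℝ P p (⟪X, p⟫ • h + e • (p + q)), ⟪X, p⟫ • h + e • (p + q)⟫
        - ⟪(2 * ⟪X, p⟫ * e) • h + e ^ 2 • (p + q), fderiv ℝ P p q - P p⟫
        - (2 * e * ⟪h, X⟫ * ⟪P p, p⟫ + e ^ 2 * ⟪fderiv ℝ P p p + P p, q⟫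
          + Module.finrank ℝ E * (e ^ 2 * ⟪P p, p⟫)) := by
  have symm (v w : E) : ⟪fderiv ℝ P p v, w⟫ = ⟪fderiv ℝ P p w, v⟫ :=
    (hP v w).trans (real_inner_comm _ _)
  simp only [dilationForm, map_add, map_smul, inner_add_left, inner_add_right, inner_sub_right,
    real_inner_smul_left, real_inner_smul_right, symm p h, symm q h, symm q p,
    real_inner_comm (fderiv ℝ P p _) _, real_inner_comm (P p) _, real_inner_comm X h]
  ring

lemma continuous_dilationForm {P : E → E} (hP : ContDiff ℝ 1 P) :
    Continuous fun z : E × E × ℝ × E => dilationForm P z.1 z.2.1 z.2.2.1 z.2.2.2 := by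
  have hPc : Continuous P := hP.continuous
  unfold dilationForm
  fun_prop

variable [FiniteDimensional ℝ E] {P : E → E} {u η : E → ℝ}

lemma fderiv_comp_gradient (hP : ContDiff ℝ 1 P) (hu : ContDiff ℝ 2 u) (x v : E) :
    fderiv ℝ (fun y => P (gradient u y)) x v =
      fderiv ℝ P (gradient u x) (fderiv ℝ (gradient u) x v) := by
  have hgrad : ContDiff ℝ 1 (gradient u) := contDiff_gradient hu (by norm_num)
  rw [fderiv_fun_comp x (hP.differentiable one_ne_zero _) (hgrad.differentiable one_ne_zero x)]
  rfl

lemma fderiv_inner_comp_gradient (hP : ContDiff ℝ 1 P) (hu : ContDiff ℝ 2 u) {x : E}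
    (hPs : (fderiv ℝ P (gradient u x) : E →ₗ[ℝ] E).IsSymmetric) (v : E) :
    fderiv ℝ (fun y => ⟪P (gradient u y), gradient u y⟫) x v =
      ⟪fderiv ℝ P (gradient u x) (gradient u x) + P (gradient u x), fderiv ℝ (gradient u) x v⟫ := by
  have hgrad : ContDiff ℝ 1 (gradient u) := contDiff_gradient hu (by norm_num)
  have hPgrad : ContDiff ℝ 1 fun y => P (gradient u y) := hP.comp hgrad
  rw [fderiv_inner_apply ℝ (hPgrad.differentiable one_ne_zero x)
    (hgrad.differentiable one_ne_zero x), fderiv_comp_gradient hP hu, inner_add_left, add_comm]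
  exact congrArg (· + _) ((hPs _ _).trans (real_inner_comm _ _))

lemma gradient_radialDeriv_mul (hu : ContDiff ℝ 2 u) (hη : ContDiff ℝ 1 η) (x₀ x : E) :
    gradient (fun y => radialDeriv u x₀ y * η y) x =
      radialDeriv u x₀ x • gradient η x
        + η x • (gradient u x + fderiv ℝ (gradient u) x (x - x₀)) := by
  rw [gradient_mul ((contDiff_radialDeriv (m := 1) hu (by norm_num) x₀).differentiable
    one_ne_zero x) (hη.differentiable one_ne_zero x), gradient_radialDeriv hu]

lemma dilationForm_eq (hP : ContDiff ℝ 1 P)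
    (hPs : ∀ p, (fderiv ℝ P p : E →ₗ[ℝ] E).IsSymmetric) (hu : ContDiff ℝ 2 u) (x₀ : E)
    (hη : ContDiff ℝ 1 η) (x : E) :
    dilationForm P (gradient u x) (x - x₀) (η x) (gradient η x) =
      ⟪fderiv ℝ P (gradient u x) (gradient (fun y => radialDeriv u x₀ y * η y) x),
          gradient (fun y => radialDeriv u x₀ y * η y) x⟫
        - fderiv ℝ (fun y => radialDeriv u x₀ y * η y ^ 2) x
          (fderiv ℝ (fun y => P (gradient u y)) x (x - x₀) - P (gradient u x))
        - (fderiv ℝ (fun y => η y ^ 2) x (x - x₀) * ⟪P (gradient u x), gradient u x⟫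
          + η x ^ 2 * fderiv ℝ (fun y => ⟪P (gradient u y), gradient u y⟫) x (x - x₀)
          + Module.finrank ℝ E * (η x ^ 2 * ⟪P (gradient u x), gradient u x⟫)) := by
  have gradient_sq : gradient (fun y => η y ^ 2) x = (2 * η x) • gradient η x := by
    have hηd := hη.differentiable one_ne_zero x
    simp only [sq, gradient_mul hηd hηd, two_mul, add_smul]
  rw [← inner_gradient_left, ← inner_gradient_left, gradient_radialDeriv_mul hu (hη.pow 2),
    gradient_radialDeriv_mul hu hη, gradient_sq, fderiv_comp_gradient hP hu,
    fderiv_inner_comp_gradient hP hu (hPs _),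
    dilationForm_eq_sub P (hPs _) _ (fderiv ℝ (gradient u) x (x - x₀)), smul_smul,
    real_inner_smul_left, radialDeriv]
  ring_nf

variable [MeasurableSpace E] [BorelSpace E] (μ : Measure E) [μ.IsAddHaarMeasure]

theorem integral_dilationForm (hP : ContDiff ℝ 1 P)
    (hPs : ∀ p, (fderiv ℝ P p : E →ₗ[ℝ] E).IsSymmetric) (hu : ContDiff ℝ 2 u) (x₀ : E)
    (hη : ContDiff ℝ 1 η) (hηc : HasCompactSupport η) :
    ∫ x, dilationForm P (gradient u x) (x - x₀) (η x) (gradient η x) ∂μ =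
      (∫ x, ⟪fderiv ℝ P (gradient u x) (gradient (fun y => radialDeriv u x₀ y * η y) x),
          gradient (fun y => radialDeriv u x₀ y * η y) x⟫ ∂μ)
        - ∫ x, fderiv ℝ (fun y => radialDeriv u x₀ y * η y ^ 2) x
          (fderiv ℝ (fun y => P (gradient u y)) x (x - x₀) - P (gradient u x)) ∂μ := by
  have hgrad : ContDiff ℝ 1 (gradient u) := contDiff_gradient hu (by norm_num)
  have hradial : ContDiff ℝ 1 (radialDeriv u x₀) := contDiff_radialDeriv hu (by norm_num) x₀
  have hPgrad : ContDiff ℝ 1 fun y => P (gradient u y) := hP.comp hgrad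
  have hG : ContDiff ℝ 1 fun y => ⟪P (gradient u y), gradient u y⟫ := hPgrad.inner ℝ hgrad
  have hη₂ : ContDiff ℝ 1 fun y => η y ^ 2 := hη.pow 2
  have hη₂supp : tsupport (fun y => η y ^ 2) ⊆ tsupport η :=
    tsupport_comp_subset (g := fun t : ℝ => t ^ 2) (by simp) η
  have hDG := hG.continuous_fderiv one_ne_zero
  have hDξ := continuous_gradient_s4 (hradial.mul hη)
  have integrable {k : E → ℝ} (hk : Continuous k) (h₀ : ∀ x ∉ tsupport η, k x = 0) :
      Integrable k μ := integrable_of_eq_zero_off_tsupport μ hηc hk h₀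
  have Dξ_eq_zero (x) (hx : x ∉ tsupport η) :
      gradient (fun y => radialDeriv u x₀ y * η y) x = 0 :=
    gradient_eq_zero_of_notMem_tsupport fun h => hx (tsupport_mul_subset_right h)
  have Dψ_eq_zero (x) (hx : x ∉ tsupport η) :
      fderiv ℝ (fun y => radialDeriv u x₀ y * η y ^ 2) x = 0 :=
    fderiv_of_notMem_tsupport ℝ fun h => hx (hη₂supp (tsupport_mul_subset_right h))
  have parts := integral_bilin_fderiv_sub_left μ x₀ (.mul ℝ ℝ) hη₂
    (hηc.mono' ((subset_tsupport _).trans hη₂supp)) hG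
  simp only [ContinuousLinearMap.mul_apply', smul_eq_mul] at parts
  simp only [dilationForm_eq hP hPs hu x₀ hη]
  rw [integral_sub, integral_sub, integral_add, integral_add, integral_const_mul, parts]
  · ring
  all_goals
    refine integrable (by fun_prop) fun x hx => ?_
    have hηx : η x = 0 := image_eq_zero_of_notMem_tsupport hx
    have hDη₂x : fderiv ℝ (fun y => η y ^ 2) x = 0 :=
      fderiv_of_notMem_tsupport ℝ fun h => hx (hη₂supp h)
    simp [Dξ_eq_zero x hx, Dψ_eq_zero x hx, hηx, hDη₂x]

lemma stability_contDiff_one {f : ℝ → ℝ} (hf : ContDiff ℝ 1 f) (hP : ContDiff ℝ 1 P)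
    (hu : ContDiff ℝ 1 u)
    (hstab : ∀ ξ : E → ℝ, ContDiff ℝ (⊤ : ℕ∞) ξ → HasCompactSupport ξ →
      ∫ x, deriv f (u x) * ξ x ^ 2 ∂μ ≤
        ∫ x, ⟪fderiv ℝ P (gradient u x) (gradient ξ x), gradient ξ x⟫ ∂μ)
    {ξ : E → ℝ} (hξ : ContDiff ℝ 1 ξ) (hξc : HasCompactSupport ξ) :
    ∫ x, deriv f (u x) * ξ x ^ 2 ∂μ ≤
      ∫ x, ⟪fderiv ℝ P (gradient u x) (gradient ξ x), gradient ξ x⟫ ∂μ := by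
  have hgrad := continuous_gradient_s4 hu
  have hleft := tendsto_integral_mollify μ hξ hξc (B := fun x r _ => deriv f (u x) * r ^ 2)
    (by fun_prop) (by simp)
  have hright := tendsto_integral_mollify μ hξ hξc
    (B := fun x _ T => ⟪fderiv ℝ P (gradient u x) ((InnerProductSpace.toDual ℝ E).symm T),
      (InnerProductSpace.toDual ℝ E).symm T⟫) (by fun_prop) (by simp)
  exact le_of_tendsto_of_tendsto' hleft hright fun k =>
    hstab _ (contDiff_mollify μ k hξ.continuous) (hasCompactSupport_mollify μ k hξc)

theorem integral_dilationForm_nonneg {f : ℝ → ℝ} (hf : ContDiff ℝ 1 f) (hP : ContDiff ℝ 1 P)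
    (hPs : ∀ p, (fderiv ℝ P p : E →ₗ[ℝ] E).IsSymmetric) (hu : ContDiff ℝ 2 u)
    (hweak : IsWeakNegDivergence μ (fun x => P (gradient u x)) (fun x => f (u x)))
    (hstab : ∀ ξ : E → ℝ, ContDiff ℝ (⊤ : ℕ∞) ξ → HasCompactSupport ξ →
      ∫ x, deriv f (u x) * ξ x ^ 2 ∂μ ≤
        ∫ x, ⟪fderiv ℝ P (gradient u x) (gradient ξ x), gradient ξ x⟫ ∂μ)
    (x₀ : E) (hη : ContDiff ℝ 1 η) (hηc : HasCompactSupport η) :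
    0 ≤ ∫ x, dilationForm P (gradient u x) (x - x₀) (η x) (gradient η x) ∂μ := by
  have hu₁ : ContDiff ℝ 1 u := hu.of_le (by norm_num)
  have hradial : ContDiff ℝ 1 (radialDeriv u x₀) := contDiff_radialDeriv hu (by norm_num) x₀
  have fderiv_comp_u (x) : fderiv ℝ (fun y => f (u y)) x (x - x₀) =
      deriv f (u x) * radialDeriv u x₀ x := by
    rw [fderiv_fun_comp x (hf.differentiable one_ne_zero _) (hu₁.differentiable one_ne_zero x),
      ContinuousLinearMap.comp_apply, fderiv_eq_smul_deriv, ← inner_gradient_left,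
      real_inner_comm, smul_eq_mul, mul_comm, radialDeriv]
  have hηc₂ : HasCompactSupport fun y => radialDeriv u x₀ y * η y ^ 2 :=
    .intro hηc fun x hx => by simp [image_eq_zero_of_notMem_tsupport hx]
  have hdilation := hweak.dilation (hP.comp (contDiff_gradient hu (by norm_num)))
    (hf.comp hu₁) x₀ (hradial.mul (hη.pow 2)) hηc₂
  have hstability := stability_contDiff_one μ hf hP hu₁ hstab (hradial.mul hη) hηc.mul_left
  rw [integral_dilationForm μ hP hPs hu x₀ hη hηc, hdilation, sub_nonneg]
  simp only [fderiv_comp_u]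
  convert hstability using 3
  ring

end DilationForm

section AreaIntegrand

variable {E : Type*} [NormedAddCommGroup E]

/-- The integrand `√(1 + |p|²)` of the area functional. -/
def areaElement (p : E) : ℝ := √(1 + ‖p‖ ^ 2)

lemma areaElement_pos (p : E) : 0 < areaElement p := by
  unfold areaElement; positivity

lemma sq_areaElement (p : E) : areaElement p ^ 2 = 1 + ‖p‖ ^ 2 := sq_sqrt (by positivity)

lemma sq_inv_areaElement_mul (p : E) : (areaElement p)⁻¹ ^ 2 * (1 + ‖p‖ ^ 2) = 1 := by
  rw [← sq_areaElement, ← mul_pow, inv_mul_cancel₀ (areaElement_pos p).ne', one_pow]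

lemma inv_areaElement_pos (p : E) : 0 < (areaElement p)⁻¹ := inv_pos.2 (areaElement_pos p)

lemma inv_areaElement_le_one (p : E) : (areaElement p)⁻¹ ≤ 1 :=
  inv_le_one_of_one_le₀ (one_le_sqrt.2 (by simp))

variable [InnerProductSpace ℝ E]

/-- The gradient `p / √(1 + |p|²)` of `areaElement`, that is, the flux in the mean curvature
equation. -/
def areaGradient (p : E) : E := (areaElement p)⁻¹ • p

lemma contDiff_areaElement {m : WithTop ℕ∞} : ContDiff ℝ m (areaElement (E := E)) :=
  (contDiff_const.add (contDiff_norm_sq ℝ)).sqrt fun p => by positivity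

lemma contDiff_areaGradient {m : WithTop ℕ∞} : ContDiff ℝ m (areaGradient (E := E)) :=
  (contDiff_areaElement.inv fun p => (areaElement_pos p).ne').smul contDiff_id

lemma hasFDerivAt_areaElement (p : E) :
    HasFDerivAt areaElement ((areaElement p)⁻¹ • innerSL ℝ p) p := by
  have hsq : HasFDerivAt (fun q : E => 1 + ‖q‖ ^ 2) (2 • innerSL ℝ p) p :=
    (hasStrictFDerivAt_norm_sq p).hasFDerivAt.const_add 1
  have hsqrt : HasFDerivAt areaElement _ p := hsq.sqrt (by positivity)
  convert hsqrt using 1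
  rw [← Nat.cast_smul_eq_nsmul ℝ, smul_smul, areaElement]
  congr 1
  field_simp
  norm_num

lemma fderiv_areaGradient (p v : E) :
    fderiv ℝ areaGradient p v =
      (areaElement p)⁻¹ • v - ((areaElement p)⁻¹ ^ 3 * ⟪p, v⟫) • p := by
  have hinv := (hasDerivAt_inv (areaElement_pos p).ne').comp_hasFDerivAt p
    (hasFDerivAt_areaElement p)
  have hderiv : HasFDerivAt areaGradient _ p := hinv.smul (hasFDerivAt_id p)
  rw [hderiv.fderiv]
  simp
  module

lemma isSymmetric_fderiv_areaGradient (p : E) :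
    (fderiv ℝ areaGradient p : E →ₗ[ℝ] E).IsSymmetric := by
  intro v w
  simp only [ContinuousLinearMap.coe_coe, fderiv_areaGradient, inner_sub_left, inner_sub_right,
    real_inner_smul_left, real_inner_smul_right, real_inner_comm p v]
  ring

lemma inner_areaGradient_self (p : E) : ⟪areaGradient p, p⟫ = (areaElement p)⁻¹ * ‖p‖ ^ 2 := by
  rw [areaGradient, real_inner_smul_left, real_inner_self_eq_norm_sq]

lemma inner_areaGradient_self_nonneg (p : E) : 0 ≤ ⟪areaGradient p, p⟫ := by
  rw [inner_areaGradient_self]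
  exact mul_nonneg (inv_areaElement_pos p).le (sq_nonneg _)

lemma inner_areaGradient_self_le (p : E) : ⟪areaGradient p, p⟫ ≤ ‖p‖ ^ 2 := by
  rw [inner_areaGradient_self]
  exact mul_le_of_le_one_left (sq_nonneg _) (inv_areaElement_le_one p)

lemma inner_fderiv_areaGradient_self (p h : E) :
    ⟪fderiv ℝ areaGradient p h, h⟫ =
      (areaElement p)⁻¹ * ‖h‖ ^ 2 - (areaElement p)⁻¹ ^ 3 * ⟪p, h⟫ ^ 2 := by
  rw [fderiv_areaGradient, inner_sub_left, real_inner_smul_left, real_inner_smul_left,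
    real_inner_self_eq_norm_sq]
  ring

lemma inner_fderiv_areaGradient_self_le (p h : E) :
    ⟪fderiv ℝ areaGradient p h, h⟫ ≤ ‖h‖ ^ 2 := by
  have hw := inv_areaElement_pos p
  rw [inner_fderiv_areaGradient_self]
  exact (sub_le_self _ (by positivity)).trans
    (mul_le_of_le_one_left (sq_nonneg _) (inv_areaElement_le_one p))

lemma fderiv_areaGradient_self_add (p : E) :
    fderiv ℝ areaGradient p p + areaGradient p =
      ((areaElement p)⁻¹ + (areaElement p)⁻¹ ^ 3) • p := by
  have hW := (areaElement_pos p).ne'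
  rw [fderiv_areaGradient, areaGradient, real_inner_self_eq_norm_sq,
    ← sub_eq_of_eq_add' (sq_areaElement p), ← sub_smul, ← add_smul]
  congr 1
  field_simp
  ring

lemma inner_fderiv_areaGradient_self_add_le (p : E) :
    ⟪fderiv ℝ areaGradient p p + areaGradient p, p⟫ ≤ 2 * ⟪areaGradient p, p⟫ := by
  rw [inner_add_left, two_mul, inner_fderiv_areaGradient_self, inner_areaGradient_self]
  have hw := inv_areaElement_pos p
  gcongr
  exact sub_le_self _ (by positivity)

lemma norm_fderiv_areaGradient_self_add_le (p : E) :
    ‖fderiv ℝ areaGradient p p + areaGradient p‖ ≤ 2 * ‖p‖ := by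
  have hw := inv_areaElement_pos p
  have hw₁ := inv_areaElement_le_one p
  rw [fderiv_areaGradient_self_add, norm_smul, norm_of_nonneg (by positivity)]
  gcongr
  linarith [pow_le_one₀ (n := 3) hw.le hw₁]

lemma dilationForm_areaGradient (p X : E) (e : ℝ) (h : E) :
    dilationForm areaGradient p X e h =
      ⟪X, p⟫ ^ 2 * ((areaElement p)⁻¹ * ‖h‖ ^ 2 - (areaElement p)⁻¹ ^ 3 * ⟪p, h⟫ ^ 2)
        + 2 * ⟪X, p⟫ * e * (((areaElement p)⁻¹ + (areaElement p)⁻¹ ^ 3) * ⟪p, h⟫)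
        + e ^ 2 * (((areaElement p)⁻¹ + (areaElement p)⁻¹ ^ 3) * ‖p‖ ^ 2
          - Module.finrank ℝ E * ((areaElement p)⁻¹ * ‖p‖ ^ 2))
        - 2 * e * ((areaElement p)⁻¹ * ‖p‖ ^ 2) * ⟪X, h⟫ := by
  simp only [dilationForm, inner_fderiv_areaGradient_self, fderiv_areaGradient_self_add,
    inner_areaGradient_self, real_inner_smul_left, real_inner_self_eq_norm_sq]

lemma sq_inner_mul_fderiv_areaGradient_le {p X h : E} {M : ℝ} (hh : ‖X‖ * ‖h‖ ≤ M) :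
    ⟪X, p⟫ ^ 2 * ⟪fderiv ℝ areaGradient p h, h⟫ ≤ M ^ 2 * ‖p‖ ^ 2 :=
  calc ⟪X, p⟫ ^ 2 * ⟪fderiv ℝ areaGradient p h, h⟫ ≤ |⟪X, p⟫| ^ 2 * ‖h‖ ^ 2 := by
        rw [sq_abs]
        gcongr
        exact inner_fderiv_areaGradient_self_le p h
    _ ≤ (‖X‖ * ‖p‖) ^ 2 * ‖h‖ ^ 2 := by
        gcongr
        exact abs_real_inner_le_norm X p
    _ = (‖X‖ * ‖h‖) ^ 2 * ‖p‖ ^ 2 := by ring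
    _ ≤ M ^ 2 * ‖p‖ ^ 2 := by gcongr

lemma inner_mul_fderiv_areaGradient_self_add_le {p X h : E} {e M : ℝ} (he : |e| ≤ M)
    (hh : ‖X‖ * ‖h‖ ≤ M) :
    2 * ⟪X, p⟫ * e * ⟪fderiv ℝ areaGradient p p + areaGradient p, h⟫ ≤ 4 * M ^ 2 * ‖p‖ ^ 2 := by
  have hM : 0 ≤ M := (abs_nonneg e).trans he
  calc 2 * ⟪X, p⟫ * e * ⟪fderiv ℝ areaGradient p p + areaGradient p, h⟫
      ≤ 2 * |⟪X, p⟫| * |e| * |⟪fderiv ℝ areaGradient p p + areaGradient p, h⟫| :=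
        (le_abs_self _).trans_eq (by simp only [abs_mul, abs_two])
    _ ≤ 2 * (‖X‖ * ‖p‖) * M * (2 * ‖p‖ * ‖h‖) := by
        gcongr
        · exact abs_real_inner_le_norm X p
        · exact (abs_real_inner_le_norm _ h).trans
            (mul_le_mul_of_nonneg_right (norm_fderiv_areaGradient_self_add_le p) (norm_nonneg h))
    _ = 4 * M * (‖X‖ * ‖h‖) * ‖p‖ ^ 2 := by ring
    _ ≤ 4 * M * M * ‖p‖ ^ 2 := by gcongr
    _ = 4 * M ^ 2 * ‖p‖ ^ 2 := by ring

lemma neg_inner_areaGradient_self_mul_le {p X h : E} {e M : ℝ} (he : |e| ≤ M)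
    (hh : ‖X‖ * ‖h‖ ≤ M) :
    -(2 * e * ⟪areaGradient p, p⟫ * ⟪X, h⟫) ≤ 2 * M ^ 2 * ‖p‖ ^ 2 := by
  have hM : 0 ≤ M := (abs_nonneg e).trans he
  have hp := inner_areaGradient_self_nonneg p
  calc -(2 * e * ⟪areaGradient p, p⟫ * ⟪X, h⟫)
      ≤ 2 * |e| * ⟪areaGradient p, p⟫ * |⟪X, h⟫| :=
        (neg_le_abs _).trans_eq (by simp only [abs_mul, abs_two, abs_of_nonneg hp])
    _ ≤ 2 * M * ‖p‖ ^ 2 * M := by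
        gcongr
        exacts [inner_areaGradient_self_le p, (abs_real_inner_le_norm X h).trans hh]
    _ = 2 * M ^ 2 * ‖p‖ ^ 2 := by ring

lemma dilationForm_areaGradient_le (hE : 2 ≤ Module.finrank ℝ E) {p X h : E} {e M : ℝ}
    (he : |e| ≤ M) (hh : ‖X‖ * ‖h‖ ≤ M) :
    dilationForm areaGradient p X e h ≤ 7 * M ^ 2 * ‖p‖ ^ 2 := by
  have hN : (2 : ℝ) ≤ Module.finrank ℝ E := by exact_mod_cast hE
  have zeroth : e ^ 2 * (⟪fderiv ℝ areaGradient p p + areaGradient p, p⟫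
      - Module.finrank ℝ E * ⟪areaGradient p, p⟫) ≤ 0 :=
    mul_nonpos_of_nonneg_of_nonpos (sq_nonneg e) <| sub_nonpos.2 <|
      (inner_fderiv_areaGradient_self_add_le p).trans
        (mul_le_mul_of_nonneg_right hN (inner_areaGradient_self_nonneg p))
  unfold dilationForm
  linarith [sq_inner_mul_fderiv_areaGradient_le (p := p) hh,
    inner_mul_fderiv_areaGradient_self_add_le (p := p) he hh,
    neg_inner_areaGradient_self_mul_le (p := p) he hh]

end AreaIntegrand

section RadialDefect

/-- The exponents `a` for which the weight `(1 + |X|²)^(-a/4)` makes the dilation form of the area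
functional nonpositive in dimension `N`. -/
structure IsAdmissibleExponent (N a : ℝ) : Prop where
  nonneg : 0 ≤ a
  le_sub_two : a ≤ N - 2
  sq_le_sub_one : (a / 2 - 1) ^ 2 ≤ N - 1

/-- The dilation form of the area functional at a radial weight, divided by `-e²|p|²/√(1 + |p|²)`;
here `b`, `t`, `y` stand for `a|X|²/(1 + |X|²)`, `a⟨X, p⟩²/((1 + |X|²)|p|²)`, `1/(1 + |p|²)`. -/
def radialDefect (N b t y : ℝ) : ℝ :=
  N - 1 - b + t - b * t / 4 + t ^ 2 / 4 - y * (1 - t / 2) ^ 2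

variable {N a b t y : ℝ}

lemma IsAdmissibleExponent.of_le (ha : IsAdmissibleExponent N a) (hb : 0 ≤ b) (hba : b ≤ a) :
    IsAdmissibleExponent N b where
  nonneg := hb
  le_sub_two := hba.trans ha.le_sub_two
  sq_le_sub_one := by
    have hN := ha.nonneg.trans ha.le_sub_two
    rcases le_total b 2 with h | h
    · nlinarith
    · nlinarith [ha.sq_le_sub_one]

/-- At `y = 1` the defect is affine in `t`, so only `t = 0` and `t = b` matter. -/
lemma IsAdmissibleExponent.radialDefect_nonneg (hb : IsAdmissibleExponent N b) (ht : 0 ≤ t)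
    (htb : t ≤ b) (hy : y ≤ 1) : 0 ≤ radialDefect N b t y := by
  obtain ⟨hb₀, hbN, hbsq⟩ := hb
  have hy₁ : y * (1 - t / 2) ^ 2 ≤ (1 - t / 2) ^ 2 := mul_le_of_le_one_left (sq_nonneg _) hy
  have affine : 0 ≤ N - 2 - b + 2 * t - b * t / 4 := by
    rcases hb₀.eq_or_lt with rfl | hb₀
    · linarith
    · refine nonneg_of_mul_nonneg_right ?_ hb₀
      calc 0 ≤ (b - t) * (N - 2 - b) + t * (N - 1 - (b / 2 - 1) ^ 2) :=
            add_nonneg (mul_nonneg (sub_nonneg.2 htb) (by linarith))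
              (mul_nonneg ht (sub_nonneg.2 hbsq))
        _ = b * (N - 2 - b + 2 * t - b * t / 4) := by ring
  unfold radialDefect
  linarith

lemma IsAdmissibleExponent.radialDefect_self_pos (hb : IsAdmissibleExponent N b) (hy : y < 1) :
    0 < radialDefect N b b y := by
  obtain ⟨hb₀, hbN, hbsq⟩ := hb
  have hdefect : radialDefect N b b y = N - 1 - y * (b / 2 - 1) ^ 2 := by
    unfold radialDefect; ring
  rw [hdefect, sub_pos]
  rcases (sq_nonneg (b / 2 - 1)).eq_or_lt with hzero | hpos
  · rw [← hzero]
    linarith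
  · exact (mul_lt_of_lt_one_left hpos hy).trans_le hbsq

variable {E : Type*} [NormedAddCommGroup E] [InnerProductSpace ℝ E] {p X : E}

lemma dilationForm_areaGradient_radial (a : ℝ) (hp : p ≠ 0) (X : E) (e : ℝ) :
    dilationForm areaGradient p X e ((-(a / 2) * (1 + ‖X‖ ^ 2)⁻¹ * e) • X) =
      -(e ^ 2 * (areaElement p)⁻¹ * ‖p‖ ^ 2 *
        radialDefect (Module.finrank ℝ E) (a * ((1 + ‖X‖ ^ 2)⁻¹ * ‖X‖ ^ 2))
          (a * ((1 + ‖X‖ ^ 2)⁻¹ * ⟪X, p⟫ ^ 2 / ‖p‖ ^ 2)) ((areaElement p)⁻¹ ^ 2)) := by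
  have hw := sq_inv_areaElement_mul p
  have hp : ‖p‖ ≠ 0 := norm_ne_zero_iff.2 hp
  rw [dilationForm_areaGradient, norm_smul, mul_pow, norm_eq_abs, sq_abs, real_inner_smul_right,
    real_inner_smul_right, real_inner_comm X p, real_inner_self_eq_norm_sq, radialDefect]
  set w := (areaElement p)⁻¹
  set k := (1 + ‖X‖ ^ 2)⁻¹
  obtain ⟨θ, hθ⟩ : ∃ θ, k * ⟪X, p⟫ ^ 2 / ‖p‖ ^ 2 = θ := ⟨_, rfl⟩
  have hθp : k * ⟪X, p⟫ ^ 2 = θ * ‖p‖ ^ 2 := by rw [← hθ]; field_simp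
  rw [hθ]
  linear_combination e ^ 2 * w * (a ^ 2 / 4 * k * ‖X‖ ^ 2
    - a ^ 2 / 4 * w ^ 2 * (k * ⟪X, p⟫ ^ 2 + θ * ‖p‖ ^ 2) - a * (1 + w ^ 2)) * hθp
    - e ^ 2 * w * (a ^ 2 / 4 * θ ^ 2 * ‖p‖ ^ 2) * hw

lemma inv_one_add_sq_mul_sq_le_one (r : ℝ) : (1 + r ^ 2)⁻¹ * r ^ 2 ≤ 1 :=
  (inv_mul_le_one₀ (by positivity)).2 (by linarith)

lemma IsAdmissibleExponent.mul_inv_one_add_sq_mul_sq (ha : IsAdmissibleExponent N a) (r : ℝ) :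
    IsAdmissibleExponent N (a * ((1 + r ^ 2)⁻¹ * r ^ 2)) :=
  ha.of_le (mul_nonneg ha.nonneg (by positivity))
    (mul_le_of_le_one_right ha.nonneg (inv_one_add_sq_mul_sq_le_one r))

theorem IsAdmissibleExponent.dilationForm_nonpos
    (ha : IsAdmissibleExponent (Module.finrank ℝ E) a) (p X : E) (e : ℝ) :
    dilationForm areaGradient p X e ((-(a / 2) * (1 + ‖X‖ ^ 2)⁻¹ * e) • X) ≤ 0 := by
  rcases eq_or_ne p 0 with rfl | hp
  · simp [dilationForm_areaGradient]
  have ha₀ := ha.nonneg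
  have hw := inv_areaElement_pos p
  have hcauchy : a * ((1 + ‖X‖ ^ 2)⁻¹ * ⟪X, p⟫ ^ 2 / ‖p‖ ^ 2) ≤
      a * ((1 + ‖X‖ ^ 2)⁻¹ * ‖X‖ ^ 2) := by
    rw [mul_div_assoc]
    gcongr
    rw [div_le_iff₀ (by positivity), ← mul_pow, ← sq_abs]
    gcongr
    exact abs_real_inner_le_norm X p
  have hdefect := (ha.mul_inv_one_add_sq_mul_sq ‖X‖).radialDefect_nonneg (by positivity) hcauchy
    (pow_le_one₀ (n := 2) hw.le (inv_areaElement_le_one p))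
  rw [dilationForm_areaGradient_radial a hp, neg_nonpos]
  positivity

theorem IsAdmissibleExponent.dilationForm_self_neg
    (ha : IsAdmissibleExponent (Module.finrank ℝ E) a) (hp : p ≠ 0) {e : ℝ} (he : e ≠ 0) :
    dilationForm areaGradient p p e ((-(a / 2) * (1 + ‖p‖ ^ 2)⁻¹ * e) • p) < 0 := by
  have hw := inv_areaElement_pos p
  have hw₁ : (areaElement p)⁻¹ ^ 2 < 1 := by
    have := norm_pos_iff.2 hp
    have := sq_inv_areaElement_mul p
    nlinarith
  have hdefect := (ha.mul_inv_one_add_sq_mul_sq ‖p‖).radialDefect_self_pos hw₁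
  have hinner : (1 + ‖p‖ ^ 2)⁻¹ * ⟪p, p⟫ ^ 2 / ‖p‖ ^ 2 = (1 + ‖p‖ ^ 2)⁻¹ * ‖p‖ ^ 2 := by
    rw [real_inner_self_eq_norm_sq]
    field_simp
  rw [dilationForm_areaGradient_radial a hp, neg_neg_iff_pos, hinner]
  positivity

end RadialDefect

section RadialWeight

variable {E : Type*} [NormedAddCommGroup E] {a : ℝ} (x₀ : E) {x : E}

/-- The weight `(1 + |x - x₀|²)^(-a/4)`, which decays like `|x|^(-a/2)`. -/
def radialWeight (a : ℝ) (x₀ x : E) : ℝ := (1 + ‖x - x₀‖ ^ 2) ^ (-(a / 4))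

lemma radialWeight_pos (a : ℝ) (x₀ x : E) : 0 < radialWeight a x₀ x := by
  unfold radialWeight; positivity

lemma radialWeight_le_rpow (ha : 0 ≤ a) {r : ℝ} (hr : 0 < r) (hrx : r ≤ ‖x - x₀‖) :
    radialWeight a x₀ x ≤ r ^ (-(a / 2)) :=
  calc radialWeight a x₀ x ≤ (r ^ 2) ^ (-(a / 4)) :=
        rpow_le_rpow_of_nonpos (by positivity)
          ((pow_le_pow_left₀ hr.le hrx 2).trans (by linarith)) (by linarith)
    _ = r ^ (-(a / 2)) := by
        rw [← rpow_natCast, ← rpow_mul hr.le]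
        ring_nf

variable [InnerProductSpace ℝ E]

lemma contDiff_radialWeight {m : WithTop ℕ∞} (a : ℝ) : ContDiff ℝ m (radialWeight a x₀) :=
  (contDiff_const.add ((contDiff_id.sub contDiff_const).norm_sq ℝ)).rpow_const_of_ne
    fun x => by positivity

lemma gradient_radialWeight [CompleteSpace E] (a : ℝ) (x : E) :
    gradient (radialWeight a x₀) x =
      (-(a / 2) * (1 + ‖x - x₀‖ ^ 2)⁻¹ * radialWeight a x₀ x) • (x - x₀) := by
  have hpos : 0 < 1 + ‖x - x₀‖ ^ 2 := by positivity
  have hsq : HasFDerivAt (fun y : E => 1 + ‖y - x₀‖ ^ 2) (2 • innerSL ℝ (x - x₀)) x := by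
    simpa using ((hasFDerivAt_id x).sub_const x₀).norm_sq.const_add 1
  have hderiv : HasFDerivAt (radialWeight a x₀) _ x := hsq.rpow_const (.inl hpos.ne')
  refine ext_inner_right ℝ fun v => ?_
  rw [inner_gradient_left, hderiv.fderiv, rpow_sub_one hpos.ne', radialWeight,
    real_inner_smul_left]
  simp [inner_sub_left]
  ring

lemma norm_mul_norm_gradient_radialWeight_le [CompleteSpace E] (ha : 0 ≤ a) (x : E) :
    ‖x - x₀‖ * ‖gradient (radialWeight a x₀) x‖ ≤ a / 2 * radialWeight a x₀ x := by
  have hW := radialWeight_pos a x₀ x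
  calc ‖x - x₀‖ * ‖gradient (radialWeight a x₀) x‖
      = a / 2 * radialWeight a x₀ x * ((1 + ‖x - x₀‖ ^ 2)⁻¹ * ‖x - x₀‖ ^ 2) := by
        rw [gradient_radialWeight, norm_smul, norm_mul, norm_mul, norm_neg,
          norm_of_nonneg hW.le, norm_of_nonneg (by positivity : 0 ≤ a / 2),
          norm_of_nonneg (by positivity : 0 ≤ (1 + ‖x - x₀‖ ^ 2)⁻¹)]
        ring
    _ ≤ a / 2 * radialWeight a x₀ x :=
        mul_le_of_le_one_right (by positivity) (inv_one_add_sq_mul_sq_le_one _)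

end RadialWeight

section Cutoff

variable {E : Type*} [NormedAddCommGroup E] [InnerProductSpace ℝ E] [FiniteDimensional ℝ E]
  {R : ℝ} {x : E}

/-- The smooth bump function that equals `1` on the unit ball and vanishes outside the ball of
radius `2`. -/
def unitBump (E : Type*) [NormedAddCommGroup E] [InnerProductSpace ℝ E] [FiniteDimensional ℝ E] :
    ContDiffBump (0 : E) := ⟨1, 2, one_pos, one_lt_two⟩

/-- A smooth cutoff equal to `1` on the ball of radius `R` and vanishing outside the ball of
radius `2R`. -/
def cutoff (R : ℝ) (x : E) : ℝ := unitBump E (R⁻¹ • x)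

lemma contDiff_cutoff {m : ℕ∞} (R : ℝ) : ContDiff ℝ m (cutoff (E := E) R) :=
  (unitBump E).contDiff.comp (contDiff_const_smul _)

lemma hasCompactSupport_cutoff (hR : 0 < R) : HasCompactSupport (cutoff (E := E) R) :=
  (unitBump E).hasCompactSupport.comp_smul (inv_ne_zero hR.ne')

lemma cutoff_nonneg (R : ℝ) (x : E) : 0 ≤ cutoff R x := (unitBump E).nonneg

lemma cutoff_le_one (R : ℝ) (x : E) : cutoff R x ≤ 1 := (unitBump E).le_one

lemma cutoff_eq_one (hR : 0 < R) (hx : ‖x‖ ≤ R) : cutoff R x = 1 := by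
  refine (unitBump E).one_of_mem_closedBall ?_
  rw [mem_closedBall_zero_iff, norm_smul, norm_inv, norm_of_nonneg hR.le, inv_mul_le_iff₀ hR]
  exact hx.trans_eq (mul_one R).symm

lemma cutoff_eq_zero (hR : 0 < R) (hx : 2 * R ≤ ‖x‖) : cutoff R x = 0 := by
  refine (unitBump E).zero_of_le_dist ?_
  rw [dist_zero_right, norm_smul, norm_inv, norm_of_nonneg hR.le, le_inv_mul_iff₀ hR, mul_comm]
  exact hx

lemma exists_norm_gradient_cutoff_le (E : Type*) [NormedAddCommGroup E] [InnerProductSpace ℝ E]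
    [FiniteDimensional ℝ E] :
    ∃ G ≥ 0, ∀ R > 0, ∀ x : E, ‖gradient (cutoff R) x‖ ≤ G / R := by
  have hbump : ContDiff ℝ 1 (unitBump E) := (unitBump E).contDiff
  obtain ⟨G, hG⟩ := (hbump.continuous_fderiv one_ne_zero).bounded_above_of_compact_support
    ((unitBump E).hasCompactSupport.fderiv ℝ)
  refine ⟨G, (norm_nonneg _).trans (hG 0), fun R hR x => ?_⟩
  have hderiv : HasFDerivAt (cutoff R)
      ((fderiv ℝ (unitBump E) (R⁻¹ • x)).comp (R⁻¹ • .id ℝ E)) x :=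
    (hbump.differentiable one_ne_zero _).hasFDerivAt.comp x ((hasFDerivAt_id x).const_smul R⁻¹)
  rw [gradient, LinearIsometryEquiv.norm_map, hderiv.fderiv, ContinuousLinearMap.comp_smul,
    ContinuousLinearMap.comp_id, norm_smul, norm_inv, norm_of_nonneg hR.le, inv_mul_eq_div]
  gcongr
  exact hG _

/-- The radial weight about `x₀`, cut off at radius `R`. -/
def cutoffWeight (a R : ℝ) (x₀ x : E) : ℝ := radialWeight a x₀ x * cutoff R x

lemma contDiff_cutoffWeight {m : ℕ∞} (a R : ℝ) (x₀ : E) :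
    ContDiff ℝ m (cutoffWeight a R x₀) :=
  (contDiff_radialWeight x₀ a).mul (contDiff_cutoff R)

lemma hasCompactSupport_cutoffWeight (a : ℝ) (hR : 0 < R) (x₀ : E) :
    HasCompactSupport (cutoffWeight a R x₀) := (hasCompactSupport_cutoff hR).mul_left

lemma cutoffWeight_eq_radialWeight (a : ℝ) (hR : 0 < R) (x₀ : E) (hx : ‖x‖ ≤ R) :
    cutoffWeight a R x₀ x = radialWeight a x₀ x := by
  rw [cutoffWeight, cutoff_eq_one hR hx, mul_one]

lemma gradient_cutoffWeight_eq_gradient_radialWeight (a : ℝ) (x₀ : E) (hx : ‖x‖ < R) :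
    gradient (cutoffWeight a R x₀) x = gradient (radialWeight a x₀) x := by
  have heq : cutoffWeight a R x₀ =ᶠ[𝓝 x] radialWeight a x₀ := by
    filter_upwards [isOpen_ball.mem_nhds (mem_ball_zero_iff.2 hx)] with y hy
    exact cutoffWeight_eq_radialWeight a ((norm_nonneg x).trans_lt hx) x₀
      (mem_ball_zero_iff.1 hy).le
  rw [gradient, gradient, heq.fderiv_eq]

lemma cutoffWeight_eq_zero (a : ℝ) (hR : 0 < R) (x₀ : E) (hx : 2 * R ≤ ‖x‖) :
    cutoffWeight a R x₀ x = 0 := by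
  rw [cutoffWeight, cutoff_eq_zero hR hx, mul_zero]

lemma cutoffWeight_nonneg (a R : ℝ) (x₀ x : E) : 0 ≤ cutoffWeight a R x₀ x :=
  mul_nonneg (radialWeight_pos a x₀ x).le (cutoff_nonneg R x)

lemma cutoffWeight_le_radialWeight (a R : ℝ) (x₀ x : E) :
    cutoffWeight a R x₀ x ≤ radialWeight a x₀ x :=
  mul_le_of_le_one_right (radialWeight_pos a x₀ x).le (cutoff_le_one R x)

lemma gradient_cutoffWeight_eq_zero (a : ℝ) (hR : 0 < R) (x₀ : E) (hx : 2 * R ≤ ‖x‖) :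
    gradient (cutoffWeight a R x₀) x = 0 := by
  have hmin : IsLocalMin (cutoffWeight a R x₀) x := .of_forall fun y =>
    (cutoffWeight_eq_zero a hR x₀ hx).trans_le (cutoffWeight_nonneg a R x₀ y)
  rw [gradient, hmin.fderiv_eq_zero, map_zero]

lemma norm_mul_norm_gradient_cutoffWeight_le {a G : ℝ} (ha : 0 ≤ a) (hR : 0 < R) {x₀ : E}
    (hx : ‖x - x₀‖ ≤ 3 * R) (hG : ‖gradient (cutoff R) x‖ ≤ G / R) :
    ‖x - x₀‖ * ‖gradient (cutoffWeight a R x₀) x‖ ≤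
      (3 * G + a / 2) * radialWeight a x₀ x := by
  have hW := radialWeight_pos a x₀ x
  have hgradient : gradient (cutoffWeight a R x₀) x =
      radialWeight a x₀ x • gradient (cutoff R) x
        + cutoff R x • gradient (radialWeight a x₀) x :=
    gradient_mul ((contDiff_radialWeight (m := 1) x₀ a).differentiable one_ne_zero x)
      ((contDiff_cutoff (m := 1) R).differentiable one_ne_zero x)
  calc ‖x - x₀‖ * ‖gradient (cutoffWeight a R x₀) x‖
      ≤ ‖x - x₀‖ * (radialWeight a x₀ x * ‖gradient (cutoff R) x‖
          + cutoff R x * ‖gradient (radialWeight a x₀) x‖) := by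
        rw [hgradient]
        gcongr
        refine (norm_add_le _ _).trans_eq ?_
        rw [norm_smul, norm_smul, norm_of_nonneg hW.le, norm_of_nonneg (cutoff_nonneg R x)]
    _ = radialWeight a x₀ x * (‖x - x₀‖ * ‖gradient (cutoff R) x‖)
          + cutoff R x * (‖x - x₀‖ * ‖gradient (radialWeight a x₀) x‖) := by ring
    _ ≤ radialWeight a x₀ x * (3 * R * (G / R)) + 1 * (a / 2 * radialWeight a x₀ x) := by
        exact add_le_add (by gcongr) (mul_le_mul (cutoff_le_one R x)
          (norm_mul_norm_gradient_radialWeight_le x₀ ha x) (by positivity) zero_le_one)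
    _ = (3 * G + a / 2) * radialWeight a x₀ x := by
        field_simp

end Cutoff

section DilationStable

variable {E : Type*} [NormedAddCommGroup E] [InnerProductSpace ℝ E] [FiniteDimensional ℝ E]
  {u η : E → ℝ} {a R : ℝ} {x x₀ : E}

/-- The dilation form of the area functional along `u`, for dilations about `x₀` weighted
by `η`. -/
def dilationDensity (u : E → ℝ) (x₀ : E) (η : E → ℝ) (x : E) : ℝ :=
  dilationForm areaGradient (gradient u x) (x - x₀) (η x) (gradient η x)

lemma continuous_dilationDensity (hu : ContDiff ℝ 1 u) (x₀ : E) (hη : ContDiff ℝ 1 η) :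
    Continuous (dilationDensity u x₀ η) :=
  (continuous_dilationForm contDiff_areaGradient).comp <| (continuous_gradient_s4 hu).prodMk <|
    (continuous_id.sub continuous_const).prodMk <| hη.continuous.prodMk (continuous_gradient_s4 hη)

lemma dilationDensity_eq_zero (hη : η x = 0) (hDη : gradient η x = 0) :
    dilationDensity u x₀ η x = 0 := by
  simp [dilationDensity, dilationForm, hη, hDη]

lemma dilationDensity_radialWeight_nonpos (u : E → ℝ)
    (ha : IsAdmissibleExponent (Module.finrank ℝ E) a) (x₀ x : E) :
    dilationDensity u x₀ (radialWeight a x₀) x ≤ 0 := by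
  rw [dilationDensity, gradient_radialWeight]
  exact ha.dilationForm_nonpos _ _ _

lemma dilationDensity_radialWeight_neg (ha : IsAdmissibleExponent (Module.finrank ℝ E) a)
    (hx : x - x₀ = gradient u x) (hgrad : gradient u x ≠ 0) :
    dilationDensity u x₀ (radialWeight a x₀) x < 0 := by
  rw [dilationDensity, gradient_radialWeight, hx]
  exact ha.dilationForm_self_neg hgrad (radialWeight_pos a x₀ x).ne'

lemma dilationDensity_cutoffWeight_le (u : E → ℝ) (hE : 2 ≤ Module.finrank ℝ E) {G : ℝ}
    (ha : 0 ≤ a) (hG : 0 ≤ G) (hR : 0 < R) (hx₀ : 2 * ‖x₀‖ ≤ R) (hRx : R ≤ ‖x‖)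
    (hxR : ‖x‖ ≤ 2 * R) (hcutoff : ‖gradient (cutoff R) x‖ ≤ G / R) :
    dilationDensity u x₀ (cutoffWeight a R x₀) x ≤
      7 * ((1 + 3 * G + a / 2) * (R / 2) ^ (-(a / 2))) ^ 2 * ‖gradient u x‖ ^ 2 := by
  have hlower : R / 2 ≤ ‖x - x₀‖ := by linarith [norm_sub_norm_le x x₀]
  have hupper : ‖x - x₀‖ ≤ 3 * R := by linarith [norm_sub_le x x₀]
  have hweight := radialWeight_le_rpow x₀ ha (half_pos hR) hlower
  refine dilationForm_areaGradient_le hE ?_ ?_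
  · rw [abs_of_nonneg (cutoffWeight_nonneg a R x₀ x)]
    calc cutoffWeight a R x₀ x ≤ 1 * (R / 2) ^ (-(a / 2)) :=
          (cutoffWeight_le_radialWeight a R x₀ x).trans (hweight.trans_eq (one_mul _).symm)
      _ ≤ (1 + 3 * G + a / 2) * (R / 2) ^ (-(a / 2)) := by gcongr; linarith
  · calc ‖x - x₀‖ * ‖gradient (cutoffWeight a R x₀) x‖
        ≤ (3 * G + a / 2) * radialWeight a x₀ x :=
          norm_mul_norm_gradient_cutoffWeight_le ha hR hupper hcutoff
      _ ≤ (1 + 3 * G + a / 2) * (R / 2) ^ (-(a / 2)) :=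
          mul_le_mul (by linarith) hweight (radialWeight_pos a x₀ x).le (by positivity)

lemma exists_gradient_ne_zero (hu : Differentiable ℝ u) (hnc : ¬ ∃ c, ∀ x, u x = c) :
    ∃ x, gradient u x ≠ 0 := by
  by_contra! hgrad
  exact hnc ⟨u 0, fun x => is_const_of_fderiv_eq_zero hu
    (fun y => (map_eq_zero_iff _ (InnerProductSpace.toDual ℝ E).symm.injective).1 (hgrad y)) x 0⟩

variable [MeasurableSpace E] [BorelSpace E] {μ : Measure E}

/-- Nonnegativity of the second variation of the area-type energy at `u`, among deformations of
the graph by dilations with compactly supported weights, once the equation for `u` has been used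
to eliminate its right-hand side. -/
def IsDilationStable (μ : Measure E) (u : E → ℝ) : Prop :=
  ∀ (x₀ : E) (η : E → ℝ), ContDiff ℝ 1 η → HasCompactSupport η →
    0 ≤ ∫ x, dilationDensity u x₀ η x ∂μ

variable [IsFiniteMeasureOnCompacts μ]

lemma integrableOn_ball_of_continuous {g : E → ℝ} (hg : Continuous g) (x₀ : E) (r : ℝ) :
    IntegrableOn g (ball x₀ r) μ :=
  (hg.continuousOn.integrableOn_compact (isCompact_closedBall x₀ r)).mono_set ball_subset_closedBall

lemma IsDilationStable.neg_setIntegral_radialWeight_le (hs : IsDilationStable μ u)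
    (hu : ContDiff ℝ 1 u) (a : ℝ) (hR : 0 < R) (x₀ : E) :
    -∫ x in ball 0 R, dilationDensity u x₀ (radialWeight a x₀) x ∂μ ≤
      ∫ x in ball 0 (2 * R) \ ball 0 R, dilationDensity u x₀ (cutoffWeight a R x₀) x ∂μ := by
  have hη : ContDiff ℝ 1 (cutoffWeight a R x₀) := contDiff_cutoffWeight (m := 1) a R x₀
  have hsub : ball (0 : E) R ⊆ ball 0 (2 * R) := ball_subset_ball (by linarith)
  have hstable := hs x₀ _ hη (hasCompactSupport_cutoffWeight a hR x₀)
  have hinside : ∫ x in ball 0 R, dilationDensity u x₀ (cutoffWeight a R x₀) x ∂μ =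
      ∫ x in ball 0 R, dilationDensity u x₀ (radialWeight a x₀) x ∂μ := by
    refine setIntegral_congr_fun measurableSet_ball fun x hx => ?_
    have hx : ‖x‖ < R := mem_ball_zero_iff.1 hx
    simp only [dilationDensity, cutoffWeight_eq_radialWeight a hR x₀ hx.le,
      gradient_cutoffWeight_eq_gradient_radialWeight a x₀ hx]
  have houtside (x : E) (hx : x ∉ ball (0 : E) (2 * R)) :
      dilationDensity u x₀ (cutoffWeight a R x₀) x = 0 := by
    have hx : 2 * R ≤ ‖x‖ := by simpa using hx
    exact dilationDensity_eq_zero (cutoffWeight_eq_zero a hR x₀ hx)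
      (gradient_cutoffWeight_eq_zero a hR x₀ hx)
  rw [← setIntegral_eq_integral_of_forall_compl_eq_zero houtside,
    ← integral_inter_add_sdiff measurableSet_ball
      (integrableOn_ball_of_continuous (continuous_dilationDensity hu x₀ hη) 0 (2 * R)),
    Set.inter_eq_self_of_subset_right hsub, hinside] at hstable
  linarith

lemma exists_setIntegral_cutoffWeight_le (μ : Measure E) [IsFiniteMeasureOnCompacts μ]
    (hu : ContDiff ℝ 1 u) (hE : 2 ≤ Module.finrank ℝ E) (ha : 0 ≤ a) :
    ∃ C > 0, ∀ R > 0, ∀ x₀ : E, 2 * ‖x₀‖ ≤ R →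
      ∫ x in ball 0 (2 * R) \ ball 0 R, dilationDensity u x₀ (cutoffWeight a R x₀) x ∂μ ≤
        C * R ^ (-a) * ∫ x in ball 0 (2 * R) \ ball 0 R, ‖gradient u x‖ ^ 2 ∂μ := by
  obtain ⟨G, hG, hcutoff⟩ := exists_norm_gradient_cutoff_le E
  refine ⟨7 * (1 + 3 * G + a / 2) ^ 2 * (1 / 2) ^ (-a), by positivity, fun R hR x₀ hx₀ => ?_⟩
  have hconst : 7 * (1 + 3 * G + a / 2) ^ 2 * (1 / 2) ^ (-a) * R ^ (-a) =
      7 * ((1 + 3 * G + a / 2) * (R / 2) ^ (-(a / 2))) ^ 2 := by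
    rw [mul_pow, ← rpow_natCast ((R / 2) ^ _), ← rpow_mul (by positivity), mul_assoc, mul_assoc,
      ← mul_rpow (by norm_num) hR.le]
    push_cast
    ring_nf
  have integrableOn {g : E → ℝ} (hg : Continuous g) :
      IntegrableOn g (ball 0 (2 * R) \ ball 0 R) μ :=
    (integrableOn_ball_of_continuous hg 0 (2 * R)).mono_set Set.sdiff_subset
  have hgrad : Continuous fun x => ‖gradient u x‖ ^ 2 := (continuous_gradient_s4 hu).norm.pow 2
  rw [hconst, ← integral_const_mul]
  refine setIntegral_mono_on (integrableOn (continuous_dilationDensity hu x₀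
    (contDiff_cutoffWeight (m := 1) a R x₀))) (integrableOn (hgrad.const_mul _))
    (measurableSet_ball.diff measurableSet_ball) fun x hx => ?_
  have hxR : ‖x‖ < 2 * R := mem_ball_zero_iff.1 hx.1
  have hRx : R ≤ ‖x‖ := by simpa using hx.2
  exact dilationDensity_cutoffWeight_le u hE ha hG hR hx₀ hRx hxR.le (hcutoff R hR x)

/-- Centring the weight at `x - ∇u(x)` makes the density strictly negative at `x`. -/
lemma setIntegral_radialWeight_neg [μ.IsOpenPosMeasure] (hu : ContDiff ℝ 1 u)
    (ha : IsAdmissibleExponent (Module.finrank ℝ E) a) (hgrad : gradient u x ≠ 0)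
    (hx : ‖x‖ < R) :
    ∫ y in ball 0 R, dilationDensity u (x - gradient u x)
      (radialWeight a (x - gradient u x)) y ∂μ < 0 := by
  set x₀ := x - gradient u x with hx₀
  have hneg := dilationDensity_radialWeight_neg ha (by rw [hx₀]; abel : x - x₀ = _) hgrad
  have hcont : Continuous fun y => -dilationDensity u x₀ (radialWeight a x₀) y :=
    (continuous_dilationDensity hu x₀ (contDiff_radialWeight x₀ a)).neg
  rw [← neg_pos, ← integral_neg, setIntegral_pos_iff_support_of_nonneg_ae
    (.of_forall fun y => neg_nonneg.2 (dilationDensity_radialWeight_nonpos u ha x₀ y))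
    (integrableOn_ball_of_continuous hcont 0 R)]
  exact (hcont.isOpen_support.inter isOpen_ball).measure_pos _
    ⟨x, (neg_pos.2 hneg).ne', mem_ball_zero_iff.2 hx⟩

theorem IsDilationStable.exists_le_setIntegral_annulus [μ.IsOpenPosMeasure]
    (hs : IsDilationStable μ u) (hu : ContDiff ℝ 1 u)
    (ha : IsAdmissibleExponent (Module.finrank ℝ E) a) (hnc : ¬ ∃ c, ∀ x, u x = c) :
    ∃ c > 0, ∃ R₀ > 2, ∀ R ≥ R₀, c * R ^ a ≤
      ∫ x in ball 0 (2 * R) \ ball 0 R, ‖gradient u x‖ ^ 2 ∂μ := by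
  have hE : 2 ≤ Module.finrank ℝ E := by
    exact_mod_cast (by linarith [ha.nonneg, ha.le_sub_two] : (2 : ℝ) ≤ Module.finrank ℝ E)
  obtain ⟨C, hC, hannulus⟩ := exists_setIntegral_cutoffWeight_le μ hu hE ha.nonneg
  obtain ⟨p, hp⟩ := exists_gradient_ne_zero (hu.differentiable one_ne_zero) hnc
  set x₀ := p - gradient u p
  set R₀ := 3 + 2 * ‖x₀‖ + ‖p‖
  set gain := -∫ x in ball 0 R₀, dilationDensity u x₀ (radialWeight a x₀) x ∂μ with hgain
  have hgain_pos : 0 < gain := neg_pos.2 <| setIntegral_radialWeight_neg hu ha hp <| by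
    linarith [norm_nonneg x₀]
  refine ⟨gain / C, by positivity, R₀, by linarith [norm_nonneg x₀, norm_nonneg p],
    fun R hR => ?_⟩
  have hR_pos : 0 < R := by linarith [norm_nonneg x₀, norm_nonneg p]
  have hgain_le : gain ≤ C * R ^ (-a) *
      ∫ x in ball 0 (2 * R) \ ball 0 R, ‖gradient u x‖ ^ 2 ∂μ :=
    calc gain ≤ -∫ x in ball 0 R, dilationDensity u x₀ (radialWeight a x₀) x ∂μ := by
          simp only [hgain, ← integral_neg]
          exact setIntegral_mono_set (integrableOn_ball_of_continuous
            (continuous_dilationDensity hu x₀ (contDiff_radialWeight x₀ a)).neg 0 R)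
            (.of_forall fun x => neg_nonneg.2 (dilationDensity_radialWeight_nonpos u ha x₀ x))
            (ball_subset_ball hR).eventuallyLE
      _ ≤ _ := hs.neg_setIntegral_radialWeight_le hu a hR_pos x₀
      _ ≤ _ := hannulus R hR_pos x₀ (by linarith [norm_nonneg p])
  calc gain / C * R ^ a = gain * (C * R ^ (-a))⁻¹ := by
        rw [rpow_neg hR_pos.le]
        field_simp
    _ ≤ _ := (mul_inv_le_iff₀' (by positivity)).2 hgain_le

end DilationStable

section Annulus

variable {E : Type*} [NormedAddCommGroup E] [NormedSpace ℝ E] [FiniteDimensional ℝ E]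
  [MeasurableSpace E] [BorelSpace E] (μ : Measure E) [μ.IsAddHaarMeasure] {R : ℝ}

lemma measureReal_annulus (x : E) (hR : 0 < R) :
    μ.real (ball x (2 * R) \ ball x R) =
      (2 ^ Module.finrank ℝ E - 1) * μ.real (ball 0 1) * R ^ Module.finrank ℝ E := by
  have measureReal_ball {r : ℝ} (hr : 0 < r) :
      μ.real (ball x r) = r ^ Module.finrank ℝ E * μ.real (ball 0 1) := by
    rw [measureReal_def, μ.addHaar_ball_of_pos x hr, ENNReal.toReal_mul,
      ENNReal.toReal_ofReal (by positivity), measureReal_def]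
  rw [measureReal_sdiff (ball_subset_ball (by linarith)) measurableSet_ball,
    measureReal_ball hR, measureReal_ball (by positivity)]
  ring

lemma exists_le_setAverage_annulus_of_le_setIntegral [Nontrivial E] {g : E → ℝ} (x : E)
    {a c R₀ : ℝ} (hc : 0 < c) (hR₀ : 0 < R₀)
    (hg : ∀ R ≥ R₀, c * R ^ a ≤ ∫ y in ball x (2 * R) \ ball x R, g y ∂μ) :
    ∃ c' > 0, ∀ R ≥ R₀, c' * R ^ (a - Module.finrank ℝ E) ≤
      ⨍ y in ball x (2 * R) \ ball x R, g y ∂μ := by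
  set V := (2 ^ Module.finrank ℝ E - 1) * μ.real (ball (0 : E) 1) with hV
  have hV_pos : 0 < V :=
    mul_pos (sub_pos.2 (one_lt_pow₀ one_lt_two Module.finrank_pos.ne'))
      (ENNReal.toReal_pos (measure_ball_pos μ 0 one_pos).ne' measure_ball_lt_top.ne)
  refine ⟨c / V, by positivity, fun R hR => ?_⟩
  have hR_pos : 0 < R := hR₀.trans_le hR
  rw [setAverage_eq, smul_eq_mul, measureReal_annulus μ x hR_pos, ← hV, inv_mul_eq_div,
    le_div_iff₀ (by positivity)]
  calc c / V * R ^ (a - Module.finrank ℝ E) * (V * R ^ Module.finrank ℝ E) = c * R ^ a := by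
        rw [rpow_sub hR_pos, rpow_natCast]
        field_simp
    _ ≤ _ := hg R hR

end Annulus

section StableSolution

variable {n : ℕ} {f : ℝ → ℝ} {u : Euc n → ℝ}

lemma IsWeakSolution.isWeakNegDivergence (hw : IsWeakSolution Set.univ f u) :
    IsWeakNegDivergence volume (fun x => areaGradient (gradient u x)) (fun x => f (u x)) := by
  intro ψ hψ hψc
  have hweak := hw.2.2.2 ψ ⟨hψ, hψc, Set.subset_univ _⟩
  rw [setIntegral_univ, setIntegral_univ] at hweak
  rw [← hweak]
  refine integral_congr_ae (.of_forall fun x => ?_)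
  simp only
  rw [areaGradient, map_smul, ← inner_gradient_left, real_inner_comm, smul_eq_mul, areaElement,
    inv_mul_eq_div]

lemma IsStableSolution.integral_deriv_mul_sq_le (hs : IsStableSolution Set.univ f u)
    {ξ : Euc n → ℝ} (hξ : ContDiff ℝ (⊤ : ℕ∞) ξ) (hξc : HasCompactSupport ξ) :
    ∫ x, deriv f (u x) * ξ x ^ 2 ≤
      ∫ x, ⟪fderiv ℝ areaGradient (gradient u x) (gradient ξ x), gradient ξ x⟫ := by
  have hstable := hs.2.2 ξ ⟨hξ, hξc, Set.subset_univ _⟩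
  rw [setIntegral_univ, setIntegral_univ] at hstable
  refine hstable.trans_eq (integral_congr_ae (.of_forall fun x => ?_))
  have hpow : (1 + ‖gradient u x‖ ^ 2) ^ ((3 : ℝ) / 2) = areaElement (gradient u x) ^ 3 := by
    rw [← sq_areaElement, ← rpow_natCast, ← rpow_mul (areaElement_pos _).le, ← rpow_natCast]
    norm_num
  simp only [inner_fderiv_areaGradient_self, hpow, inv_pow]
  rw [← areaElement, inv_mul_eq_div, inv_mul_eq_div]

lemma IsStableSolution.isDilationStable (hf : ContDiff ℝ 1 f) (hu : ContDiff ℝ 2 u)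
    (hs : IsStableSolution Set.univ f u) : IsDilationStable volume u := fun x₀ _ hη hηc =>
  integral_dilationForm_nonneg volume hf contDiff_areaGradient isSymmetric_fderiv_areaGradient hu
    hs.1.isWeakNegDivergence (fun _ hξ hξc => hs.integral_deriv_mul_sq_le hξ hξc) x₀ hη hηc

theorem IsStableSolution.exists_le_setAverage_annulus {a : ℝ} (hs : IsStableSolution Set.univ f u)
    (hf : ContDiff ℝ 1 f) (hu : ContDiff ℝ 2 u) (ha : IsAdmissibleExponent n a)
    (hnc : ¬ ∃ c, ∀ x, u x = c) :
    ∃ c > 0, ∃ R₀ > 2, ∀ R ≥ R₀, c * R ^ (a - n) ≤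
      ⨍ x in ball 0 (2 * R) \ ball 0 R, ‖gradient u x‖ ^ 2 := by
  have hn : Module.finrank ℝ (Euc n) = n := finrank_euclideanSpace_fin
  have : Nontrivial (Euc n) := Module.nontrivial_of_finrank_pos (R := ℝ) <| by
    rw [hn]
    exact_mod_cast (by linarith [ha.nonneg, ha.le_sub_two] : (0 : ℝ) < n)
  obtain ⟨c, hc, R₀, hR₀, hgrowth⟩ := (hs.isDilationStable hf hu).exists_le_setIntegral_annulus
    (hu.of_le one_le_two) (hn.symm ▸ ha) hnc
  obtain ⟨c', hc', haverage⟩ := exists_le_setAverage_annulus_of_le_setIntegral volume 0 hc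
    (two_pos.trans hR₀) hgrowth
  rw [hn] at haverage
  exact ⟨c', hc', R₀, hR₀, haverage⟩

lemma isAdmissibleExponent_sub_two {N : ℝ} (hN : 2 ≤ N) (hN₁₀ : N ≤ 10) :
    IsAdmissibleExponent N (N - 2) where
  nonneg := by linarith
  le_sub_two := le_rfl
  sq_le_sub_one := by nlinarith

lemma isAdmissibleExponent_two_mul_sqrt_add_two {N : ℝ} (hN : 10 ≤ N) :
    IsAdmissibleExponent N (2 * √(N - 1) + 2) := by
  have hsq : √(N - 1) ^ 2 = N - 1 := sq_sqrt (by linarith)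
  have hsqrt : 3 ≤ √(N - 1) := le_sqrt_of_sq_le (by linarith)
  exact ⟨by linarith, by nlinarith, le_of_eq (by linear_combination hsq)⟩

end StableSolution

theorem stmt_4_general (n : ℕ) (hn : 2 ≤ n) (f : ℝ → ℝ) (u : Euc n → ℝ)
    (hf : ContDiff ℝ 1 f)
    (hreg : ContDiff ℝ 2 u)
    (hstable : IsStableSolution (Set.univ : Set (Euc n)) f u)
    (hnc : ¬ ∃ c₀ : ℝ, ∀ x : Euc n, u x = c₀) :
    ∃ c > (0:ℝ), ∃ R₀ > (2:ℝ), ∀ R : ℝ, R₀ ≤ R →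
      c * R ^ (2 * (if n ≤ 10 then (-1 : ℝ)
          else -(n:ℝ)/2 + Real.sqrt ((n:ℝ) - 1) + 1)) ≤
        ⨍ x in ball (0 : Euc n) (2*R) \ ball (0 : Euc n) R, ‖gradient u x‖ ^ 2 := by
  split_ifs with h
  · have hexponent : (2 * -1 : ℝ) = (n - 2) - n := by ring
    rw [hexponent]
    exact hstable.exists_le_setAverage_annulus hf hreg
      (isAdmissibleExponent_sub_two (by exact_mod_cast hn) (by exact_mod_cast h)) hnc
  · have hexponent : 2 * (-(n : ℝ) / 2 + √(n - 1) + 1) = (2 * √(n - 1) + 2) - n := by ring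
    rw [hexponent]
    exact hstable.exists_le_setAverage_annulus hf hreg
      (isAdmissibleExponent_two_mul_sqrt_add_two (by exact_mod_cast (not_le.1 h).le)) hnc

/-- **Theorem (Liouville-type lower bound for nonconstant stable solutions).**
Let `n ≥ 2`, `f ∈ C¹(ℝ)` and let `u` be a `W^{3,1}_loc(ℝⁿ)` stable solution of
`div(∇u/√(1+|∇u|²)) = -f(u)` in `ℝⁿ`.  Put `q_n = -1` if `2 ≤ n ≤ 10` and
`q_n = -n/2 + √(n-1) + 1` if `n ≥ 11`.  If `u` is nonconstant, then there are `c > 0`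
and `R₀ > 2` with `⨍_{B_{2R}∖B_R} |∇u|² ≥ c R^{2 q_n}` for all `R ≥ R₀`. -/
theorem stmt_4 (n : ℕ) (hn : 2 ≤ n) (f : ℝ → ℝ) (u : Euc n → ℝ)
    (hf : ContDiff ℝ 1 f)
    (hreg : ContDiff ℝ 3 u)
    (hstable : IsStableSolution (Set.univ : Set (Euc n)) f u)
    (hnc : ¬ ∃ c₀ : ℝ, ∀ x : Euc n, u x = c₀) :
    ∃ c > (0:ℝ), ∃ R₀ > (2:ℝ), ∀ R : ℝ, R₀ ≤ R →
      c * R ^ (2 * (if n ≤ 10 then (-1 : ℝ)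
          else -(n:ℝ)/2 + Real.sqrt ((n:ℝ) - 1) + 1)) ≤
        ⨍ x in ball (0 : Euc n) (2*R) \ ball (0 : Euc n) R, ‖gradient u x‖ ^ 2 :=
  stmt_4_general n hn f u hf (hreg.of_le (by norm_num)) hstable hnc
end
end
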